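/- Let 0 < λ ≤ 1 and 0 < α ≤ 1. Then, as T → ∞, the sum of (β − 1/2) over all nontrivial zeros ρ = β + iγ of the Lerch zeta-function L(λ,α,·) with 0 < γ ≤ T (counted with multiplicity) equals (T/(4π))·log(α/λ) + O(log T). -/

import Mathlib

/-- The Dirichlet series of the Lerch zeta-function, convergent for `1 < re s`. -/
noncomputable def lerchSeries (lam alp : ℝ) (s : ℂ) : ℂ :=
  ∑' m : ℕ, Complex.exp (2 * Real.pi * Complex.I * lam * m) / ((m : ℂ) + alp) ^ s

/-- `F` is the analytic continuation of the Lerch zeta-function with parameters `lam`, `alp`: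
it is complex differentiable away from `1` and agrees with the Dirichlet series on `1 < re s`. -/
def IsLerch (lam alp : ℝ) (F : ℂ → ℂ) : Prop :=
  (∀ s : ℂ, s ≠ 1 → DifferentiableAt ℂ F s) ∧
  ∀ s : ℂ, 1 < s.re → F s = lerchSeries lam alp s

open scoped Classical

/-- The multiplicity (order of vanishing) of `F` at `z` (junk value `0` if `F` is not
analytic at `z` or vanishes to infinite order). -/
noncomputable def zeroOrder (F : ℂ → ℂ) (z : ℂ) : ℕ :=
  if h : AnalyticAt ℂ F z then (analyticOrderAt F z).toNat else 0

/-!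
Average Jensen's formula for `F = L(λ, α, ·)` over the circles of a fixed radius `r`, with a weight
`φ` on their centres:
`∑ m(ρ) ∫ φ(z) log⁺ (r / |z - ρ|) dz = ∫ log |F(w)| (circle average of φ around w - φ(w)) dw`.
Take `φ(z) = Re z - 1/2` on the box `|Re z - 1/2| ≤ B`, `T₀ < Im z ≤ T`, and `φ = 0` outside it. All
zeros with `T₀ < Im ρ ≤ T` lie well inside the vertical sides, and `φ` is harmonic in the box, so
up to `O(log T)` from the horizontal sides the left side is `π r² / 2 · ∑ m(ρ) (β - 1/2)`, while on
the right only two vertical strips around the sides of the box remain. On the right strip the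
leading term `α ^ (-s)` of the Dirichlet series contributes a multiple of `T log α`; on the left
strip the functional equation contributes the same multiple of `-T log λ` together with an
archimedean term that does not depend on `λ` and `α`. The latter vanishes up to `O(log T)`, because
for `λ = α = 1`, that is for Riemann's `ζ`, the symmetry `s ↦ 1 - conj s` of the zeros makes the
whole integral zero.
-/

namespace LerchZeta

open MeasureTheory Metric Set Filter Topology Asymptotics Real
open scoped ENNReal FourierTransform

/-! ### Jensen's formula averaged over a weight -/

section Jensen

variable {f : ℂ → ℂ} {c : ℂ} {R M : ℝ}

lemma log_norm_le_circleAverage (hR : 0 < R) (hf : AnalyticOnNhd ℂ f (closedBall c R))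
    (hc : f c ≠ 0) : log ‖f c‖ ≤ circleAverage (fun z ↦ log ‖f z‖) c R := by
  rw [← abs_of_pos hR] at hf
  rw [hf.circleAverage_log_norm hR.ne' hc, le_add_iff_nonneg_left]
  refine finsum_nonneg fun u ↦ ?_
  by_cases hu : u ∈ closedBall c |R|
  · have hdiv : 0 ≤ MeromorphicOn.divisor f (closedBall c |R|) u :=
      MeromorphicOn.AnalyticOnNhd.divisor_nonneg hf u
    rw [abs_of_pos hR, mem_closedBall, dist_comm, dist_eq_norm] at hu
    rcases eq_or_ne c u with rfl | hcu
    · simp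
    · have hpos : 0 < ‖c - u‖ := norm_pos_iff.mpr (sub_ne_zero.mpr hcu)
      have hone : 1 ≤ R * ‖c - u‖⁻¹ := by rwa [← div_eq_mul_inv, one_le_div hpos]
      exact mul_nonneg (mod_cast hdiv) (log_nonneg hone)
  · simp [hu]

lemma log_norm_le_log_of_le {z : ℂ} (hM : 1 ≤ M) (hz : ‖z‖ ≤ M) : log ‖z‖ ≤ log M := by
  rcases eq_or_ne z 0 with rfl | h
  · simpa using log_nonneg hM
  · exact log_le_log (norm_pos_iff.mpr h) hz

lemma circleIntegrable_log_norm (hR : 0 < R) (hf : AnalyticOnNhd ℂ f (closedBall c R)) :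
    CircleIntegrable (fun z ↦ log ‖f z‖) c R := by
  refine MeromorphicOn.circleIntegrable_log_norm ?_
  rw [abs_of_pos hR]
  exact (hf.mono sphere_subset_closedBall).meromorphicOn

lemma circleAverage_abs_log_norm_le (hR : 0 < R) (hf : AnalyticOnNhd ℂ f (closedBall c R))
    (hc : f c ≠ 0) (hM : 1 ≤ M) (hb : ∀ z ∈ closedBall c R, ‖f z‖ ≤ M) :
    circleAverage (fun z ↦ |log ‖f z‖|) c R ≤ 2 * log M - log ‖f c‖ := by
  have hint := circleIntegrable_log_norm hR hf
  calc circleAverage (fun z ↦ |log ‖f z‖|) c R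
      ≤ circleAverage (fun z ↦ 2 * log M - log ‖f z‖) c R := by
        refine circleAverage_mono hint.abs ((circleIntegrable_const _ c R).sub hint) fun z hz ↦ ?_
        rw [abs_of_pos hR] at hz
        have hle := log_norm_le_log_of_le hM (hb z (sphere_subset_closedBall hz))
        have := log_nonneg hM
        exact abs_le.mpr ⟨by linarith, by linarith⟩
    _ = 2 * log M - circleAverage (fun z ↦ log ‖f z‖) c R := by
        rw [circleAverage_fun_sub (circleIntegrable_const _ c R) hint, circleAverage_const]
    _ ≤ 2 * log M - log ‖f c‖ := by linarith [log_norm_le_circleAverage hR hf hc]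

end Jensen

section PolarCoordinates

lemma setLIntegral_ball_le_of_circle_le {g : ℂ → ℝ≥0∞} (hg : Measurable g) {c : ℂ} {R : ℝ}
    {B : ℝ≥0∞} (h : ∀ ρ ∈ Ioo 0 R, ∫⁻ θ in Ioo (-π) π, g (circleMap c ρ θ) ≤ B) :
    ∫⁻ z in ball c R, g z ≤ ENNReal.ofReal R * (ENNReal.ofReal R * B) := by
  have hpolar (p : ℝ × ℝ) : Complex.polarCoord.symm p + c = circleMap c p.1 p.2 := by
    rw [Complex.polarCoord_symm_apply, circleMap, Complex.exp_mul_I]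
    push_cast
    ring
  have hcircle : ∀ ρ ∈ Ioi (0 : ℝ), ∫⁻ θ in Ioo (-π) π,
      ENNReal.ofReal ρ * (ball c R).indicator g (circleMap c ρ θ) ≤
        (Iio R).indicator (fun _ ↦ ENNReal.ofReal R * B) ρ := by
    intro ρ hρ
    have hmem (θ : ℝ) : circleMap c ρ θ ∈ ball c R ↔ ρ < R := by
      simp [mem_ball, dist_eq_norm, circleMap, abs_of_pos (mem_Ioi.mp hρ)]
    by_cases hρR : ρ < R
    · simp only [indicator, hmem, hρR, mem_Iio, if_true]
      rw [lintegral_const_mul' _ _ ENNReal.ofReal_ne_top]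
      gcongr
      exact h ρ ⟨hρ, hρR⟩
    · simp [indicator, hmem, hρR]
  calc ∫⁻ z in ball c R, g z
      = ∫⁻ z, (ball c R).indicator g (z + c) := by
        rw [← lintegral_indicator measurableSet_ball, lintegral_add_right_eq_self]
    _ = ∫⁻ ρ in Ioi 0, ∫⁻ θ in Ioo (-π) π,
          ENNReal.ofReal ρ * (ball c R).indicator g (circleMap c ρ θ) := by
        rw [← Complex.lintegral_comp_polarCoord_symm]
        simp only [hpolar, smul_eq_mul]
        rw [show polarCoord.target = Ioi (0 : ℝ) ×ˢ Ioo (-π) π from rfl,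
          Measure.volume_eq_prod, ← Measure.prod_restrict, lintegral_prod]
        have hmeas := hg.indicator (measurableSet_ball (x := c) (ε := R))
        exact (Measurable.mul (by fun_prop)
          (hmeas.comp (by unfold circleMap; fun_prop))).aemeasurable
    _ ≤ ∫⁻ ρ in Ioi 0, (Iio R).indicator (fun _ ↦ ENNReal.ofReal R * B) ρ :=
        setLIntegral_mono' measurableSet_Ioi hcircle
    _ = ENNReal.ofReal R * (ENNReal.ofReal R * B) := by
        rw [lintegral_indicator measurableSet_Iio, setLIntegral_const,
          Measure.restrict_apply measurableSet_Iio, Iio_inter_Ioi, volume_Ioo, sub_zero, mul_comm]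

lemma setLIntegral_Ioo_circleMap_eq {g : ℂ → ℝ} {c : ℂ} {R : ℝ} (hg : CircleIntegrable g c R)
    (hnonneg : ∀ z, 0 ≤ g z) :
    ∫⁻ θ in Ioo (-π) π, ENNReal.ofReal (g (circleMap c R θ)) =
      ENNReal.ofReal (2 * π * circleAverage g c R) := by
  have hper : Function.Periodic (fun θ ↦ g (circleMap c R θ)) (2 * π) := fun θ ↦ by
    simp [periodic_circleMap c R θ]
  have hpi : -π ≤ π := by linarith [pi_pos]
  have hint : IntervalIntegrable (fun θ ↦ g (circleMap c R θ)) volume (-π) π :=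
    hper.intervalIntegrable (t := 0) (by positivity) (by simpa [CircleIntegrable] using hg) _ _
  have hshift := hper.intervalIntegral_add_eq 0 (-π)
  rw [show -π + 2 * π = π by ring, zero_add] at hshift
  rw [intervalIntegrable_iff_integrableOn_Ioo_of_le hpi] at hint
  rw [← ofReal_integral_eq_lintegral_ofReal hint (Eventually.of_forall fun _ ↦ hnonneg _),
    ← integral_Ioc_eq_integral_Ioo, ← intervalIntegral.integral_of_le hpi, ← hshift,
    circleAverage_def, smul_eq_mul, mul_inv_cancel_left₀ (by positivity)]

end PolarCoordinates

section LogNormOnBall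

variable {f : ℂ → ℂ} {c : ℂ} {R M : ℝ}

lemma setLIntegral_ball_abs_log_norm_le (hR : 0 < R) (hf : AnalyticOnNhd ℂ f (closedBall c R))
    (hc : f c ≠ 0) (hM : 1 ≤ M) (hb : ∀ z ∈ closedBall c R, ‖f z‖ ≤ M) :
    ∫⁻ z in ball c R, ENNReal.ofReal |log ‖f z‖| ≤
      ENNReal.ofReal (R ^ 2 * (2 * π * (2 * log M - log ‖f c‖))) := by
  set g := (ball c R).indicator f
  have hgf : ∀ z ∈ ball c R, g z = f z := fun z hz ↦ indicator_of_mem hz f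
  have hgm : Measurable g := (hf.continuousOn.mono ball_subset_closedBall).measurable_piecewise
    continuousOn_const measurableSet_ball
  have hcircle : ∀ ρ ∈ Ioo 0 R, ∫⁻ θ in Ioo (-π) π,
      ENNReal.ofReal |log ‖g (circleMap c ρ θ)‖| ≤
        ENNReal.ofReal (2 * π * (2 * log M - log ‖f c‖)) := by
    intro ρ hρ
    have hsub : closedBall c ρ ⊆ closedBall c R := closedBall_subset_closedBall hρ.2.le
    have hmem (θ : ℝ) : circleMap c ρ θ ∈ ball c R := by
      simpa [mem_ball, dist_eq_norm, circleMap, abs_of_pos hρ.1] using hρ.2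
    simp only [hgf _ (hmem _)]
    rw [setLIntegral_Ioo_circleMap_eq (g := fun z ↦ |log ‖f z‖|)
      (circleIntegrable_log_norm hρ.1 (hf.mono hsub)).abs (fun _ ↦ abs_nonneg _)]
    gcongr
    exact circleAverage_abs_log_norm_le hρ.1 (hf.mono hsub) hc hM fun z hz ↦ hb z (hsub hz)
  calc ∫⁻ z in ball c R, ENNReal.ofReal |log ‖f z‖|
      = ∫⁻ z in ball c R, ENNReal.ofReal |log ‖g z‖| :=
        setLIntegral_congr_fun measurableSet_ball fun z hz ↦ by simp only [hgf z hz]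
    _ ≤ _ := setLIntegral_ball_le_of_circle_le (by fun_prop) hcircle
    _ = _ := by rw [← ENNReal.ofReal_mul hR.le, ← ENNReal.ofReal_mul hR.le, ← mul_assoc, sq]

lemma integrableOn_ball_log_norm (hR : 0 < R) (hf : AnalyticOnNhd ℂ f (closedBall c R))
    (hc : f c ≠ 0) (hM : 1 ≤ M) (hb : ∀ z ∈ closedBall c R, ‖f z‖ ≤ M) :
    IntegrableOn (fun z ↦ log ‖f z‖) (ball c R) := by
  have hmeas : AEMeasurable f (volume.restrict (ball c R)) :=
    (hf.continuousOn.mono ball_subset_closedBall).aemeasurable measurableSet_ball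
  refine ⟨(measurable_log.comp_aemeasurable hmeas.norm).aestronglyMeasurable, ?_⟩
  rw [hasFiniteIntegral_iff_norm]
  exact (setLIntegral_ball_abs_log_norm_le hR hf hc hM hb).trans_lt ENNReal.ofReal_lt_top

lemma setIntegral_ball_abs_log_norm_le (hR : 0 < R) (hf : AnalyticOnNhd ℂ f (closedBall c R))
    (hc : f c ≠ 0) (hM : 1 ≤ M) (hb : ∀ z ∈ closedBall c R, ‖f z‖ ≤ M) :
    ∫ z in ball c R, |log ‖f z‖| ≤ R ^ 2 * (2 * π * (2 * log M - log ‖f c‖)) := by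
  have hcM := log_norm_le_log_of_le hM (hb c (mem_closedBall_self hR.le))
  have hlogM := log_nonneg hM
  have hbound : 0 ≤ 2 * log M - log ‖f c‖ := by linarith
  rw [integral_eq_lintegral_of_nonneg_ae (Eventually.of_forall fun _ ↦ abs_nonneg _)
    (integrableOn_ball_log_norm hR hf hc hM hb).abs.aestronglyMeasurable]
  exact ENNReal.toReal_le_of_le_ofReal (by positivity)
    (setLIntegral_ball_abs_log_norm_le hR hf hc hM hb)

end LogNormOnBall

section JensenKernel

variable {r : ℝ}

/-- The kernel `log⁺ (r / ‖u‖)` with which a zero at distance `u` from the centre contributes to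
Jensen's formula on a circle of radius `r`. -/
noncomputable def jensenKernel (r : ℝ) (u : ℂ) : ℝ := log⁺ (r * ‖u‖⁻¹)

lemma jensenKernel_nonneg (r : ℝ) (u : ℂ) : 0 ≤ jensenKernel r u := posLog_nonneg

lemma posLog_mul_inv_eq_zero {y : ℝ} (hr : 0 < r) (hy : r ≤ y) : log⁺ (r * y⁻¹) = 0 := by
  have hy0 : 0 < y := hr.trans_le hy
  rw [posLog_eq_zero_iff, abs_of_pos (by positivity), ← div_eq_mul_inv]
  exact (div_le_one hy0).mpr hy

lemma posLog_mul_inv_eq_log {y : ℝ} (hy0 : 0 < y) (hy : y ≤ r) :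
    log⁺ (r * y⁻¹) = log (r * y⁻¹) := by
  have hr : 0 < r := hy0.trans_le hy
  refine posLog_eq_log ?_
  rwa [abs_of_pos (by positivity), ← div_eq_mul_inv, one_le_div hy0]

lemma mul_posLog_mul_inv {y : ℝ} (hy0 : 0 < y) (hy : y ≤ r) :
    y * log⁺ (r * y⁻¹) = y * log r - y * log y := by
  rw [posLog_mul_inv_eq_log hy0 hy, log_mul (hy0.trans_le hy).ne' (inv_ne_zero hy0.ne'), log_inv]
  ring

lemma jensenKernel_eq_zero (hr : 0 < r) {u : ℂ} (h : r ≤ ‖u‖) : jensenKernel r u = 0 :=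
  posLog_mul_inv_eq_zero hr h

lemma integrableOn_mul_posLog (hr : 0 < r) :
    IntegrableOn (fun y : ℝ ↦ y * log⁺ (r * y⁻¹)) (Ioi 0) := by
  have hcont : Continuous fun y : ℝ ↦ y * log r - y * log y :=
    (continuous_id.mul continuous_const).sub continuous_mul_log
  rw [← Ioc_union_Ioi_eq_Ioi hr.le]
  refine IntegrableOn.union ?_ ?_
  · rw [integrableOn_congr_fun (fun y hy ↦ mul_posLog_mul_inv hy.1 hy.2) measurableSet_Ioc]
    exact hcont.integrableOn_Icc.mono_set Ioc_subset_Icc_self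
  · refine integrableOn_zero.congr_fun (fun y hy ↦ ?_) measurableSet_Ioi
    rw [posLog_mul_inv_eq_zero hr (mem_Ioi.mp hy).le, mul_zero]

lemma hasDerivAt_primitive_mul_log_sub (r : ℝ) {y : ℝ} (hy : y ≠ 0) :
    HasDerivAt (fun y ↦ y ^ 2 / 2 * log r + y ^ 2 / 4 - y * (y * log y) / 2)
      (y * log r - y * log y) y := by
  have hpoly := ((hasDerivAt_pow 2 y).div_const 2).mul_const (log r) |>.add
    ((hasDerivAt_pow 2 y).div_const 4)
  have hlog := ((hasDerivAt_id y).mul (hasDerivAt_mul_log hy)).div_const 2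
  exact (hpoly.sub hlog).congr_deriv (by simp; ring)

lemma integral_mul_posLog (hr : 0 < r) :
    ∫ y in Ioi (0 : ℝ), y * log⁺ (r * y⁻¹) = r ^ 2 / 4 := by
  have := continuous_mul_log
  calc ∫ y in Ioi (0 : ℝ), y * log⁺ (r * y⁻¹)
      = ∫ y in Ioc 0 r, y * log⁺ (r * y⁻¹) := by
        refine setIntegral_eq_of_subset_of_forall_sdiff_eq_zero measurableSet_Ioi
          Ioc_subset_Ioi_self fun y hy ↦ ?_
        have hry : r < y := not_le.mp fun h ↦ hy.2 ⟨hy.1, h⟩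
        rw [posLog_mul_inv_eq_zero hr hry.le, mul_zero]
    _ = ∫ y in Ioc 0 r, (y * log r - y * log y) := by
        exact setIntegral_congr_fun measurableSet_Ioc fun y hy ↦ mul_posLog_mul_inv hy.1 hy.2
    _ = r ^ 2 / 4 := by
        rw [← intervalIntegral.integral_of_le hr.le,
          intervalIntegral.integral_eq_sub_of_hasDerivAt_of_le hr.le
            (by fun_prop) (fun y hy ↦ hasDerivAt_primitive_mul_log_sub r hy.1.ne')
            (Continuous.intervalIntegrable (by fun_prop) _ _)]
        simp
        ring

lemma integrable_jensenKernel (hr : 0 < r) : Integrable (jensenKernel r) := by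
  unfold jensenKernel
  rw [integrable_fun_norm_addHaar (volume : Measure ℂ) (f := fun y ↦ log⁺ (r * y⁻¹))]
  simpa [Complex.finrank_real_complex] using integrableOn_mul_posLog hr

lemma integral_jensenKernel (hr : 0 < r) : ∫ u, jensenKernel r u = π * r ^ 2 / 2 := by
  unfold jensenKernel
  rw [integral_fun_norm_addHaar (volume : Measure ℂ) (fun y ↦ log⁺ (r * y⁻¹))]
  simp [Complex.finrank_real_complex, Measure.real, Complex.volume_ball, integral_mul_posLog hr]
  ring

end JensenKernel

section CircleDefect

variable {g φ : ℂ → ℝ} {C : ℝ}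

/-- The mean of `φ` over the circle of radius `r` about `w`, minus `φ w`. It vanishes wherever `φ`
is harmonic on the closed disc. -/
noncomputable def circleDefect (φ : ℂ → ℝ) (r : ℝ) (w : ℂ) : ℝ := circleAverage φ w r - φ w

lemma circleMap_eq_add (w : ℂ) (r θ : ℝ) : circleMap w r θ = w + circleMap 0 r θ := by
  simp [circleMap]

lemma circleMap_neg_eq_sub (w : ℂ) (r θ : ℝ) : circleMap w (-r) θ = w - circleMap 0 r θ := by
  simp [circleMap, sub_eq_add_neg]

lemma circleAverage_eq_setIntegral (g : ℂ → ℝ) (w : ℂ) (r : ℝ) :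
    circleAverage g w r = (2 * π)⁻¹ * ∫ θ in Ioc 0 (2 * π), g (circleMap w r θ) := by
  rw [circleAverage_def, smul_eq_mul, intervalIntegral.integral_of_le (by positivity)]

lemma integrable_comp_circleMap (hg : Integrable g) (r : ℝ) (ν : Measure ℝ) [IsFiniteMeasure ν] :
    Integrable (fun p : ℝ × ℂ ↦ g (circleMap p.2 r p.1)) (ν.prod volume) := by
  have hshear : MeasurePreserving (fun p : ℝ × ℂ ↦ (p.1, p.2 + circleMap 0 r p.1))
      (ν.prod volume) (ν.prod volume) :=
    MeasurePreserving.skew_product (MeasurePreserving.id _) (g := fun θ z ↦ z + circleMap 0 r θ)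
      (by unfold circleMap; fun_prop)
      (Eventually.of_forall fun _ ↦ (measurePreserving_add_right volume _).map_eq)
  refine (hshear.integrable_comp_of_integrable (hg.comp_snd ν)).congr ?_
  exact Eventually.of_forall fun p ↦ by simp [circleMap_eq_add p.2]

lemma integrable_bdd_mul_comp_circleMap (hg : Integrable g) (hφ : Measurable φ)
    (hC : ∀ z, |φ z| ≤ C) (r : ℝ) (ν : Measure ℝ) [IsFiniteMeasure ν] :
    Integrable (fun p : ℝ × ℂ ↦ φ p.2 * g (circleMap p.2 r p.1)) (ν.prod volume) :=
  (integrable_comp_circleMap hg r ν).bdd_mul (c := C)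
    (hφ.comp measurable_snd).aestronglyMeasurable (Eventually.of_forall fun p ↦ hC p.2)

lemma integrable_bdd_mul (hg : Integrable g) (hφ : Measurable φ) (hC : ∀ z, |φ z| ≤ C) :
    Integrable (fun z ↦ φ z * g z) :=
  hg.bdd_mul (c := C) hφ.aestronglyMeasurable (Eventually.of_forall hC)

lemma integrable_bdd_mul_circleAverage (hg : Integrable g) (hφ : Measurable φ)
    (hC : ∀ z, |φ z| ≤ C) (r : ℝ) : Integrable (fun z ↦ φ z * circleAverage g z r) := by
  have hprod := (integrable_bdd_mul_comp_circleMap hg hφ hC r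
    (volume.restrict (Ioc 0 (2 * π)))).integral_prod_right
  simp only [integral_const_mul] at hprod
  simp only [circleAverage_eq_setIntegral, mul_left_comm _ (2 * π)⁻¹]
  exact hprod.const_mul _

lemma integrable_mul_bdd_comp_circleMap (hg : Integrable g) (hφ : Measurable φ)
    (hC : ∀ z, |φ z| ≤ C) (r : ℝ) (ν : Measure ℝ) [IsFiniteMeasure ν] :
    Integrable (fun p : ℝ × ℂ ↦ g p.2 * φ (circleMap p.2 r p.1)) (ν.prod volume) := by
  simp only [mul_comm (g _)]
  refine (hg.comp_snd ν).bdd_mul (c := C) ?_ (Eventually.of_forall fun p ↦ hC _)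
  exact (hφ.comp (by unfold circleMap; fun_prop)).aestronglyMeasurable

lemma integrable_mul_circleAverage_bdd (hg : Integrable g) (hφ : Measurable φ)
    (hC : ∀ z, |φ z| ≤ C) (r : ℝ) : Integrable (fun w ↦ g w * circleAverage φ w r) := by
  have hprod := (integrable_mul_bdd_comp_circleMap hg hφ hC r
    (volume.restrict (Ioc 0 (2 * π)))).integral_prod_right
  simp only [integral_const_mul] at hprod
  simp only [circleAverage_eq_setIntegral, mul_left_comm _ (2 * π)⁻¹]
  exact hprod.const_mul _

lemma integral_mul_circleAverage_comm (hg : Integrable g) (hφ : Measurable φ)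
    (hC : ∀ z, |φ z| ≤ C) (r : ℝ) :
    ∫ w, g w * circleAverage φ w r = ∫ z, φ z * circleAverage g z r := by
  simp only [← circleAverage_neg_radius (f := φ) (R := r)]
  simp only [circleAverage_eq_setIntegral, mul_left_comm _ (2 * π)⁻¹]
  rw [integral_const_mul, integral_const_mul]
  congr 1
  simp only [← integral_const_mul]
  rw [← integral_integral_swap (f := fun θ w ↦ g w * φ (circleMap w (-r) θ))
      (integrable_mul_bdd_comp_circleMap hg hφ hC (-r) _),
    ← integral_integral_swap (f := fun θ z ↦ φ z * g (circleMap z r θ))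
      (integrable_bdd_mul_comp_circleMap hg hφ hC r _)]
  congr 1 with θ
  rw [← integral_add_right_eq_self (fun w ↦ g w * φ (circleMap w (-r) θ)) (circleMap 0 r θ)]
  refine integral_congr_ae (Eventually.of_forall fun z ↦ ?_)
  simp only [circleMap_neg_eq_sub, add_sub_cancel_right, circleMap_eq_add z r, mul_comm]

lemma integrable_mul_circleDefect (hg : Integrable g) (hφ : Measurable φ)
    (hC : ∀ z, |φ z| ≤ C) (r : ℝ) : Integrable (fun w ↦ g w * circleDefect φ r w) := by
  simp only [circleDefect, mul_sub]
  refine (integrable_mul_circleAverage_bdd hg hφ hC r).sub ?_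
  simpa only [mul_comm] using integrable_bdd_mul hg hφ hC

lemma integral_mul_circleDefect_comm (hg : Integrable g) (hφ : Measurable φ)
    (hC : ∀ z, |φ z| ≤ C) (r : ℝ) :
    ∫ w, g w * circleDefect φ r w = ∫ z, φ z * circleDefect g r z := by
  have hφg := integrable_bdd_mul hg hφ hC
  simp only [circleDefect, mul_sub]
  rw [integral_sub (integrable_mul_circleAverage_bdd hg hφ hC r)
      (by simpa only [mul_comm] using hφg),
    integral_sub (integrable_bdd_mul_circleAverage hg hφ hC r) hφg,
    integral_mul_circleAverage_comm hg hφ hC r]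
  simp only [mul_comm]

end CircleDefect

section JensenIdentity

variable {f : ℂ → ℂ}

lemma zeroOrder_eq {u : ℂ} (hf : AnalyticAt ℂ f u) :
    zeroOrder f u = (analyticOrderAt f u).toNat := by
  rw [zeroOrder, dif_pos hf]

lemma zeroOrder_eq_zero {u : ℂ} (hf : AnalyticAt ℂ f u) (hfu : f u ≠ 0) : zeroOrder f u = 0 := by
  rw [zeroOrder_eq hf, hf.analyticOrderAt_eq_zero.mpr hfu]
  rfl

lemma divisor_mul_log_eq_zeroOrder_mul_jensenKernel {z : ℂ} {r : ℝ}
    (hf : AnalyticOnNhd ℂ f (closedBall z r)) (hz : f z ≠ 0) (u : ℂ) :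
    MeromorphicOn.divisor f (closedBall z r) u * log (r * ‖z - u‖⁻¹) =
      if u ∈ closedBall z r then zeroOrder f u * jensenKernel r (z - u) else 0 := by
  by_cases hu : u ∈ closedBall z r
  · rw [MeromorphicOn.AnalyticOnNhd.divisor_apply hf hu, if_pos hu]
    rcases eq_or_ne z u with rfl | hzu
    · simp [zeroOrder_eq_zero (hf z hu) hz, (hf z hu).analyticOrderAt_eq_zero.mpr hz]
    · rw [mem_closedBall, dist_comm, dist_eq_norm] at hu
      rw [jensenKernel, posLog_mul_inv_eq_log (norm_pos_iff.mpr (sub_ne_zero.mpr hzu)) hu,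
        zeroOrder_eq (hf u (by rwa [mem_closedBall, dist_comm, dist_eq_norm]))]
      cases analyticOrderAt f u <;> simp
  · simp [hu]

lemma circleAverage_log_norm_eq_add_sum {z : ℂ} {r : ℝ} (hr : 0 < r)
    (hf : AnalyticOnNhd ℂ f (closedBall z r)) (hz : f z ≠ 0) (Z : Finset ℂ)
    (hZ : ∀ u ∈ closedBall z r, f u = 0 → u ∈ Z) :
    circleAverage (fun w ↦ log ‖f w‖) z r =
      log ‖f z‖ + ∑ ρ ∈ Z, zeroOrder f ρ * jensenKernel r (z - ρ) := by
  have hjensen := AnalyticOnNhd.circleAverage_log_norm hr.ne' (by rwa [abs_of_pos hr]) hz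
  rw [abs_of_pos hr] at hjensen
  simp only [divisor_mul_log_eq_zeroOrder_mul_jensenKernel hf hz] at hjensen
  rw [hjensen, add_comm, finsum_eq_sum_of_support_subset (s := Z)]
  · congr 1
    refine Finset.sum_congr rfl fun u _ ↦ ?_
    split_ifs with hu
    · rfl
    · rw [mem_closedBall, dist_comm, dist_eq_norm, not_le] at hu
      rw [jensenKernel_eq_zero hr hu.le, mul_zero]
  · intro u hu
    simp only [Function.mem_support, ne_eq, ite_eq_right_iff, Classical.not_imp] at hu
    refine hZ u hu.1 (by_contra fun hfu ↦ hu.2 ?_)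
    rw [zeroOrder_eq_zero (hf u hu.1) hfu, Nat.cast_zero, zero_mul]

lemma circleDefect_indicator_log_norm {S : Set ℂ} {r : ℝ} (hr : 0 < r)
    (hf : AnalyticOnNhd ℂ f S) {z : ℂ} (hzS : closedBall z r ⊆ S) (hz : f z ≠ 0) (Z : Finset ℂ)
    (hZ : ∀ u ∈ S, f u = 0 → u ∈ Z) :
    circleDefect (S.indicator fun w ↦ log ‖f w‖) r z =
      ∑ ρ ∈ Z, zeroOrder f ρ * jensenKernel r (z - ρ) := by
  have hcircle : EqOn (S.indicator fun w ↦ log ‖f w‖) (fun w ↦ log ‖f w‖) (sphere z |r|) :=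
    fun w hw ↦ indicator_of_mem (hzS (sphere_subset_closedBall (by rwa [abs_of_pos hr] at hw))) _
  rw [circleDefect, circleAverage_congr_sphere hcircle,
    indicator_of_mem (hzS (mem_closedBall_self hr.le)),
    circleAverage_log_norm_eq_add_sum hr (hf.mono hzS) hz Z fun u hu ↦ hZ u (hzS hu),
    add_sub_cancel_left]

variable {S : Set ℂ} {φ : ℂ → ℝ} {C r : ℝ}

lemma integrableOn_log_norm_mul_circleDefect (hS : MeasurableSet S)
    (hInt : IntegrableOn (fun z ↦ log ‖f z‖) S) (hφ : Measurable φ) (hC : ∀ z, |φ z| ≤ C) (r : ℝ) :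
    IntegrableOn (fun w ↦ log ‖f w‖ * circleDefect φ r w) S := by
  have h := integrable_mul_circleDefect ((integrable_indicator_iff hS).mpr hInt) hφ hC r
  simp only [← indicator_mul_left] at h
  exact (integrable_indicator_iff hS).mp h

lemma integral_mul_sum_zeroOrder_mul_jensenKernel (hr : 0 < r) (hφ : Measurable φ)
    (hC : ∀ z, |φ z| ≤ C) (Z : Finset ℂ) :
    ∫ z, φ z * ∑ ρ ∈ Z, zeroOrder f ρ * jensenKernel r (z - ρ) =
      ∑ ρ ∈ Z, zeroOrder f ρ * ∫ z, φ z * jensenKernel r (z - ρ) := by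
  have hker (ρ : ℂ) : Integrable fun z ↦ φ z * jensenKernel r (z - ρ) :=
    integrable_bdd_mul ((integrable_jensenKernel hr).comp_sub_right ρ) hφ hC
  simp only [Finset.mul_sum, ← integral_const_mul, mul_left_comm (φ _)]
  exact integral_finsetSum _ fun ρ _ ↦ (hker ρ).const_mul _

theorem setIntegral_log_norm_mul_circleDefect (hS : MeasurableSet S) (hf : AnalyticOnNhd ℂ f S)
    (hInt : IntegrableOn (fun z ↦ log ‖f z‖) S) (hφ : Measurable φ) (hC : ∀ z, |φ z| ≤ C)
    (hr : 0 < r) (hsub : ∀ z, φ z ≠ 0 → closedBall z r ⊆ S) (Z : Finset ℂ)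
    (hZ : ∀ z ∈ S, f z = 0 → z ∈ Z) :
    ∫ w in S, log ‖f w‖ * circleDefect φ r w =
      ∑ ρ ∈ Z, zeroOrder f ρ * ∫ z, φ z * jensenKernel r (z - ρ) := by
  have hlog : Integrable (S.indicator fun z ↦ log ‖f z‖) := (integrable_indicator_iff hS).mpr hInt
  have hoffZ : ∀ᵐ z : ℂ, z ∉ (Z : Set ℂ) := by
    rw [ae_iff]
    simpa using Z.finite_toSet.measure_zero (μ := volume)
  calc ∫ w in S, log ‖f w‖ * circleDefect φ r w
      = ∫ w, S.indicator (fun z ↦ log ‖f z‖) w * circleDefect φ r w := by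
        rw [← integral_indicator hS]
        simp only [indicator_mul_left]
    _ = ∫ z, φ z * circleDefect (S.indicator fun w ↦ log ‖f w‖) r z :=
        integral_mul_circleDefect_comm hlog hφ hC r
    _ = ∫ z, φ z * ∑ ρ ∈ Z, zeroOrder f ρ * jensenKernel r (z - ρ) := by
        refine integral_congr_ae ?_
        filter_upwards [hoffZ] with z hz
        by_cases hφz : φ z = 0
        · simp [hφz]
        · have hsubz := hsub z hφz
          rw [circleDefect_indicator_log_norm hr hf hsubz
            (fun h ↦ hz (hZ z (hsubz (mem_closedBall_self hr.le)) h)) Z hZ]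
    _ = _ := integral_mul_sum_zeroOrder_mul_jensenKernel hr hφ hC Z

end JensenIdentity

/-! ### Twisted Euler–Maclaurin summation -/

/-- The cubic `P x = k x³ / 6 + q₂ x² / 2 + q₁ x + q₀`, playing the role of the third Bernoulli
polynomial in Euler–Maclaurin summation of `∑ eᵐ f (m + α)`. -/
structure EMCubic where
  /-- The third derivative of the cubic. -/
  k : ℂ
  /-- The second derivative of the cubic at `0`. -/
  q₂ : ℂ
  /-- The first derivative of the cubic at `0`. -/
  q₁ : ℂ
  /-- The value of the cubic at `0`. -/
  q₀ : ℂ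

namespace EMCubic

/-- The value of the cubic. -/
noncomputable def eval (P : EMCubic) (x : ℂ) : ℂ :=
  P.k * x ^ 3 / 6 + P.q₂ * x ^ 2 / 2 + P.q₁ * x + P.q₀

/-- The derivative of the cubic. -/
noncomputable def eval' (P : EMCubic) (x : ℂ) : ℂ := P.k * x ^ 2 / 2 + P.q₂ * x + P.q₁

/-- The second derivative of the cubic. -/
noncomputable def eval'' (P : EMCubic) (x : ℂ) : ℂ := P.k * x + P.q₂

/-- The sum of the norms of the coefficients. -/
noncomputable def size (P : EMCubic) : ℝ := ‖P.k‖ + ‖P.q₂‖ + ‖P.q₁‖ + ‖P.q₀‖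

/-- Quasi-periodicity of the cubic with multiplier `e`: the derivatives at `1` are `e` times those
at `0`, except that the second one picks up the jump `e` which produces the summands. -/
structure IsTwisted (P : EMCubic) (e : ℂ) : Prop where
  k_mul : P.k * e = P.k
  eval_one : P.eval 1 = e * P.eval 0
  eval'_one : P.eval' 1 = e * P.eval' 0
  eval''_one : P.eval'' 1 = e * P.eval'' 0 + e

/-- The quasi-periodic cubic (here a quadratic) for a multiplier `e ≠ 1`. -/
noncomputable def twisted (e : ℂ) : EMCubic where
  k := 0
  q₂ := e / (1 - e)
  q₁ := e / (1 - e) / (e - 1)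
  q₀ := (e / (1 - e) / 2 + e / (1 - e) / (e - 1)) / (e - 1)

/-- The quasi-periodic cubic for the multiplier `1`: a sixth of the third Bernoulli polynomial. -/
noncomputable def bernoulli : EMCubic where
  k := 1
  q₂ := -1 / 2
  q₁ := 1 / 12
  q₀ := 0

lemma isTwisted_twisted {e : ℂ} (he : e ≠ 1) : (twisted e).IsTwisted e := by
  have h1 : 1 - e ≠ 0 := sub_ne_zero.mpr he.symm
  have h2 : e - 1 ≠ 0 := sub_ne_zero.mpr he
  constructor <;> simp only [eval, eval', eval'', twisted] <;> field_simp <;> ring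

lemma isTwisted_bernoulli : bernoulli.IsTwisted 1 := by
  constructor <;> norm_num [eval, eval', eval'', bernoulli]

lemma norm_eval_le (P : EMCubic) {x : ℝ} (hx : |x| ≤ 1) : ‖P.eval x‖ ≤ P.size := by
  have hpow (n : ℕ) : ‖(x : ℂ) ^ n‖ ≤ 1 := by
    simpa only [norm_pow, Complex.norm_real] using pow_le_one₀ (norm_nonneg x) hx
  have hcoef (a : ℂ) (n : ℕ) : ‖a * (x : ℂ) ^ n‖ ≤ ‖a‖ := by
    rw [norm_mul]
    exact mul_le_of_le_one_right (norm_nonneg a) (hpow n)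
  unfold eval size
  refine norm_add₄_le.trans (add_le_add_left (add_le_add (add_le_add ?_ ?_) ?_) _)
  · exact (norm_div _ _).trans_le ((div_le_self (norm_nonneg _) (by norm_num)).trans (hcoef _ _))
  · exact (norm_div _ _).trans_le ((div_le_self (norm_nonneg _) (by norm_num)).trans (hcoef _ _))
  · simpa using hcoef P.q₁ 1

lemma IsTwisted.k_mul_pow {P : EMCubic} {e : ℂ} (h : P.IsTwisted e) (n : ℕ) :
    P.k * e ^ n = P.k := by
  induction n with
  | zero => simp
  | succ n ih => rw [pow_succ, ← mul_assoc, ih, h.k_mul]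

lemma size_nonneg (P : EMCubic) : 0 ≤ P.size := by
  unfold size
  positivity

lemma norm_k_le_size (P : EMCubic) : ‖P.k‖ ≤ P.size := by
  unfold size
  linarith [norm_nonneg P.q₂, norm_nonneg P.q₁, norm_nonneg P.q₀]

lemma norm_q₂_le_size (P : EMCubic) : ‖P.q₂‖ ≤ P.size := by
  unfold size
  linarith [norm_nonneg P.k, norm_nonneg P.q₁, norm_nonneg P.q₀]

lemma norm_q₁_le_size (P : EMCubic) : ‖P.q₁‖ ≤ P.size := by
  unfold size
  linarith [norm_nonneg P.k, norm_nonneg P.q₂, norm_nonneg P.q₀]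

lemma norm_q₀_le_size (P : EMCubic) : ‖P.q₀‖ ≤ P.size := by
  unfold size
  linarith [norm_nonneg P.k, norm_nonneg P.q₂, norm_nonneg P.q₁]

end EMCubic

/-- Up to the factor `s - 1`, the result of integrating `P(x)` against the third derivative of
`x ↦ y ^ (-s)`, `y = Y + x`, by parts. -/
noncomputable def emPrimitive (P : EMCubic) (s y x : ℂ) : ℂ :=
  (s - 1) * (P.eval x * (s * (s + 1) * y ^ (-s - 2)) + P.eval' x * (s * y ^ (-s - 1))
    + P.eval'' x * y ^ (-s)) + P.k * y ^ (1 - s)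

/-- The boundary term of Euler–Maclaurin summation of `y ^ (-s)` at an integer shift of `α`. -/
noncomputable def emBoundary (P : EMCubic) (s y : ℂ) : ℂ :=
  P.q₀ * (s * (s + 1) * y ^ (-s - 2)) + P.q₁ * (s * y ^ (-s - 1)) + P.q₂ * y ^ (-s)

/-- The Euler–Maclaurin remainder over `[m + α, m + α + 1]`. -/
noncomputable def emTerm (P : EMCubic) (α : ℝ) (s : ℂ) (m : ℕ) : ℂ :=
  emPrimitive P s ((m + α : ℝ) + 1) 1 - emPrimitive P s (m + α : ℝ) 0

/-- The Euler–Maclaurin expression for `(s - 1) * ∑ m, e ^ m * (m + α) ^ (-s)`, which converges in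
the half-plane `-2 < re s`. -/
noncomputable def emSeries (P : EMCubic) (e : ℂ) (α : ℝ) (s : ℂ) : ℂ :=
  (s - 1) * ((α : ℂ) ^ (-s) + emBoundary P s α) + P.k * (α : ℂ) ^ (1 - s)
    + ∑' m : ℕ, e ^ m * emTerm P α s m

lemma hasDerivAt_ofReal_add_cpow {Y x : ℝ} (h : 0 < Y + x) (c : ℂ) :
    HasDerivAt (fun x : ℝ ↦ ((Y + x : ℝ) : ℂ) ^ c) (c * ((Y + x : ℝ) : ℂ) ^ (c - 1)) x := by
  have hinner : HasDerivAt (fun x : ℝ ↦ ((Y + x : ℝ) : ℂ)) 1 x := by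
    exact_mod_cast ((hasDerivAt_id x).const_add Y).ofReal_comp
  have hslit : ((Y + x : ℝ) : ℂ) ∈ Complex.slitPlane := Or.inl (by simpa using h)
  have hcpow : HasDerivAt (fun z : ℂ ↦ z ^ c) (c * ((Y + x : ℝ) : ℂ) ^ (c - 1)) (Y + x : ℝ) := by
    simpa using (hasDerivAt_id ((Y + x : ℝ) : ℂ)).cpow_const (c := c) hslit
  simpa using! HasDerivAt.comp x hcpow hinner

lemma hasDerivAt_emPrimitive (P : EMCubic) (s : ℂ) {Y x : ℝ} (h : 0 < Y + x) :
    HasDerivAt (fun x : ℝ ↦ emPrimitive P s (Y + x : ℝ) x)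
      ((s - 1) * (P.eval x * (-(s * (s + 1) * (s + 2)) * ((Y + x : ℝ) : ℂ) ^ (-s - 3)))) x := by
  have hid : HasDerivAt (fun x : ℝ ↦ (x : ℂ)) 1 x := Complex.ofRealCLM.hasDerivAt
  have heval := (((((hid.pow 3).const_mul P.k).div_const 6).add
    (((hid.pow 2).const_mul P.q₂).div_const 2)).add (hid.const_mul P.q₁)).add_const P.q₀
  have heval' := ((((hid.pow 2).const_mul P.k).div_const 2).add (hid.const_mul P.q₂)).add_const P.q₁
  have heval'' := (hid.const_mul P.k).add_const P.q₂
  have hsum := (((heval.mul ((hasDerivAt_ofReal_add_cpow h (-s - 2)).const_mul (s * (s + 1)))).add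
    (heval'.mul ((hasDerivAt_ofReal_add_cpow h (-s - 1)).const_mul s))).add
    (heval''.mul (hasDerivAt_ofReal_add_cpow h (-s)))).const_mul (s - 1) |>.add
    ((hasDerivAt_ofReal_add_cpow h (1 - s)).const_mul P.k)
  unfold emPrimitive EMCubic.eval EMCubic.eval' EMCubic.eval''
  refine hsum.congr_deriv ?_
  rw [show -s - 2 - 1 = -s - 3 by ring, show -s - 1 - 1 = -s - 2 by ring,
    show 1 - s - 1 = -s by ring]
  simp only [Pi.pow_apply, Pi.add_apply]
  push_cast
  ring

lemma norm_emTerm_le (P : EMCubic) {α : ℝ} (hα : 0 < α) {s : ℂ} (hs : -3 ≤ s.re) (m : ℕ) :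
    ‖emTerm P α s m‖ ≤
      P.size * (‖s - 1‖ * ‖s‖ * ‖s + 1‖ * ‖s + 2‖) * (m + α) ^ (-s.re - 3) := by
  set Y : ℝ := m + α with hY
  have hYpos : 0 < Y := by positivity
  have hderiv : ∀ x ∈ Icc (0 : ℝ) 1,
      HasDerivWithinAt (fun x : ℝ ↦ emPrimitive P s ((Y + x : ℝ) : ℂ) x) ((s - 1) * (P.eval x *
        (-(s * (s + 1) * (s + 2)) * ((Y + x : ℝ) : ℂ) ^ (-s - 3)))) (Icc 0 1) x := fun x hx ↦
    (hasDerivAt_emPrimitive P s (by linarith [hx.1])).hasDerivWithinAt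
  have hbound : ∀ x ∈ Ico (0 : ℝ) 1, ‖(s - 1) * (P.eval x *
      (-(s * (s + 1) * (s + 2)) * ((Y + x : ℝ) : ℂ) ^ (-s - 3)))‖ ≤
        P.size * (‖s - 1‖ * ‖s‖ * ‖s + 1‖ * ‖s + 2‖) * Y ^ (-s.re - 3) := by
    intro x hx
    have hpos : 0 < Y + x := by linarith [hx.1]
    have heval := P.norm_eval_le (abs_le.mpr ⟨by linarith [hx.1], hx.2.le⟩)
    have hcpow : ‖((Y + x : ℝ) : ℂ) ^ (-s - 3)‖ ≤ Y ^ (-s.re - 3) := by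
      rw [Complex.norm_cpow_eq_rpow_re_of_pos hpos]
      simp only [Complex.sub_re, Complex.neg_re, Complex.re_ofNat]
      exact rpow_le_rpow_of_nonpos hYpos (by linarith [hx.1]) (by linarith)
    have hsize := P.size_nonneg
    simp only [norm_mul, norm_neg]
    calc _ ≤ ‖s - 1‖ * (P.size * (‖s‖ * ‖s + 1‖ * ‖s + 2‖ * Y ^ (-s.re - 3))) := by gcongr
      _ = _ := by ring
  simpa [emTerm, hY] using norm_image_sub_le_of_norm_deriv_le_segment_01' hderiv hbound

lemma sum_range_emTerm {P : EMCubic} {e : ℂ} (h : P.IsTwisted e) (α : ℝ) (s : ℂ) (N : ℕ) :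
    ∑ m ∈ Finset.range N, e ^ m * emTerm P α s m =
      (s - 1) * (e ^ N * emBoundary P s (N + α : ℝ) - emBoundary P s α
        + ∑ m ∈ Finset.range N, e ^ (m + 1) * (((m + 1 : ℕ) + α : ℝ) : ℂ) ^ (-s))
      + P.k * (((N + α : ℝ) : ℂ) ^ (1 - s) - (α : ℂ) ^ (1 - s)) := by
  induction N with
  | zero => simp
  | succ N ih =>
    have hcast : ((N + 1 : ℕ) + α : ℝ) = ((N + α : ℝ) : ℂ) + 1 := by push_cast; ring
    have hk := h.k_mul_pow N
    have h₀ := h.eval_one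
    have h₁ := h.eval'_one
    have h₂ := h.eval''_one
    rw [Finset.sum_range_succ, ih, Finset.sum_range_succ, emTerm, hcast]
    generalize ((N + α : ℝ) : ℂ) + 1 = y₁
    generalize ((N + α : ℝ) : ℂ) = y₀
    simp only [emPrimitive, emBoundary, EMCubic.eval, EMCubic.eval', EMCubic.eval''] at *
    linear_combination (s - 1) * e ^ N * (y₁ ^ (-s) * h₂ + s * y₁ ^ (-s - 1) * h₁
      + s * (s + 1) * y₁ ^ (-s - 2) * h₀) + (y₁ ^ (1 - s) - y₀ ^ (1 - s)) * hk

lemma natCast_add_rpow_neg_le {α : ℝ} (hα : 0 < α) (hα' : α ≤ 1) {a x b : ℝ} (ha : 0 ≤ a)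
    (hax : a ≤ x) (hxb : x ≤ b) (m : ℕ) :
    (m + α) ^ (-x) ≤ α ^ (-b) * ((m : ℝ) + 1) ^ (-a) := by
  have hm : (0 : ℝ) ≤ m := Nat.cast_nonneg m
  have hshift : α * ((m : ℝ) + 1) ≤ m + α := by nlinarith only [hm, hα']
  calc (m + α) ^ (-x) ≤ (α * ((m : ℝ) + 1)) ^ (-x) :=
        rpow_le_rpow_of_nonpos (by positivity) hshift (by linarith)
    _ = α ^ (-x) * ((m : ℝ) + 1) ^ (-x) := mul_rpow hα.le (by positivity)
    _ ≤ _ := mul_le_mul (rpow_le_rpow_of_exponent_ge hα hα' (by linarith))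
        (rpow_le_rpow_of_exponent_le (by linarith) (by linarith)) (by positivity) (by positivity)

lemma summable_natCast_add_one_rpow_neg {a : ℝ} (ha : 1 < a) :
    Summable fun m : ℕ ↦ ((m : ℝ) + 1) ^ (-a) := by
  simpa using (summable_nat_add_iff 1).mpr (summable_nat_rpow.mpr (show -a < -1 by linarith))

section EulerMaclaurin

variable {P : EMCubic} {e : ℂ} {α : ℝ}

lemma norm_pow_mul_emTerm_le (he : ‖e‖ ≤ 1) (hα : 0 < α) (hα' : α ≤ 1) {s : ℂ} {δ B : ℝ}
    (hδ : 0 ≤ δ) (hs : -2 + δ ≤ s.re) (hB : s.re ≤ B) (m : ℕ) :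
    ‖e ^ m * emTerm P α s m‖ ≤
      P.size * (‖s‖ + 2) ^ 4 * α ^ (-(B + 3)) * ((m : ℝ) + 1) ^ (-(1 + δ)) := by
  have hsize := P.size_nonneg
  have hpoly : ‖s - 1‖ * ‖s‖ * ‖s + 1‖ * ‖s + 2‖ ≤ (‖s‖ + 2) ^ 4 := by
    have h₀ : ‖s‖ ≤ ‖s‖ + 2 := by linarith
    have h₁ : ‖s - 1‖ ≤ ‖s‖ + 2 := (norm_sub_le _ _).trans (by simp)
    have h₂ : ‖s + 1‖ ≤ ‖s‖ + 2 := (norm_add_le _ _).trans (by simp)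
    have h₃ : ‖s + 2‖ ≤ ‖s‖ + 2 := (norm_add_le _ _).trans (by simp)
    calc _ ≤ (‖s‖ + 2) * (‖s‖ + 2) * (‖s‖ + 2) * (‖s‖ + 2) := by gcongr
      _ = _ := by ring
  have hrpow : (m + α) ^ (-s.re - 3) ≤ α ^ (-(B + 3)) * ((m : ℝ) + 1) ^ (-(1 + δ)) := by
    rw [← neg_add']
    exact natCast_add_rpow_neg_le hα hα' (by linarith) (by linarith) (by linarith) m
  calc ‖e ^ m * emTerm P α s m‖ ≤ ‖emTerm P α s m‖ := by
        rw [norm_mul, norm_pow]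
        exact mul_le_of_le_one_left (norm_nonneg _) (pow_le_one₀ (norm_nonneg _) he)
    _ ≤ P.size * (‖s - 1‖ * ‖s‖ * ‖s + 1‖ * ‖s + 2‖) * (m + α) ^ (-s.re - 3) :=
        norm_emTerm_le P hα (by linarith) m
    _ ≤ P.size * (‖s‖ + 2) ^ 4 * (α ^ (-(B + 3)) * ((m : ℝ) + 1) ^ (-(1 + δ))) := by gcongr
    _ = _ := by ring

lemma summable_pow_mul_emTerm (he : ‖e‖ ≤ 1) (hα : 0 < α) (hα' : α ≤ 1) {s : ℂ}
    (hs : -2 < s.re) : Summable fun m : ℕ ↦ e ^ m * emTerm P α s m :=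
  .of_norm_bounded
    ((summable_natCast_add_one_rpow_neg (a := 1 + (s.re + 2)) (by linarith)).mul_left _)
    (norm_pow_mul_emTerm_le he hα hα' (by linarith) (by linarith) le_rfl)

lemma differentiable_emPrimitive (P : EMCubic) {y : ℂ} (hy : y ≠ 0) (x : ℂ) :
    Differentiable ℂ fun s ↦ emPrimitive P s y x := by
  intro s
  unfold emPrimitive
  fun_prop (disch := exact Or.inl hy)

lemma differentiable_emTerm (P : EMCubic) (hα : 0 < α) (m : ℕ) :
    Differentiable ℂ fun s ↦ emTerm P α s m := by
  have h₀ : ((m + α : ℝ) : ℂ) ≠ 0 := by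
    exact_mod_cast (by positivity : (0 : ℝ) < m + α).ne'
  have h₁ : ((m + α : ℝ) : ℂ) + 1 ≠ 0 := by
    exact_mod_cast (by positivity : (0 : ℝ) < m + α + 1).ne'
  exact (differentiable_emPrimitive P h₁ 1).sub (differentiable_emPrimitive P h₀ 0)

lemma differentiableAt_tsum_emTerm (he : ‖e‖ ≤ 1) (hα : 0 < α) (hα' : α ≤ 1) {s₀ : ℂ}
    (hs₀ : -2 < s₀.re) :
    DifferentiableAt ℂ (fun s ↦ ∑' m : ℕ, e ^ m * emTerm P α s m) s₀ := by
  have hsize := P.size_nonneg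
  obtain ⟨δ, hδ, hδs₀⟩ : ∃ δ > 0, -2 + δ < s₀.re :=
    ⟨(s₀.re + 2) / 2, by linarith, by linarith⟩
  set U : Set ℂ := {s | -2 + δ < s.re} ∩ ball s₀ 1
  have hU : IsOpen U := (isOpen_lt continuous_const Complex.continuous_re).inter isOpen_ball
  refine (Complex.differentiableOn_tsum_of_summable_norm (U := U)
    ((summable_natCast_add_one_rpow_neg (a := 1 + δ) (by linarith)).mul_left
      (P.size * (‖s₀‖ + 1 + 2) ^ 4 * α ^ (-(s₀.re + 1 + 3))))
    (fun m s _ ↦ ((differentiable_emTerm P hα m s).const_mul _).differentiableWithinAt) hU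
    fun m s hs ↦ ?_).differentiableAt (hU.mem_nhds ⟨hδs₀, mem_ball_self one_pos⟩)
  have hdist : ‖s - s₀‖ < 1 := by simpa [dist_eq_norm] using hs.2
  have hre : s.re ≤ s₀.re + 1 := by
    have := Complex.re_le_norm (s - s₀)
    rw [Complex.sub_re] at this
    linarith
  have hnorm : ‖s‖ ≤ ‖s₀‖ + 1 := by linarith [norm_le_norm_add_norm_sub' s s₀]
  refine (norm_pow_mul_emTerm_le he hα hα' hδ.le (le_of_lt hs.1) hre m).trans ?_
  gcongr

lemma differentiableOn_emSeries (he : ‖e‖ ≤ 1) (hα : 0 < α) (hα' : α ≤ 1) :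
    DifferentiableOn ℂ (emSeries P e α) {s | -2 < s.re} := by
  intro s hs
  have hα₀ : (α : ℂ) ≠ 0 := by exact_mod_cast hα.ne'
  have htsum := differentiableAt_tsum_emTerm (P := P) he hα hα' hs
  unfold emSeries emBoundary
  refine DifferentiableAt.differentiableWithinAt (.add ?_ htsum)
  fun_prop (disch := exact Or.inl hα₀)

lemma norm_emBoundary_le {s : ℂ} {A : ℝ} (hA : ∀ j : ℂ, -2 ≤ j.re → ‖(α : ℂ) ^ (j - s)‖ ≤ A) :
    ‖emBoundary P s α‖ ≤ 3 * P.size * (‖s‖ + 2) ^ 2 * A := by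
  have hA₀ : 0 ≤ A := (norm_nonneg _).trans (hA 0 (by simp))
  have hsize := P.size_nonneg
  have h₀ := hA 0 (by simp)
  have h₁ := hA (-1) (by simp)
  have h₂ := hA (-2) (by simp)
  rw [zero_sub] at h₀
  rw [show -1 - s = -s - 1 by ring] at h₁
  rw [show -2 - s = -s - 2 by ring] at h₂
  set X := ‖s‖ + 2
  have hX : 1 ≤ X := by linarith [norm_nonneg s]
  have hs : ‖s‖ ≤ X := by linarith
  have hs₁ : ‖s + 1‖ ≤ X := (norm_add_le _ _).trans (by simp only [norm_one]; linarith)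
  have hX₁ : X ≤ X ^ 2 := le_self_pow₀ hX two_ne_zero
  have hX₀ : 1 ≤ X ^ 2 := one_le_pow₀ hX
  calc ‖emBoundary P s α‖
      ≤ P.size * (X * X * A) + P.size * (X * A) + P.size * A := by
        refine norm_add₃_le.trans (add_le_add_three ?_ ?_ ?_) <;> simp only [norm_mul]
        · gcongr
          exact P.norm_q₀_le_size
        · gcongr
          exact P.norm_q₁_le_size
        · gcongr
          exact P.norm_q₂_le_size
    _ = P.size * A * X ^ 2 + P.size * A * X + P.size * A * 1 := by ring
    _ ≤ P.size * A * X ^ 2 + P.size * A * X ^ 2 + P.size * A * X ^ 2 := by gcongr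
    _ = _ := by ring

lemma exists_norm_emSeries_le (he : ‖e‖ ≤ 1) (hα : 0 < α) (hα' : α ≤ 1) {δ : ℝ} (hδ : 0 < δ)
    (B : ℝ) : ∃ C, 0 ≤ C ∧ ∀ s : ℂ, -2 + δ ≤ s.re → s.re ≤ B →
      ‖emSeries P e α s‖ ≤ C * (‖s‖ + 2) ^ 4 := by
  have hsize := P.size_nonneg
  set A := α ^ (-(B + 3))
  set S := ∑' m : ℕ, ((m : ℝ) + 1) ^ (-(1 + δ))
  have hS : 0 ≤ S := tsum_nonneg fun m ↦ by positivity
  have : 0 ≤ P.size * A * S := mul_nonneg (by positivity) hS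
  refine ⟨A * (1 + 4 * P.size) + P.size * A * S, by positivity, fun s hs hB ↦ ?_⟩
  have hcpow (j : ℂ) (hj : -3 ≤ j.re) : ‖(α : ℂ) ^ (j - s)‖ ≤ A := by
    rw [Complex.norm_cpow_eq_rpow_re_of_pos hα]
    exact rpow_le_rpow_of_exponent_ge hα hα' (by rw [Complex.sub_re]; linarith)
  have hboundary := norm_emBoundary_le (P := P) fun j hj ↦ hcpow j (by linarith)
  have htail : ‖∑' m : ℕ, e ^ m * emTerm P α s m‖ ≤ P.size * (‖s‖ + 2) ^ 4 * A * S := by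
    rw [← tsum_mul_left]
    exact tsum_of_norm_bounded ((summable_natCast_add_one_rpow_neg (by linarith)).mul_left _).hasSum
      (norm_pow_mul_emTerm_le he hα hα' hδ.le hs hB)
  set X := ‖s‖ + 2
  have hX : 1 ≤ X := by linarith [norm_nonneg s]
  have hs₁ : ‖s - 1‖ ≤ X := (norm_sub_le _ _).trans (by simp only [norm_one]; linarith)
  have hX₃ : X ^ 3 ≤ X ^ 4 := pow_le_pow_right₀ hX (by norm_num)
  have hX₁ : X ≤ X ^ 4 := le_self_pow₀ hX (by norm_num)
  have hX₀ : 1 ≤ X ^ 4 := one_le_pow₀ hX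
  calc ‖emSeries P e α s‖
      ≤ X * (A + 3 * P.size * X ^ 2 * A) + P.size * A + P.size * X ^ 4 * A * S := by
        refine norm_add₃_le.trans (add_le_add_three ?_ ?_ htail)
        · rw [norm_mul]
          exact mul_le_mul hs₁ ((norm_add_le _ _).trans
            (add_le_add (by simpa using hcpow 0 (by simp)) hboundary)) (norm_nonneg _) (by linarith)
        · rw [norm_mul]
          exact mul_le_mul P.norm_k_le_size (hcpow 1 (by norm_num)) (norm_nonneg _) hsize
    _ = A * X + 3 * P.size * A * X ^ 3 + P.size * A * 1 + P.size * A * S * X ^ 4 := by ring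
    _ ≤ A * X ^ 4 + 3 * P.size * A * X ^ 4 + P.size * A * X ^ 4 + P.size * A * S * X ^ 4 := by
        gcongr
    _ = _ := by ring

lemma tendsto_sum_emSeries (hP : P.IsTwisted e) (he : ‖e‖ ≤ 1) (hα : 0 < α) (hα' : α ≤ 1) {s : ℂ}
    (hs : -2 < s.re) (hdecay : ∀ c : ℂ, c.re ≤ 0 →
      Tendsto (fun N : ℕ ↦ e ^ N * ((N + α : ℝ) : ℂ) ^ (c - s)) atTop (𝓝 0))
    (hk : Tendsto (fun N : ℕ ↦ P.k * ((N + α : ℝ) : ℂ) ^ (1 - s)) atTop (𝓝 0)) :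
    Tendsto (fun N : ℕ ↦ (s - 1) * ∑ m ∈ Finset.range (N + 1), e ^ m * ((m + α : ℝ) : ℂ) ^ (-s))
      atTop (𝓝 (emSeries P e α s)) := by
  have hterms := (summable_pow_mul_emTerm (P := P) he hα hα' hs).hasSum.tendsto_sum_nat
  have hboundary : Tendsto (fun N : ℕ ↦ e ^ N * emBoundary P s (N + α : ℝ)) atTop (𝓝 0) := by
    have h := (((hdecay (-2) (by simp)).const_mul (P.q₀ * (s * (s + 1)))).add
      ((hdecay (-1) (by simp)).const_mul (P.q₁ * s))).add
      ((hdecay 0 (by simp)).const_mul P.q₂)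
    simp only [mul_zero, add_zero] at h
    refine h.congr fun N ↦ ?_
    rw [emBoundary, zero_sub, show -1 - s = -s - 1 by ring, show -2 - s = -s - 2 by ring]
    ring
  have hall := ((hterms.sub (hboundary.const_mul (s - 1))).sub hk).add_const
    ((s - 1) * ((α : ℂ) ^ (-s) + emBoundary P s α) + P.k * (α : ℂ) ^ (1 - s))
  rw [mul_zero, sub_zero, sub_zero, add_comm (∑' _, _)] at hall
  refine hall.congr fun N ↦ ?_
  rw [sum_range_emTerm hP, Finset.sum_range_succ']
  simp only [pow_zero, one_mul, Nat.cast_zero, zero_add]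
  ring

lemma norm_pow_mul_natCast_add_cpow (e : ℂ) (hα : 0 < α) (c : ℂ) (N : ℕ) :
    ‖e ^ N * ((N + α : ℝ) : ℂ) ^ c‖ = ‖e‖ ^ N * (N + α) ^ c.re := by
  rw [norm_mul, norm_pow, Complex.norm_cpow_eq_rpow_re_of_pos (by positivity)]

lemma tendsto_pow_mul_natCast_add_cpow_of_re_neg (he : ‖e‖ ≤ 1) (hα : 0 < α) {c : ℂ}
    (hc : c.re < 0) : Tendsto (fun N : ℕ ↦ e ^ N * ((N + α : ℝ) : ℂ) ^ c) atTop (𝓝 0) := by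
  rw [tendsto_zero_iff_norm_tendsto_zero]
  have hrpow : Tendsto (fun N : ℕ ↦ ((N : ℝ) + α) ^ c.re) atTop (𝓝 0) := by
    simpa [Function.comp_def] using (tendsto_rpow_neg_atTop (neg_pos.mpr hc)).comp
      (tendsto_atTop_add_const_right _ α tendsto_natCast_atTop_atTop)
  refine squeeze_zero (fun _ ↦ norm_nonneg _) (fun N ↦ ?_) hrpow
  rw [norm_pow_mul_natCast_add_cpow e hα]
  exact mul_le_of_le_one_left (by positivity) (pow_le_one₀ (norm_nonneg _) he)

lemma norm_pow_mul_natCast_add_cpow_le (e : ℂ) (hα : 0 < α) (hα' : α ≤ 1) {c : ℂ} (hc : c.re ≤ 2)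
    {N : ℕ} (hN : 1 ≤ N) :
    ‖e ^ N * ((N + α : ℝ) : ℂ) ^ c‖ ≤ 4 * ((N : ℝ) ^ 2 * ‖e‖ ^ N) := by
  have hN' : (1 : ℝ) ≤ N := by exact_mod_cast hN
  have hrpow : ((N : ℝ) + α) ^ c.re ≤ 4 * (N : ℝ) ^ 2 := by
    calc ((N : ℝ) + α) ^ c.re ≤ ((N : ℝ) + α) ^ (2 : ℝ) :=
          rpow_le_rpow_of_exponent_le (by linarith) hc
      _ = ((N : ℝ) + α) ^ 2 := by norm_cast
      _ ≤ (2 * N) ^ 2 := by gcongr; linarith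
      _ = _ := by ring
  rw [norm_pow_mul_natCast_add_cpow e hα]
  calc _ ≤ ‖e‖ ^ N * (4 * (N : ℝ) ^ 2) := by gcongr
    _ = _ := by ring

lemma tendsto_pow_mul_natCast_add_cpow (he : ‖e‖ < 1) (hα : 0 < α) (hα' : α ≤ 1) {c : ℂ}
    (hc : c.re ≤ 2) : Tendsto (fun N : ℕ ↦ e ^ N * ((N + α : ℝ) : ℂ) ^ c) atTop (𝓝 0) := by
  rw [tendsto_zero_iff_norm_tendsto_zero]
  have h := (tendsto_pow_const_mul_const_pow_of_abs_lt_one 2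
    (r := ‖e‖) (by simpa using he)).const_mul 4
  rw [mul_zero] at h
  refine squeeze_zero' (.of_forall fun _ ↦ norm_nonneg _) ?_ h
  filter_upwards [eventually_ge_atTop 1] with N hN
  exact norm_pow_mul_natCast_add_cpow_le e hα hα' hc hN

lemma summable_pow_mul_natCast_add_cpow (he : ‖e‖ < 1) (hα : 0 < α) (hα' : α ≤ 1) {c : ℂ}
    (hc : c.re ≤ 2) : Summable fun N : ℕ ↦ e ^ N * ((N + α : ℝ) : ℂ) ^ c := by
  refine .of_norm_bounded_eventually_nat
    ((summable_pow_mul_geometric_of_norm_lt_one 2 (r := ‖e‖) (by simpa using he)).mul_left 4) ?_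
  filter_upwards [eventually_ge_atTop 1] with N hN
  exact norm_pow_mul_natCast_add_cpow_le e hα hα' hc hN

lemma sub_one_mul_tsum_eq_emSeries_of_norm_lt_one (hP : P.IsTwisted e) (he : ‖e‖ < 1) (hα : 0 < α)
    (hα' : α ≤ 1) {s : ℂ} (hs : -2 < s.re) :
    (s - 1) * ∑' m : ℕ, e ^ m * ((m + α : ℝ) : ℂ) ^ (-s) = emSeries P e α s := by
  have hk : P.k = 0 := by
    have hne : e - 1 ≠ 0 := sub_ne_zero.mpr fun h ↦ by simp [h] at he
    exact (mul_eq_zero.mp (by linear_combination hP.k_mul : P.k * (e - 1) = 0)).resolve_right hne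
  have hlim := tendsto_sum_emSeries hP he.le hα hα' hs
    (fun c hc ↦ tendsto_pow_mul_natCast_add_cpow he hα hα' (by rw [Complex.sub_re]; linarith))
    (by simp [hk])
  have hsum := (summable_pow_mul_natCast_add_cpow he hα hα' (c := -s)
    (by rw [Complex.neg_re]; linarith)).hasSum.tendsto_sum_nat
  exact tendsto_nhds_unique (((tendsto_add_atTop_iff_nat 1).mpr hsum).const_mul (s - 1)) hlim

lemma summable_pow_mul_natCast_add_cpow_neg (he : ‖e‖ ≤ 1) (hα : 0 < α) (hα' : α ≤ 1) {s : ℂ}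
    (hs : 1 < s.re) : Summable fun m : ℕ ↦ e ^ m * ((m + α : ℝ) : ℂ) ^ (-s) := by
  refine .of_norm_bounded ((summable_natCast_add_one_rpow_neg hs).mul_left (α ^ (-s.re))) fun m ↦ ?_
  refine le_trans ?_ (natCast_add_rpow_neg_le hα hα' (by linarith) le_rfl le_rfl m)
  rw [norm_pow_mul_natCast_add_cpow e hα, Complex.neg_re]
  exact mul_le_of_le_one_left (by positivity) (pow_le_one₀ (norm_nonneg _) he)

lemma sub_one_mul_tsum_eq_emSeries_of_one_lt_re (hP : P.IsTwisted e) (he : ‖e‖ ≤ 1) (hα : 0 < α)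
    (hα' : α ≤ 1) {s : ℂ} (hs : 1 < s.re) :
    (s - 1) * ∑' m : ℕ, e ^ m * ((m + α : ℝ) : ℂ) ^ (-s) = emSeries P e α s := by
  have hk := (tendsto_pow_mul_natCast_add_cpow_of_re_neg (e := 1) (c := 1 - s) (by simp) hα
    (by simpa using hs)).const_mul P.k
  simp only [one_pow, one_mul, mul_zero] at hk
  have hlim := tendsto_sum_emSeries hP he hα hα' (s := s) (by linarith)
    (fun c hc ↦ tendsto_pow_mul_natCast_add_cpow_of_re_neg he hα
      (by rw [Complex.sub_re]; linarith)) hk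
  have hsum := (summable_pow_mul_natCast_add_cpow_neg he hα hα' hs).hasSum.tendsto_sum_nat
  exact tendsto_nhds_unique (((tendsto_add_atTop_iff_nat 1).mpr hsum).const_mul (s - 1)) hlim

end EulerMaclaurin

lemma fourierChar_pow (x : ℝ) (m : ℕ) :
    (𝐞 x : ℂ) ^ m = Complex.exp (2 * π * Complex.I * x * m) := by
  rw [fourierChar_apply, ← Complex.exp_nat_mul]
  push_cast
  ring_nf

lemma fourierChar_one : (𝐞 1 : ℂ) = 1 := by
  rw [fourierChar_apply]
  simp

lemma fourierChar_ne_one {x : ℝ} (h₀ : 0 < x) (h₁ : x < 1) : (𝐞 x : ℂ) ≠ 1 := by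
  rw [fourierChar_apply, Ne, Complex.exp_eq_one_iff]
  rintro ⟨n, hn⟩
  have hxn : x = n := by
    have : (x : ℂ) = n := mul_left_cancel₀ Complex.two_pi_I_ne_zero (by
      push_cast at hn
      linear_combination hn)
    exact_mod_cast this
  rw [hxn] at h₀ h₁
  have hpos : (0 : ℤ) < n := by exact_mod_cast h₀
  have hlt : n < (1 : ℤ) := by exact_mod_cast h₁
  omega

lemma lerchSeries_eq_tsum (lam alp : ℝ) (s : ℂ) :
    lerchSeries lam alp s = ∑' m : ℕ, (𝐞 lam : ℂ) ^ m * ((m + alp : ℝ) : ℂ) ^ (-s) := by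
  unfold lerchSeries
  congr 1 with m
  rw [fourierChar_pow, Complex.cpow_neg, div_eq_mul_inv]
  push_cast
  rfl

lemma exists_isTwisted (e : ℂ) : ∃ P : EMCubic, P.IsTwisted e := by
  rcases eq_or_ne e 1 with rfl | he
  · exact ⟨_, EMCubic.isTwisted_bernoulli⟩
  · exact ⟨_, EMCubic.isTwisted_twisted he⟩

lemma sub_one_mul_eq_emSeries {lam alp : ℝ} (hα : 0 < alp) (hα' : alp ≤ 1) {F : ℂ → ℂ}
    (hF : IsLerch lam alp F) {P : EMCubic} (hP : P.IsTwisted (𝐞 lam)) {s : ℂ} (hs : -2 < s.re)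
    (hs' : 0 < s.im) : (s - 1) * F s = emSeries P (𝐞 lam) alp s := by
  have he : ‖(𝐞 lam : ℂ)‖ ≤ 1 := (Circle.norm_coe _).le
  set U : Set ℂ := {s | -2 < s.re} ∩ {s | 0 < s.im}
  have hU : IsOpen U := (isOpen_lt continuous_const Complex.continuous_re).inter
    (isOpen_lt continuous_const Complex.continuous_im)
  have hUconvex : Convex ℝ U := (convex_halfSpace_re_gt _).inter (convex_halfSpace_im_gt _)
  have hleft : DifferentiableOn ℂ (fun s ↦ (s - 1) * F s) U := fun z hz ↦ by
    have hz₁ : z ≠ 1 := by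
      rintro rfl
      exact absurd hz.2 (by simp)
    exact ((differentiableAt_id.sub_const 1).mul (hF.1 z hz₁)).differentiableWithinAt
  have hright := (differentiableOn_emSeries (P := P) he hα hα').mono
    (inter_subset_left : U ⊆ {s | -2 < s.re})
  have hbase : 2 + Complex.I ∈ U := by constructor <;> simp
  have heq : (fun s ↦ (s - 1) * F s) =ᶠ[𝓝 (2 + Complex.I)] emSeries P (𝐞 lam) alp := by
    filter_upwards [(isOpen_lt continuous_const Complex.continuous_re).mem_nhds
      (by simp : 2 + Complex.I ∈ {s : ℂ | 1 < s.re})] with z hz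
    rw [hF.2 z hz, lerchSeries_eq_tsum]
    exact sub_one_mul_tsum_eq_emSeries_of_one_lt_re hP he hα hα' hz
  exact (hleft.analyticOnNhd hU).eqOn_of_preconnected_of_eventuallyEq (hright.analyticOnNhd hU)
    hUconvex.isPreconnected hbase heq ⟨hs, hs'⟩

/-! ### Poisson summation for damped complex powers -/

lemma integrableOn_rpow_mul_exp_neg_mul {x b : ℝ} (hx : -1 < x) (hb : 0 < b) :
    IntegrableOn (fun t : ℝ ↦ t ^ x * exp (-b * t)) (Ioi 0) := by
  simpa using integrableOn_rpow_mul_exp_neg_mul_rpow (p := 1) hx one_pos hb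

lemma norm_cpow_mul_exp_neg_mul (a r : ℂ) {t : ℝ} (ht : 0 < t) :
    ‖(t : ℂ) ^ a * Complex.exp (-(r * t))‖ = t ^ a.re * exp (-r.re * t) := by
  rw [norm_mul, Complex.norm_cpow_eq_rpow_re_of_pos ht, Complex.norm_exp]
  simp

lemma aestronglyMeasurable_cpow_mul_exp_neg_mul (a r : ℂ) :
    AEStronglyMeasurable (fun t : ℝ ↦ (t : ℂ) ^ a * Complex.exp (-(r * t)))
      (volume.restrict (Ioi 0)) := by
  refine ContinuousOn.aestronglyMeasurable (fun t ht ↦ ?_) measurableSet_Ioi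
  exact ((Complex.continuousAt_ofReal_cpow_const _ _ (Or.inr (ne_of_gt ht))).mul
    (by fun_prop)).continuousWithinAt

lemma differentiableAt_integral_cpow_mul_exp_neg_mul {a r₀ : ℂ} (ha : 0 < a.re) (hr₀ : 0 < r₀.re) :
    DifferentiableAt ℂ
      (fun r ↦ ∫ t : ℝ in Ioi 0, (t : ℂ) ^ (a - 1) * Complex.exp (-(r * t))) r₀ := by
  refine (hasDerivAt_integral_of_dominated_loc_of_deriv_le (μ := volume.restrict (Ioi (0 : ℝ)))
    (F := fun r t ↦ (t : ℂ) ^ (a - 1) * Complex.exp (-(r * t)))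
    (F' := fun r t ↦ (t : ℂ) ^ (a - 1) * (Complex.exp (-(r * t)) * (-t)))
    (bound := fun t ↦ t ^ a.re * exp (-(r₀.re / 2) * t)) (ball_mem_nhds r₀ (half_pos hr₀))
    (.of_forall (aestronglyMeasurable_cpow_mul_exp_neg_mul (a - 1))) ?_ ?_ ?_
    (integrableOn_rpow_mul_exp_neg_mul (by linarith) (by linarith)) ?_).2.differentiableAt
  · refine (integrableOn_rpow_mul_exp_neg_mul (x := a.re - 1) (by linarith) hr₀).mono'
      (aestronglyMeasurable_cpow_mul_exp_neg_mul (a - 1) r₀) ?_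
    filter_upwards [self_mem_ae_restrict measurableSet_Ioi] with t ht
    simpa using (norm_cpow_mul_exp_neg_mul (a - 1) r₀ ht).le
  · have hneg : Continuous fun t : ℝ ↦ -(t : ℂ) := by fun_prop
    refine ((aestronglyMeasurable_cpow_mul_exp_neg_mul (a - 1) r₀).mul
      hneg.aestronglyMeasurable).congr (.of_forall fun t ↦ ?_)
    simp only [Pi.mul_apply, mul_assoc]
  · filter_upwards [self_mem_ae_restrict measurableSet_Ioi] with t ht r hr
    have ht' : 0 < t := ht
    have hre : r₀.re / 2 ≤ r.re := by
      have hdist : ‖r - r₀‖ < r₀.re / 2 := by simpa [dist_eq_norm] using hr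
      have hsub := (abs_le.mp (Complex.abs_re_le_norm (r - r₀))).1
      rw [Complex.sub_re] at hsub
      linarith
    rw [← mul_assoc, norm_mul, norm_cpow_mul_exp_neg_mul _ _ ht, norm_neg, Complex.norm_real,
      norm_eq_abs, abs_of_pos ht', Complex.sub_re, Complex.one_re]
    calc t ^ (a.re - 1) * exp (-r.re * t) * t = t ^ a.re * exp (-r.re * t) := by
          rw [rpow_sub_one ht'.ne']
          field_simp
      _ ≤ _ := by gcongr
  · filter_upwards with t r _
    have hlin : HasDerivAt (fun r : ℂ ↦ -(r * t)) (-(t : ℂ)) r :=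
      (((hasDerivAt_id r).mul_const (t : ℂ)).neg).congr_deriv (by simp)
    exact hlin.cexp.const_mul _

lemma integral_cpow_mul_exp_neg_mul {a r : ℂ} (ha : 0 < a.re) (hr : 0 < r.re) :
    ∫ t : ℝ in Ioi 0, (t : ℂ) ^ (a - 1) * Complex.exp (-(r * t)) =
      (1 / r) ^ a * Complex.Gamma a := by
  set U : Set ℂ := {r | 0 < r.re}
  have hU : IsOpen U := isOpen_lt continuous_const Complex.continuous_re
  have hleft : DifferentiableOn ℂ
      (fun r ↦ ∫ t : ℝ in Ioi 0, (t : ℂ) ^ (a - 1) * Complex.exp (-(r * t))) U := fun r hr ↦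
    (differentiableAt_integral_cpow_mul_exp_neg_mul ha hr).differentiableWithinAt
  have hright : DifferentiableOn ℂ (fun r : ℂ ↦ (1 / r) ^ a * Complex.Gamma a) U := by
    intro r hr
    have hr₀ : r ≠ 0 := by
      rintro rfl
      simp [U] at hr
    have hslit : 1 / r ∈ Complex.slitPlane := by
      left
      rw [one_div, Complex.inv_re]
      exact div_pos hr (Complex.normSq_pos.mpr hr₀)
    exact ((DifferentiableAt.cpow_const (by fun_prop (disch := exact hr₀))
      hslit).mul_const _).differentiableWithinAt
  have hfreq : ∃ᶠ z in 𝓝[≠] (1 : ℂ),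
      ∫ t : ℝ in Ioi 0, (t : ℂ) ^ (a - 1) * Complex.exp (-(z * t)) =
        (1 / z) ^ a * Complex.Gamma a := by
    have htendsto : Tendsto (fun x : ℝ ↦ (x : ℂ)) (𝓝[>] 1) (𝓝[≠] (1 : ℂ)) := by
      refine tendsto_nhdsWithin_iff.mpr
        ⟨(Complex.continuous_ofReal.tendsto' 1 1 (by simp)).mono_left nhdsWithin_le_nhds, ?_⟩
      filter_upwards [self_mem_nhdsWithin] with x hx
      simpa using ne_of_gt hx
    refine htendsto.frequently (Eventually.frequently ?_)
    filter_upwards [self_mem_nhdsWithin] with x hx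
    exact Complex.integral_cpow_mul_exp_neg_mul_Ioi ha (one_pos.trans hx)
  exact (hleft.analyticOnNhd hU).eqOn_of_preconnected_of_frequently_eq (hright.analyticOnNhd hU)
    (convex_halfSpace_re_gt 0).isPreconnected (show (1 : ℂ) ∈ U by simp [U]) hfreq hr

/-- The function `y₊ ^ (-s) * exp ((2πiλ - ε) y)`, whose sum over `ℤ + α` is an Abel-regularized
Lerch series. -/
noncomputable def dampedPower (s : ℂ) (lam ε y : ℝ) : ℂ :=
  ((max y 0 : ℝ) : ℂ) ^ (-s) * Complex.exp ((2 * π * Complex.I * lam - ε) * y)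

/-- The damped frequency `ε + 2πi (ξ - λ)`, in terms of which the Fourier transform of
`dampedPower` is a power. -/
noncomputable def dampedFreq (lam ε ξ : ℝ) : ℂ := ε + 2 * π * Complex.I * (ξ - lam)

lemma continuous_dampedPower {s : ℂ} (hs : s.re < 0) (lam ε : ℝ) :
    Continuous (dampedPower s lam ε) := by
  have hcpow : Continuous fun y : ℝ ↦ ((max y 0 : ℝ) : ℂ) ^ (-s) :=
    (Complex.continuous_ofReal_cpow_const (y := -s) (by simpa using hs)).comp (by fun_prop)
  unfold dampedPower
  fun_prop

lemma dampedPower_of_nonpos {s : ℂ} (hs : s.re < 0) (lam ε : ℝ) {y : ℝ} (hy : y ≤ 0) :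
    dampedPower s lam ε y = 0 := by
  have hs₀ : -s ≠ 0 := by
    rw [neg_ne_zero]
    rintro rfl
    exact lt_irrefl _ hs
  simp [dampedPower, max_eq_right hy, hs₀]

lemma dampedPower_of_pos (s : ℂ) (lam ε : ℝ) {y : ℝ} (hy : 0 < y) :
    dampedPower s lam ε y =
      (y : ℂ) ^ (-s) * Complex.exp ((2 * π * Complex.I * lam - ε) * y) := by
  rw [dampedPower, max_eq_left hy.le]

lemma norm_dampedPower_of_pos (s : ℂ) (lam ε : ℝ) {y : ℝ} (hy : 0 < y) :
    ‖dampedPower s lam ε y‖ = y ^ (-s.re) * exp (-ε * y) := by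
  rw [dampedPower_of_pos s lam ε hy, norm_mul, Complex.norm_cpow_eq_rpow_re_of_pos hy,
    Complex.norm_exp]
  simp

lemma isBigO_dampedPower {s : ℂ} (hs : s.re < 0) (lam : ℝ) {ε : ℝ} (hε : 0 < ε) (b : ℝ) :
    dampedPower s lam ε =O[cocompact ℝ] (fun x ↦ |x| ^ (-b)) := by
  rw [cocompact_eq_atBot_atTop, isBigO_sup]
  constructor
  · refine .of_bound 0 ?_
    filter_upwards [eventually_le_atBot 0] with y hy
    simp [dampedPower_of_nonpos hs lam ε hy]
  · have hexp := (isBigO_refl (fun x : ℝ ↦ x ^ (-s.re)) atTop).mul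
      (isLittleO_exp_neg_mul_rpow_atTop hε (-b + s.re)).isBigO
    refine IsBigO.trans (.of_bound 1 ?_) (hexp.trans (.of_bound 1 ?_))
    · filter_upwards [eventually_gt_atTop 0] with y hy
      rw [norm_dampedPower_of_pos s lam ε hy, one_mul, norm_of_nonneg (by positivity)]
    · filter_upwards [eventually_gt_atTop 0] with y hy
      rw [← rpow_add hy, abs_of_pos hy]
      simp

lemma fourier_dampedPower {s : ℂ} (hs : s.re < 0) (lam : ℝ) {ε : ℝ} (hε : 0 < ε) (ξ : ℝ) :
    𝓕 (dampedPower s lam ε) ξ = (1 / dampedFreq lam ε ξ) ^ (1 - s) * Complex.Gamma (1 - s) := by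
  rw [fourier_real_eq_integral_exp_smul, ← integral_cpow_mul_exp_neg_mul
      (by rw [Complex.sub_re, Complex.one_re]; linarith) (by simp [dampedFreq, hε]),
    ← setIntegral_eq_integral_of_forall_compl_eq_zero (s := Ioi 0)]
  · refine setIntegral_congr_fun measurableSet_Ioi fun t ht ↦ ?_
    simp only [smul_eq_mul]
    rw [dampedPower_of_pos s lam ε ht, show 1 - s - 1 = -s by ring, mul_left_comm,
      ← Complex.exp_add, dampedFreq]
    push_cast
    ring_nf
  · intro t ht
    rw [dampedPower_of_nonpos hs lam ε (by simpa using ht), smul_zero]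

lemma two_pi_mul_abs_sub_le_norm_dampedFreq (lam ε ξ : ℝ) :
    2 * π * |ξ - lam| ≤ ‖dampedFreq lam ε ξ‖ := by
  have him : (dampedFreq lam ε ξ).im = 2 * π * (ξ - lam) := by simp [dampedFreq]
  simpa [him, abs_mul, abs_of_pos pi_pos] using Complex.abs_im_le_norm (dampedFreq lam ε ξ)

lemma norm_one_div_dampedFreq_cpow_le {a : ℂ} (ha : 0 ≤ a.re) {lam ξ : ℝ} (ε : ℝ) (hξ : ξ ≠ lam) :
    ‖(1 / dampedFreq lam ε ξ) ^ a‖ ≤ exp (π * |a.im|) * (1 / |ξ - lam| ^ a.re) := by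
  have hdist : 0 < |ξ - lam| := abs_pos.mpr (sub_ne_zero.mpr hξ)
  have hle : |ξ - lam| ≤ ‖dampedFreq lam ε ξ‖ := by
    nlinarith [two_pi_mul_abs_sub_le_norm_dampedFreq lam ε ξ, pi_gt_three]
  refine (Complex.norm_cpow_le _ _).trans ?_
  rw [div_eq_mul_inv, ← exp_neg, mul_comm]
  refine mul_le_mul (exp_le_exp.mpr ?_) ?_ (by positivity) (by positivity)
  · calc -((1 / dampedFreq lam ε ξ).arg * a.im) ≤ |(1 / dampedFreq lam ε ξ).arg * a.im| :=
          neg_le_abs _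
      _ = |(1 / dampedFreq lam ε ξ).arg| * |a.im| := abs_mul _ _
      _ ≤ _ := by
        gcongr
        exact Complex.abs_arg_le_pi _
  · rw [norm_div, norm_one, one_div, one_div, inv_rpow (norm_nonneg _)]
    gcongr

lemma isBigO_fourier_dampedPower {s : ℂ} (hs : s.re ≤ -1) (lam : ℝ) {ε : ℝ} (hε : 0 < ε) :
    𝓕 (dampedPower s lam ε) =O[cocompact ℝ] (fun x : ℝ ↦ |x| ^ (-2 : ℝ)) := by
  refine .of_bound (exp (π * |(1 - s).im|) * (2 : ℝ) ^ (1 - s).re * ‖Complex.Gamma (1 - s)‖) ?_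
  filter_upwards [tendsto_norm_cocompact_atTop.eventually (eventually_ge_atTop (2 * |lam| + 2))]
    with x hx
  rw [norm_eq_abs] at hx
  have hlam := abs_nonneg lam
  have hx₁ : 1 ≤ |x| := by linarith
  have hx₀ : 0 < |x| := by linarith
  have hdist : |x| / 2 ≤ |x - lam| := by linarith [abs_sub_abs_le_abs_sub x lam]
  have hne : x ≠ lam := by
    rintro rfl
    linarith
  have hre : 2 ≤ (1 - s).re := by
    rw [Complex.sub_re, Complex.one_re]
    linarith
  have hpow : 1 / |x - lam| ^ (1 - s).re ≤ (2 : ℝ) ^ (1 - s).re * |x| ^ (-2 : ℝ) := by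
    calc 1 / |x - lam| ^ (1 - s).re ≤ 1 / (|x| / 2) ^ (1 - s).re := by gcongr
      _ = (2 : ℝ) ^ (1 - s).re * |x| ^ (-(1 - s).re) := by
          rw [div_rpow hx₀.le (by norm_num), rpow_neg hx₀.le]
          field_simp
      _ ≤ _ := by gcongr
  rw [fourier_dampedPower (by linarith) lam hε, norm_mul, norm_of_nonneg (by positivity)]
  calc _ ≤ exp (π * |(1 - s).im|) * ((2 : ℝ) ^ (1 - s).re * |x| ^ (-2 : ℝ))
        * ‖Complex.Gamma (1 - s)‖ := by
        gcongr
        exact (norm_one_div_dampedFreq_cpow_le (by linarith) ε hne).trans (by gcongr)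
    _ = _ := by ring

lemma norm_fourierChar_mul_exp_neg_lt_one (lam : ℝ) {ε : ℝ} (hε : 0 < ε) :
    ‖(𝐞 lam : ℂ) * Complex.exp (-ε)‖ < 1 := by
  rw [norm_mul, Circle.norm_coe, one_mul, Complex.norm_exp]
  simpa using hε

lemma dampedPower_natCast_add (s : ℂ) (lam ε : ℝ) {α : ℝ} (hα : 0 < α) (m : ℕ) :
    dampedPower s lam ε (α + ((m : ℤ) : ℝ)) =
      Complex.exp ((2 * π * Complex.I * lam - ε) * α) *
        (((𝐞 lam : ℂ) * Complex.exp (-ε)) ^ m * ((m + α : ℝ) : ℂ) ^ (-s)) := by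
  rw [dampedPower_of_pos _ _ _ (by positivity), mul_pow, fourierChar_pow, ← Complex.exp_nat_mul,
    ← Complex.exp_add, ← mul_assoc, ← Complex.exp_add, mul_comm, add_comm α]
  push_cast
  congr 2
  ring

lemma exp_mul_tsum_damped_eq {s : ℂ} (hs : s.re ≤ -1) (hs' : -2 ≤ s.re) (lam : ℝ) {α ε : ℝ}
    (hα : 0 < α) (hα' : α ≤ 1) (hε : 0 < ε) :
    Complex.exp ((2 * π * Complex.I * lam - ε) * α) *
        ∑' m : ℕ, ((𝐞 lam : ℂ) * Complex.exp (-ε)) ^ m * ((m + α : ℝ) : ℂ) ^ (-s) =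
      Complex.Gamma (1 - s) *
        ∑' n : ℤ, (1 / dampedFreq lam ε n) ^ (1 - s) * (𝐞 α : ℂ) ^ n := by
  have hs₀ : s.re < 0 := by linarith
  have hpoisson := tsum_eq_tsum_fourier_of_rpow_decay (continuous_dampedPower hs₀ lam ε)
    (by norm_num) (isBigO_dampedPower hs₀ lam hε 2) (isBigO_fourier_dampedPower hs lam hε) α
  have hpos := dampedPower_natCast_add s lam ε hα
  have hneg (m : ℕ) : dampedPower s lam ε (α + ((-((m : ℤ) + 1) : ℤ) : ℝ)) = 0 := by
    refine dampedPower_of_nonpos hs₀ lam ε ?_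
    push_cast
    linarith [Nat.cast_nonneg (α := ℝ) m]
  have hsummable := summable_pow_mul_natCast_add_cpow (norm_fourierChar_mul_exp_neg_lt_one lam hε)
    hα hα' (c := -s) (by rw [Complex.neg_re]; linarith)
  rw [tsum_of_nat_of_neg_add_one (by simpa only [hpos] using hsummable.mul_left _)
    (by simpa only [hneg] using summable_zero)] at hpoisson
  simp only [hpos, hneg, tsum_zero, add_zero, tsum_mul_left] at hpoisson
  rw [hpoisson, ← tsum_mul_left]
  congr 1 with n
  have hchar : Complex.exp (2 * π * Complex.I * n * α / (1 : ℝ)) = (𝐞 α : ℂ) ^ n := by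
    rw [fourierChar_apply, ← Complex.exp_int_mul]
    push_cast
    ring_nf
  rw [fourier_dampedPower hs₀ lam hε, fourier_coe_apply, hchar]
  ring

/-! ### The functional equation -/

section AbelLimit

lemma continuousAt_size_twisted {e : ℂ} (he : e ≠ 1) :
    ContinuousAt (fun e ↦ (EMCubic.twisted e).size) e := by
  have h₁ : 1 - e ≠ 0 := sub_ne_zero.mpr he.symm
  have h₂ : e - 1 ≠ 0 := sub_ne_zero.mpr he
  simp only [EMCubic.size, EMCubic.twisted]
  fun_prop (disch := assumption)

lemma continuousAt_emBoundary_twisted {e : ℂ} (he : e ≠ 1) (s y : ℂ) :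
    ContinuousAt (fun e ↦ emBoundary (EMCubic.twisted e) s y) e := by
  have h₁ : 1 - e ≠ 0 := sub_ne_zero.mpr he.symm
  have h₂ : e - 1 ≠ 0 := sub_ne_zero.mpr he
  simp only [emBoundary, EMCubic.twisted]
  fun_prop (disch := assumption)

lemma continuousAt_emTerm_twisted {e : ℂ} (he : e ≠ 1) (α : ℝ) (s : ℂ) (m : ℕ) :
    ContinuousAt (fun e ↦ emTerm (EMCubic.twisted e) α s m) e := by
  have h₁ : 1 - e ≠ 0 := sub_ne_zero.mpr he.symm
  have h₂ : e - 1 ≠ 0 := sub_ne_zero.mpr he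
  simp only [emTerm, emPrimitive, EMCubic.eval, EMCubic.eval', EMCubic.eval'', EMCubic.twisted]
  fun_prop (disch := assumption)

lemma continuousWithinAt_emSeries_twisted {e : ℂ} (he : e ≠ 1) {α : ℝ} (hα : 0 < α) (hα' : α ≤ 1)
    {s : ℂ} (hs : -2 < s.re) :
    ContinuousWithinAt (fun e ↦ emSeries (EMCubic.twisted e) e α s) (closedBall 0 1) e := by
  have hboundary : ContinuousWithinAt (fun e ↦ emBoundary (EMCubic.twisted e) s α)
      (closedBall 0 1) e := (continuousAt_emBoundary_twisted he s α).continuousWithinAt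
  have hsize : ∀ᶠ e' in 𝓝[closedBall 0 1] e,
      (EMCubic.twisted e').size ≤ (EMCubic.twisted e).size + 1 :=
    ((continuousAt_size_twisted he).eventually (ge_mem_nhds (lt_add_one _))).filter_mono
      nhdsWithin_le_nhds
  have hseries : ContinuousWithinAt (fun e ↦ ∑' m : ℕ, e ^ m * emTerm (EMCubic.twisted e) α s m)
      (closedBall 0 1) e := by
    refine tendsto_tsum_of_dominated_convergence
      (bound := fun m : ℕ ↦ ((EMCubic.twisted e).size + 1) * (‖s‖ + 2) ^ 4 * α ^ (-(s.re + 3)) *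
        ((m : ℝ) + 1) ^ (-(1 + (s.re + 2))))
      ((summable_natCast_add_one_rpow_neg (by linarith)).mul_left _)
      (fun m ↦ (((continuousAt_id.pow m).mul
        (continuousAt_emTerm_twisted he α s m)).continuousWithinAt)) ?_
    filter_upwards [self_mem_nhdsWithin, hsize] with e' he' hsize' m
    refine (norm_pow_mul_emTerm_le (mem_closedBall_zero_iff.mp he') hα hα' (δ := s.re + 2)
      (by linarith) (by linarith) le_rfl m).trans ?_
    gcongr
  simp only [emSeries, EMCubic.twisted, zero_mul, add_zero] at hboundary hseries ⊢
  exact ((hboundary.const_add _).const_mul _).add hseries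

lemma dampedFreq_ne_zero {lam ξ : ℝ} (hξ : ξ ≠ lam) (ε : ℝ) : dampedFreq lam ε ξ ≠ 0 := by
  rw [← norm_pos_iff]
  have := abs_pos.mpr (sub_ne_zero.mpr hξ)
  exact (by positivity : 0 < 2 * π * |ξ - lam|).trans_le
    (two_pi_mul_abs_sub_le_norm_dampedFreq lam ε ξ)

lemma continuous_one_div_dampedFreq_cpow {lam ξ : ℝ} (hξ : ξ ≠ lam) (a : ℂ) :
    Continuous fun ε : ℝ ↦ (1 / dampedFreq lam ε ξ) ^ a := by
  have hcont : Continuous fun ε : ℝ ↦ dampedFreq lam ε ξ := by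
    unfold dampedFreq
    fun_prop
  have hinv : Continuous fun ε : ℝ ↦ 1 / dampedFreq lam ε ξ :=
    continuous_const.div hcont (dampedFreq_ne_zero hξ)
  refine hinv.cpow continuous_const fun ε ↦ Or.inr ?_
  have him : (dampedFreq lam ε ξ).im = 2 * π * (ξ - lam) := by simp [dampedFreq]
  rw [one_div, Complex.inv_im, him]
  exact div_ne_zero (neg_ne_zero.mpr (mul_ne_zero (by positivity) (sub_ne_zero.mpr hξ)))
    (Complex.normSq_pos.mpr (dampedFreq_ne_zero hξ ε)).ne'

lemma continuous_tsum_one_div_dampedFreq_cpow {lam : ℝ} (hlam : ∀ n : ℤ, (n : ℝ) ≠ lam)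
    {a : ℂ} (ha : 1 < a.re) {c : ℤ → ℂ} (hc : ∀ n, ‖c n‖ ≤ 1) :
    Continuous fun ε : ℝ ↦ ∑' n : ℤ, (1 / dampedFreq lam ε n) ^ a * c n := by
  refine continuous_tsum
    (u := fun n : ℤ ↦ exp (π * |a.im|) * (1 / |(n : ℝ) - lam| ^ a.re))
    (fun n ↦ (continuous_one_div_dampedFreq_cpow (hlam n) a).mul continuous_const) ?_ fun n ε ↦ ?_
  · exact ((summable_one_div_int_add_rpow (-lam) a.re).mpr ha).mul_left _
  · rw [norm_mul, ← mul_one (exp _ * _)]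
    exact mul_le_mul (norm_one_div_dampedFreq_cpow_le (by linarith) ε (hlam n)) (hc n)
      (norm_nonneg _) (by positivity)

lemma intCast_ne_of_mem_Ioo {x : ℝ} (hx : x ∈ Ioo (0 : ℝ) 1) (n : ℤ) : (n : ℝ) ≠ x := by
  rintro rfl
  have h₀ : (0 : ℤ) < n := by exact_mod_cast hx.1
  have h₁ : n < (1 : ℤ) := by exact_mod_cast hx.2
  omega

lemma fourierChar_mul_eq_Gamma_mul_tsum {lam alp : ℝ} (hlam : lam ∈ Ioo (0 : ℝ) 1) (hα : 0 < alp)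
    (hα' : alp ≤ 1) {F : ℂ → ℂ} (hF : IsLerch lam alp F) {s : ℂ} (hs : -2 < s.re)
    (hs₁ : s.re ≤ -1) (hs₀ : 0 < s.im) :
    𝐞 (lam * alp) * F s =
      Complex.Gamma (1 - s) * ∑' n : ℤ, (1 / dampedFreq lam 0 n) ^ (1 - s) * (𝐞 alp : ℂ) ^ n := by
  have hone := fourierChar_ne_one hlam.1 hlam.2
  have hnorm (ε : ℝ) (hε : 0 < ε) := norm_fourierChar_mul_exp_neg_lt_one lam hε
  have hs₂ : s - 1 ≠ 0 := fun h ↦ by simpa [hs₀.ne'] using congrArg Complex.im h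
  have hpos : ∀ᶠ ε : ℝ in 𝓝[>] 0, 0 < ε := self_mem_nhdsWithin
  have hmult : Tendsto (fun ε : ℝ ↦ (𝐞 lam : ℂ) * Complex.exp (-ε)) (𝓝[>] 0)
      (𝓝[closedBall 0 1] (𝐞 lam)) := by
    refine tendsto_nhdsWithin_of_tendsto_nhds_of_eventually_within _ ?_
      (hpos.mono fun ε hε ↦ mem_closedBall_zero_iff.mpr (hnorm ε hε).le)
    have : Continuous fun ε : ℝ ↦ (𝐞 lam : ℂ) * Complex.exp (-ε) := by fun_prop
    simpa using (this.tendsto 0).mono_left nhdsWithin_le_nhds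
  have hphase : Tendsto (fun ε : ℝ ↦ Complex.exp ((2 * π * Complex.I * lam - ε) * alp)) (𝓝[>] 0)
      (𝓝 (𝐞 (lam * alp))) := by
    have : Continuous fun ε : ℝ ↦ Complex.exp ((2 * π * Complex.I * lam - ε) * alp) := by fun_prop
    convert (this.tendsto 0).mono_left nhdsWithin_le_nhds using 2
    rw [fourierChar_apply]
    push_cast
    ring_nf
  have hleft := (hphase.mul ((continuousWithinAt_emSeries_twisted hone hα hα' hs).tendsto.comp
    hmult)).div_const (s - 1)
  rw [← sub_one_mul_eq_emSeries hα hα' hF (EMCubic.isTwisted_twisted hone) hs hs₀, mul_left_comm,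
    mul_div_cancel_left₀ _ hs₂] at hleft
  have hright := ((continuous_tsum_one_div_dampedFreq_cpow (intCast_ne_of_mem_Ioo hlam)
    (a := 1 - s) (by simp; linarith) (c := fun n ↦ (𝐞 alp : ℂ) ^ n)
    (fun n ↦ by simp [Circle.norm_coe])).tendsto 0).mono_left (nhdsWithin_le_nhds (s := Ioi 0))
  refine tendsto_nhds_unique hleft ((hright.const_mul (Complex.Gamma (1 - s))).congr' ?_)
  filter_upwards [hpos] with ε hε
  have hne : (𝐞 lam : ℂ) * Complex.exp (-ε) ≠ 1 := fun h ↦ by simpa [h] using hnorm ε hε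
  rw [← exp_mul_tsum_damped_eq hs₁ hs.le lam hα hα' hε, Function.comp_apply,
    ← sub_one_mul_tsum_eq_emSeries_of_norm_lt_one (EMCubic.isTwisted_twisted hne) (hnorm ε hε)
      hα hα' hs]
  field_simp

end AbelLimit

/-- The archimedean factor in the asymptotic functional equation of the Lerch zeta-function in the
upper half-plane. -/
noncomputable def lerchFactor (s : ℂ) : ℂ :=
  Complex.Gamma (1 - s) * ((2 * π : ℝ) : ℂ) ^ (s - 1) * Complex.exp (-π * Complex.I * (s - 1) / 2)

lemma one_div_two_pi_mul_cpow {x : ℝ} (hx : 0 < x) {u : ℂ} (hu : u ≠ 0) (a : ℂ) :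
    (((1 / (2 * π * x) : ℝ) : ℂ) * u) ^ a = ((2 * π : ℝ) : ℂ) ^ (-a) * (x : ℂ) ^ (-a) * u ^ a := by
  have hx' : (x : ℂ) ≠ 0 := by exact_mod_cast hx.ne'
  have hpi : ((2 * π : ℝ) : ℂ) ≠ 0 := by exact_mod_cast two_pi_pos.ne'
  have hpos : 0 < 1 / (2 * π * x) := by positivity
  rw [Complex.cpow_def_of_ne_zero (mul_ne_zero (by exact_mod_cast hpos.ne') hu),
    Complex.cpow_def_of_ne_zero hx', Complex.cpow_def_of_ne_zero hpi,
    Complex.cpow_def_of_ne_zero hu, Complex.log_ofReal_mul hpos hu, ← Complex.exp_add,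
    ← Complex.exp_add, ← Complex.ofReal_log two_pi_pos.le, ← Complex.ofReal_log hx.le, one_div,
    log_inv, log_mul two_pi_pos.ne' hx.ne']
  push_cast
  ring_nf

lemma one_div_dampedFreq_zero_cpow_of_lt {lam ξ : ℝ} (h : ξ < lam) (a : ℂ) :
    (1 / dampedFreq lam 0 ξ) ^ a = ((2 * π : ℝ) : ℂ) ^ (-a) * ((lam - ξ : ℝ) : ℂ) ^ (-a) *
      Complex.exp (π * Complex.I * a / 2) := by
  have hne : ((lam - ξ : ℝ) : ℂ) ≠ 0 := by exact_mod_cast (sub_pos.mpr h).ne'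
  have hI : Complex.I ^ a = Complex.exp (π * Complex.I * a / 2) := by
    rw [Complex.cpow_def_of_ne_zero Complex.I_ne_zero, Complex.log_I]
    ring_nf
  rw [← hI, ← one_div_two_pi_mul_cpow (sub_pos.mpr h) Complex.I_ne_zero]
  congr 1
  have : (ξ - lam : ℂ) ≠ 0 := by
    rw [← neg_ne_zero, neg_sub]
    exact_mod_cast hne
  push_cast [dampedFreq] at hne ⊢
  rw [zero_add]
  field_simp
  rw [Complex.I_sq]
  ring

lemma one_div_dampedFreq_zero_cpow_of_gt {lam ξ : ℝ} (h : lam < ξ) (a : ℂ) :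
    (1 / dampedFreq lam 0 ξ) ^ a = ((2 * π : ℝ) : ℂ) ^ (-a) * ((ξ - lam : ℝ) : ℂ) ^ (-a) *
      Complex.exp (-π * Complex.I * a / 2) := by
  have hne : ((ξ - lam : ℝ) : ℂ) ≠ 0 := by exact_mod_cast (sub_pos.mpr h).ne'
  have hI₀ : -Complex.I ≠ 0 := neg_ne_zero.mpr Complex.I_ne_zero
  have hI : (-Complex.I) ^ a = Complex.exp (-π * Complex.I * a / 2) := by
    rw [Complex.cpow_def_of_ne_zero hI₀, Complex.log_neg_I]
    ring_nf
  rw [← hI, ← one_div_two_pi_mul_cpow (sub_pos.mpr h) hI₀]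
  congr 1
  push_cast [dampedFreq] at hne ⊢
  rw [zero_add]
  field_simp
  rw [Complex.I_sq, neg_neg]

lemma fourierChar_neg (x : ℝ) : (𝐞 (-x) : ℂ) = (𝐞 x : ℂ)⁻¹ := by
  rw [AddChar.map_neg_eq_inv, Circle.coe_inv]

lemma summable_lerchSeries_terms (lam : ℝ) {alp : ℝ} (hα : 0 < alp) (hα' : alp ≤ 1) {s : ℂ}
    (hs : 1 < s.re) :
    Summable fun m : ℕ ↦ (𝐞 lam : ℂ) ^ m * ((m + alp : ℝ) : ℂ) ^ (-s) :=
  summable_pow_mul_natCast_add_cpow_neg (Circle.norm_coe _).le hα hα' hs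

lemma exp_neg_pi_mul_I_half_eq (a : ℂ) : Complex.exp (-π * Complex.I * a / 2) =
    Complex.exp (π * Complex.I * a / 2) * Complex.exp (-π * Complex.I * a) := by
  rw [← Complex.exp_add]
  ring_nf

lemma lerchFactor_eq (s : ℂ) : lerchFactor s = Complex.Gamma (1 - s) *
    ((2 * π : ℝ) : ℂ) ^ (-(1 - s)) * Complex.exp (π * Complex.I * (1 - s) / 2) := by
  rw [lerchFactor, neg_sub]
  ring_nf

lemma functional_equation_of_lt_one {lam alp : ℝ} (hlam : lam ∈ Ioo (0 : ℝ) 1) (hα : 0 < alp)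
    (hα' : alp ≤ 1) {F : ℂ → ℂ} (hF : IsLerch lam alp F) {s : ℂ} (hs : -2 < s.re)
    (hs₁ : s.re ≤ -1) (hs₀ : 0 < s.im) :
    𝐞 (lam * alp) * F s = lerchFactor s * (lerchSeries (-alp) lam (1 - s) +
      Complex.exp (-π * Complex.I * (1 - s)) *
        (𝐞 alp * lerchSeries alp (1 - lam) (1 - s))) := by
  have hre : 1 < (1 - s).re := by simp; linarith
  set K : ℂ := ((2 * π : ℝ) : ℂ) ^ (-(1 - s)) * Complex.exp (π * Complex.I * (1 - s) / 2) with hK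
  have hnonneg (m : ℕ) : (1 / dampedFreq lam 0 ((-(m : ℤ) : ℤ) : ℝ)) ^ (1 - s) *
      (𝐞 alp : ℂ) ^ (-(m : ℤ)) = K * ((𝐞 (-alp) : ℂ) ^ m * ((m + lam : ℝ) : ℂ) ^ (-(1 - s))) := by
    have hlt : ((-(m : ℤ) : ℤ) : ℝ) < lam := by
      push_cast
      linarith [hlam.1, Nat.cast_nonneg (α := ℝ) m]
    have hsub : lam - ((-(m : ℤ) : ℤ) : ℝ) = m + lam := by
      push_cast
      ring
    rw [one_div_dampedFreq_zero_cpow_of_lt hlt, fourierChar_neg, zpow_neg, zpow_natCast, inv_pow,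
      hsub, hK]
    ring
  have hneg (m : ℕ) : (1 / dampedFreq lam 0 ((-(-((m : ℤ) + 1)) : ℤ) : ℝ)) ^ (1 - s) *
      (𝐞 alp : ℂ) ^ (-(-((m : ℤ) + 1))) = K * Complex.exp (-π * Complex.I * (1 - s)) * 𝐞 alp *
        ((𝐞 alp : ℂ) ^ m * ((m + (1 - lam) : ℝ) : ℂ) ^ (-(1 - s))) := by
    have hlt : lam < ((-(-((m : ℤ) + 1)) : ℤ) : ℝ) := by
      push_cast
      linarith [hlam.2, Nat.cast_nonneg (α := ℝ) m]
    have hsub : ((-(-((m : ℤ) + 1)) : ℤ) : ℝ) - lam = m + (1 - lam) := by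
      push_cast
      ring
    rw [one_div_dampedFreq_zero_cpow_of_gt hlt, exp_neg_pi_mul_I_half_eq, hsub, neg_neg,
      ← Nat.cast_add_one, zpow_natCast, pow_succ, hK]
    ring
  rw [fourierChar_mul_eq_Gamma_mul_tsum hlam hα hα' hF hs hs₁ hs₀, ← (Equiv.neg ℤ).tsum_eq]
  simp only [Equiv.neg_apply]
  rw [tsum_of_nat_of_neg_add_one
    (by simpa only [hnonneg] using
      (summable_lerchSeries_terms (-alp) hlam.1 hlam.2.le hre).mul_left K)
    (by simpa only [hneg] using (summable_lerchSeries_terms alp (sub_pos.mpr hlam.2)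
      (by linarith [hlam.1]) hre).mul_left _)]
  simp only [hnonneg, hneg, tsum_mul_left, lerchSeries_eq_tsum, lerchFactor_eq]
  rw [hK]
  ring

lemma isLerch_hurwitzZeta {alp : ℝ} (hα : 0 ≤ alp) (hα' : alp ≤ 1) :
    IsLerch 1 alp (HurwitzZeta.hurwitzZeta (alp : UnitAddCircle)) := by
  refine ⟨fun s hs ↦ HurwitzZeta.differentiableAt_hurwitzZeta _ hs, fun s hs ↦ ?_⟩
  rw [← (HurwitzZeta.hasSum_hurwitzZeta_of_one_lt_re ⟨hα, hα'⟩ hs).tsum_eq, lerchSeries]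
  congr 1 with m
  congr 1
  rw [← fourierChar_pow, fourierChar_one, one_pow]

lemma _root_.IsLerch.eq {lam alp : ℝ} {F G : ℂ → ℂ} (hF : IsLerch lam alp F)
    (hG : IsLerch lam alp G) {s : ℂ} (hs : s ≠ 1) : F s = G s := by
  have hdiff {H : ℂ → ℂ} (hH : IsLerch lam alp H) : AnalyticOnNhd ℂ H {1}ᶜ :=
    DifferentiableOn.analyticOnNhd (fun z hz ↦ (hH.1 z hz).differentiableWithinAt)
      isOpen_compl_singleton
  refine (hdiff hF).eqOn_of_preconnected_of_eventuallyEq (z₀ := 2) (hdiff hG)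
    (isConnected_compl_singleton_of_one_lt_rank (by simp) 1).isPreconnected (by simp) ?_ hs
  filter_upwards [(isOpen_lt continuous_const Complex.continuous_re).mem_nhds
    (by simp : (2 : ℂ) ∈ {s : ℂ | 1 < s.re})] with z hz
  rw [hF.2 z hz, hG.2 z hz]

lemma expZeta_eq_lerchSeries (x : ℝ) {s : ℂ} (hs : 1 < s.re) :
    HurwitzZeta.expZeta x s = 𝐞 x * lerchSeries x 1 s := by
  have hs₀ : s ≠ 0 := by
    rintro rfl
    norm_num at hs
  have hsum := ((hasSum_nat_add_iff' 1).mpr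
    (HurwitzZeta.hasSum_expZeta_of_one_lt_re x hs)).tsum_eq
  simp only [Finset.range_one, Finset.sum_singleton, Nat.cast_zero, Complex.zero_cpow hs₀,
    div_zero, sub_zero] at hsum
  rw [← hsum, lerchSeries_eq_tsum, ← tsum_mul_left]
  congr 1 with m
  rw [← mul_assoc, ← pow_succ', fourierChar_pow, Complex.cpow_neg, div_eq_mul_inv]
  push_cast
  rfl

lemma functional_equation_one {alp : ℝ} (hα : 0 ≤ alp) (hα' : alp ≤ 1) {F : ℂ → ℂ}
    (hF : IsLerch 1 alp F) {s : ℂ} (hs : s.re < 0) :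
    𝐞 alp * F s = lerchFactor s * (lerchSeries (-alp) 1 (1 - s) +
      Complex.exp (-π * Complex.I * (1 - s)) * (𝐞 alp ^ 2 * lerchSeries alp 1 (1 - s))) := by
  have hre : 1 < (1 - s).re := by
    rw [Complex.sub_re, Complex.one_re]
    linarith
  have hne : s ≠ 1 := by
    rintro rfl
    norm_num at hs
  have hs₀ : 1 - s ≠ 1 := by
    intro h
    simp [h] at hre
  have hFE := HurwitzZeta.hurwitzZeta_one_sub (alp : UnitAddCircle) (s := 1 - s)
    (fun n h ↦ by
      have : (0 : ℝ) ≤ n := Nat.cast_nonneg n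
      simp only [h, Complex.neg_re, Complex.natCast_re] at hre
      linarith)
    (Or.inr hs₀)
  rw [sub_sub_cancel, ← hF.eq (isLerch_hurwitzZeta hα hα') hne, ← QuotientAddGroup.mk_neg,
    expZeta_eq_lerchSeries _ hre, expZeta_eq_lerchSeries _ hre, fourierChar_neg,
    exp_neg_pi_mul_I_half_eq] at hFE
  rw [hFE, lerchFactor_eq]
  have := Circle.coe_ne_zero (𝐞 alp)
  push_cast
  field_simp
  ring

lemma norm_lerchSeries_le (lam : ℝ) {alp : ℝ} (hα : 0 < alp) (hα' : alp ≤ 1) {s : ℂ} {b : ℝ}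
    (hs : 2 ≤ s.re) (hs' : s.re ≤ b) :
    ‖lerchSeries lam alp s‖ ≤ alp ^ (-b) * ∑' m : ℕ, ((m : ℝ) + 1) ^ (-2 : ℝ) := by
  rw [lerchSeries_eq_tsum, ← tsum_mul_left]
  refine tsum_of_norm_bounded
    ((summable_natCast_add_one_rpow_neg (by norm_num)).mul_left _).hasSum fun m ↦ ?_
  rw [norm_mul, norm_pow, Circle.norm_coe, one_pow, one_mul,
    Complex.norm_cpow_eq_rpow_re_of_pos (by positivity), Complex.neg_re]
  exact natCast_add_rpow_neg_le hα hα' zero_le_two hs hs' m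

theorem exists_functional_equation {lam alp : ℝ} (hlam : 0 < lam) (hlam' : lam ≤ 1) (hα : 0 < alp)
    (hα' : alp ≤ 1) {F : ℂ → ℂ} (hF : IsLerch lam alp F) :
    ∃ C, 0 ≤ C ∧ ∀ s : ℂ, -2 < s.re → s.re ≤ -1 → 0 < s.im → ∃ η : ℂ,
      ‖η‖ ≤ C * exp (-π * s.im) ∧
        𝐞 (lam * alp) * F s = lerchFactor s * (lerchSeries (-alp) lam (1 - s) + η) := by
  obtain ⟨a, ha, ha', u, hu, hFE⟩ : ∃ a : ℝ, 0 < a ∧ a ≤ 1 ∧ ∃ u : ℂ, ‖u‖ = 1 ∧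
      ∀ s : ℂ, -2 < s.re → s.re ≤ -1 → 0 < s.im →
        𝐞 (lam * alp) * F s = lerchFactor s * (lerchSeries (-alp) lam (1 - s) +
          Complex.exp (-π * Complex.I * (1 - s)) * (u * lerchSeries alp a (1 - s))) := by
    rcases hlam'.lt_or_eq with hlt | rfl
    · exact ⟨1 - lam, by linarith, by linarith, 𝐞 alp, Circle.norm_coe _,
        fun s ↦ functional_equation_of_lt_one ⟨hlam, hlt⟩ hα hα' hF⟩
    · refine ⟨1, one_pos, le_rfl, 𝐞 alp ^ 2, by simp [Circle.norm_coe], fun s _ hs _ ↦ ?_⟩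
      rw [one_mul]
      exact functional_equation_one hα.le hα' hF (by linarith)
  refine ⟨a ^ (-3 : ℝ) * ∑' m : ℕ, ((m : ℝ) + 1) ^ (-2 : ℝ), by positivity,
    fun s hs hs₁ hs₀ ↦ ⟨_, ?_, hFE s hs hs₁ hs₀⟩⟩
  have hexp : ‖Complex.exp (-π * Complex.I * (1 - s))‖ = exp (-π * s.im) := by
    rw [Complex.norm_exp]
    simp
  rw [norm_mul, norm_mul, hu, one_mul, hexp, mul_comm]
  gcongr
  exact norm_lerchSeries_le alp ha ha' (by simp; linarith) (by simp; linarith)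

/-! ### The Dirichlet series to the right of its zeros -/

lemma mul_add_one_rpow_neg_lt_sub {a x : ℝ} (ha : 0 < a) (hx : 0 < x) :
    a * (x + 1) ^ (-(1 + a)) < x ^ (-a) - (x + 1) ^ (-a) := by
  have hx₁ : 0 < x + 1 := by linarith
  have hlog : log (x / (x + 1)) < -(1 / (x + 1)) := by
    have := log_lt_sub_one_of_pos (div_pos hx hx₁) ((div_lt_one hx₁).mpr (lt_add_one x)).ne
    have : x / (x + 1) - 1 = -(1 / (x + 1)) := by
      field_simp
      ring
    linarith
  have hbernoulli : a / (x + 1) < (x / (x + 1)) ^ (-a) - 1 := by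
    rw [rpow_def_of_pos (div_pos hx hx₁), div_eq_mul_one_div]
    nlinarith [add_one_le_exp (log (x / (x + 1)) * -a)]
  calc a * (x + 1) ^ (-(1 + a)) = (x + 1) ^ (-a) * (a / (x + 1)) := by
        rw [show -(1 + a) = -a - 1 by ring, rpow_sub_one hx₁.ne']
        ring
    _ < (x + 1) ^ (-a) * ((x / (x + 1)) ^ (-a) - 1) := by gcongr
    _ = x ^ (-a) - (x + 1) ^ (-a) := by
      rw [div_rpow hx.le hx₁.le]
      field_simp

lemma hasSum_rpow_neg_sub_rpow_neg {a : ℝ} (ha : 0 < a) :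
    HasSum (fun m : ℕ ↦ ((m : ℝ) + a) ^ (-a) - ((m : ℝ) + a + 1) ^ (-a)) (a ^ (-a)) := by
  refine (hasSum_iff_tendsto_nat_of_nonneg (fun m ↦ ?_) _).mpr ?_
  · have := mul_add_one_rpow_neg_lt_sub ha (x := (m : ℝ) + a) (by positivity)
    exact this.le.trans' (by positivity)
  have hpartial (n : ℕ) : ∑ m ∈ Finset.range n, (((m : ℝ) + a) ^ (-a) - ((m : ℝ) + a + 1) ^ (-a)) =
      a ^ (-a) - ((n : ℝ) + a) ^ (-a) := by
    simpa [add_right_comm] using Finset.sum_range_sub' (fun m : ℕ ↦ ((m : ℝ) + a) ^ (-a)) n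
  have hlim : Tendsto (fun n : ℕ ↦ ((n : ℝ) + a) ^ (-a)) atTop (𝓝 0) :=
    (tendsto_rpow_neg_atTop ha).comp
      (tendsto_atTop_add_const_right _ _ tendsto_natCast_atTop_atTop)
  simpa only [hpartial, sub_zero] using hlim.const_sub (a ^ (-a))

/-- The sum `∑ (α / (m + α)) ^ (1 + α)` over `1 ≤ m`, which majorizes the normalized Lerch series
without its leading term on the half-plane `1 + α ≤ re s`. -/
noncomputable def lerchTail (α : ℝ) : ℝ := ∑' m : ℕ, (α / (m + α + 1)) ^ (1 + α)

section Tail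

variable {α : ℝ} (hα : 0 < α)
include hα

lemma div_rpow_one_add_eq (m : ℕ) : (α / (m + α + 1)) ^ (1 + α) =
    α ^ α * (α * ((m : ℝ) + α + 1) ^ (-(1 + α))) := by
  rw [div_rpow hα.le (by positivity), rpow_neg (by positivity), rpow_add hα, rpow_one]
  ring

lemma div_rpow_one_add_lt (m : ℕ) : (α / (m + α + 1)) ^ (1 + α) <
    α ^ α * (((m : ℝ) + α) ^ (-α) - ((m : ℝ) + α + 1) ^ (-α)) := by
  rw [div_rpow_one_add_eq hα]
  exact mul_lt_mul_of_pos_left (mul_add_one_rpow_neg_lt_sub hα (by positivity)) (by positivity)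

lemma summable_lerchTail : Summable fun m : ℕ ↦ (α / (m + α + 1)) ^ (1 + α) :=
  .of_nonneg_of_le (fun m ↦ by positivity) (fun m ↦ (div_rpow_one_add_lt hα m).le)
    ((hasSum_rpow_neg_sub_rpow_neg hα).summable.mul_left _)

lemma lerchTail_lt_one : lerchTail α < 1 := by
  have hsum := (hasSum_rpow_neg_sub_rpow_neg hα).mul_left (α ^ α)
  calc lerchTail α < ∑' m : ℕ, α ^ α * (((m : ℝ) + α) ^ (-α) - ((m : ℝ) + α + 1) ^ (-α)) :=
        (summable_lerchTail hα).tsum_lt_tsum (i := 0) (fun m ↦ (div_rpow_one_add_lt hα m).le)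
          (div_rpow_one_add_lt hα 0) hsum.summable
    _ = 1 := by rw [hsum.tsum_eq, ← rpow_add hα, add_neg_cancel, rpow_zero]

lemma lerchTail_nonneg : 0 ≤ lerchTail α := tsum_nonneg fun m ↦ by positivity

end Tail

/-- The Lerch series normalized to have leading term `1`. -/
noncomputable def normalizedLerch (lam α : ℝ) (s : ℂ) : ℂ := (α : ℂ) ^ s * lerchSeries lam α s

section Normalized

variable {α : ℝ} (hα : 0 < α)
include hα

lemma lerchSeries_eq_cpow_mul (lam : ℝ) (s : ℂ) :
    lerchSeries lam α s = (α : ℂ) ^ (-s) * normalizedLerch lam α s := by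
  have hα₀ : (α : ℂ) ≠ 0 := by exact_mod_cast hα.ne'
  rw [normalizedLerch, ← mul_assoc, ← Complex.cpow_add _ _ hα₀, neg_add_cancel, Complex.cpow_zero,
    one_mul]

variable (hα' : α ≤ 1)
include hα'

lemma normalizedLerch_sub_one (lam : ℝ) {s : ℂ} (hs : 1 < s.re) : normalizedLerch lam α s - 1 =
    ∑' m : ℕ, (α : ℂ) ^ s * ((𝐞 lam : ℂ) ^ (m + 1) * (((m + 1 : ℕ) + α : ℝ) : ℂ) ^ (-s)) := by
  have hα₀ : (α : ℂ) ≠ 0 := by exact_mod_cast hα.ne'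
  have hlead : (α : ℂ) ^ s * ((𝐞 lam : ℂ) ^ 0 * (((0 : ℕ) + α : ℝ) : ℂ) ^ (-s)) = 1 := by
    rw [pow_zero, one_mul, Nat.cast_zero, zero_add, ← Complex.cpow_add _ _ hα₀, add_neg_cancel,
      Complex.cpow_zero]
  rw [normalizedLerch, lerchSeries_eq_tsum,
    (summable_lerchSeries_terms lam hα hα' hs).tsum_eq_zero_add, mul_add, hlead, tsum_mul_left,
    add_sub_cancel_left]

variable {s : ℂ} (hs : 1 + α ≤ s.re)
include hs

lemma norm_normalizedLerch_sub_one_le (lam : ℝ) :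
    ‖normalizedLerch lam α s - 1‖ ≤ lerchTail α * (1 / 2) ^ (s.re - (1 + α)) := by
  rw [normalizedLerch_sub_one hα hα' lam (by linarith), lerchTail, ← tsum_mul_right]
  refine tsum_of_norm_bounded ((summable_lerchTail hα).mul_right _).hasSum fun m ↦ ?_
  have hpos : (0 : ℝ) < (m + 1 : ℕ) + α := by positivity
  have hratio : α / ((m : ℝ) + α + 1) ≤ 1 / 2 := by
    rw [div_le_div_iff₀ (by positivity) two_pos]
    linarith [Nat.cast_nonneg (α := ℝ) m]
  calc ‖(α : ℂ) ^ s * ((𝐞 lam : ℂ) ^ (m + 1) * (((m + 1 : ℕ) + α : ℝ) : ℂ) ^ (-s))‖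
      = (α / ((m : ℝ) + α + 1)) ^ s.re := by
        rw [norm_mul, norm_mul, norm_pow, Circle.norm_coe, one_pow, one_mul,
          Complex.norm_cpow_eq_rpow_re_of_pos hα, Complex.norm_cpow_eq_rpow_re_of_pos hpos,
          Complex.neg_re, rpow_neg hpos.le, ← div_eq_mul_inv, ← div_rpow hα.le hpos.le,
          Nat.cast_succ, add_right_comm]
    _ = (α / ((m : ℝ) + α + 1)) ^ (1 + α) * (α / ((m : ℝ) + α + 1)) ^ (s.re - (1 + α)) := by
        rw [← rpow_add (by positivity), add_sub_cancel]
    _ ≤ _ := by gcongr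

lemma norm_normalizedLerch_sub_one_le_lerchTail (lam : ℝ) :
    ‖normalizedLerch lam α s - 1‖ ≤ lerchTail α :=
  (norm_normalizedLerch_sub_one_le hα hα' hs lam).trans
    (mul_le_of_le_one_right (lerchTail_nonneg hα)
      (rpow_le_one (by norm_num) (by norm_num) (by linarith)))

lemma one_sub_lerchTail_le_norm (lam : ℝ) : 1 - lerchTail α ≤ ‖normalizedLerch lam α s‖ := by
  have hsub := norm_normalizedLerch_sub_one_le_lerchTail hα hα' hs lam
  have htri := norm_le_norm_add_norm_sub' (1 : ℂ) (normalizedLerch lam α s)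
  rw [norm_one, norm_sub_rev] at htri
  linarith

lemma normalizedLerch_ne_zero (lam : ℝ) : normalizedLerch lam α s ≠ 0 :=
  norm_pos_iff.mp ((sub_pos.mpr (lerchTail_lt_one hα)).trans_le
    (one_sub_lerchTail_le_norm hα hα' hs lam))

lemma normalizedLerch_mem_slitPlane (lam : ℝ) : normalizedLerch lam α s ∈ Complex.slitPlane := by
  simpa using Complex.mem_slitPlane_of_norm_lt_one
    ((norm_normalizedLerch_sub_one_le_lerchTail hα hα' hs lam).trans_lt (lerchTail_lt_one hα))

lemma one_sub_lerchTail_le_norm_lerchSeries (lam : ℝ) :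
    1 - lerchTail α ≤ ‖lerchSeries lam α s‖ := by
  rw [lerchSeries_eq_cpow_mul hα, norm_mul, Complex.norm_cpow_eq_rpow_re_of_pos hα, Complex.neg_re]
  exact (one_sub_lerchTail_le_norm hα hα' hs lam).trans (le_mul_of_one_le_left (norm_nonneg _)
    (one_le_rpow_of_pos_of_le_one_of_nonpos hα hα' (by linarith)))

lemma log_norm_lerchSeries (lam : ℝ) :
    log ‖lerchSeries lam α s‖ = -s.re * log α + log ‖normalizedLerch lam α s‖ := by
  rw [lerchSeries_eq_cpow_mul hα, norm_mul, Complex.norm_cpow_eq_rpow_re_of_pos hα, log_mul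
    (by positivity) (norm_ne_zero_iff.mpr (normalizedLerch_ne_zero hα hα' hs lam)), log_rpow hα,
    Complex.neg_re]

end Normalized

lemma differentiableAt_lerchSeries (lam : ℝ) {α : ℝ} (hα : 0 < α) (hα' : α ≤ 1) {s : ℂ}
    (hs : 1 < s.re) : DifferentiableAt ℂ (lerchSeries lam α) s := by
  obtain ⟨P, hP⟩ := exists_isTwisted (𝐞 lam)
  have he : ‖(𝐞 lam : ℂ)‖ ≤ 1 := (Circle.norm_coe _).le
  have hne {z : ℂ} (hz : 1 < z.re) : z - 1 ≠ 0 := sub_ne_zero.mpr fun h ↦ by simp [h] at hz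
  have hEM : DifferentiableAt ℂ (emSeries P (𝐞 lam) α) s :=
    (differentiableOn_emSeries he hα hα').differentiableAt
      ((isOpen_lt continuous_const Complex.continuous_re).mem_nhds
        (by linarith : (-2 : ℝ) < s.re))
  refine (hEM.div (differentiableAt_id.sub_const 1) (hne hs)).congr_of_eventuallyEq ?_
  filter_upwards [(isOpen_lt continuous_const Complex.continuous_re).mem_nhds hs] with z hz
  rw [lerchSeries_eq_tsum, Pi.div_apply,
    ← sub_one_mul_tsum_eq_emSeries_of_one_lt_re hP he hα hα' hz, id,
    mul_div_cancel_left₀ _ (hne hz)]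

lemma differentiableAt_normalizedLerch (lam : ℝ) {α : ℝ} (hα : 0 < α) (hα' : α ≤ 1) {s : ℂ}
    (hs : 1 < s.re) : DifferentiableAt ℂ (normalizedLerch lam α) s :=
  (differentiableAt_id.const_cpow (Or.inl (by exact_mod_cast hα.ne'))).mul
    (differentiableAt_lerchSeries lam hα hα' hs)

section VerticalIntegral

variable {h : ℂ → ℂ} {x₀ C c : ℝ}

lemma norm_integral_horizontal_le (hC : 0 ≤ C) (hc : 0 < c)
    (hb : ∀ s : ℂ, x₀ ≤ s.re → ‖h s‖ ≤ C * exp (-c * (s.re - x₀))) {x X : ℝ} (hx : x₀ ≤ x)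
    (hX : x ≤ X) (y : ℝ) : ‖∫ t in x..X, h (t + y * Complex.I)‖ ≤ C / c := by
  have hderiv (t : ℝ) : HasDerivAt (fun t ↦ -(C / c) * exp (-c * (t - x₀)))
      (C * exp (-c * (t - x₀))) t := by
    have hlin : HasDerivAt (fun t : ℝ ↦ -c * (t - x₀)) (-c * 1) t :=
      ((hasDerivAt_id t).sub_const x₀).const_mul _
    exact (hlin.exp.const_mul (-(C / c))).congr_deriv (by field_simp)
  have hint : IntervalIntegrable (fun t : ℝ ↦ C * exp (-c * (t - x₀))) volume x X :=
    Continuous.intervalIntegrable (by fun_prop) _ _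
  refine (intervalIntegral.norm_integral_le_of_norm_le hX (.of_forall fun t ht ↦ by
    simpa using hb (t + y * Complex.I) (by simp; linarith [ht.1])) hint).trans ?_
  rw [intervalIntegral.integral_eq_sub_of_hasDerivAt (fun t _ ↦ hderiv t) hint]
  have hle : C / c * exp (-c * (x - x₀)) ≤ C / c :=
    mul_le_of_le_one_right (by positivity) (exp_le_one_iff.mpr (by nlinarith))
  have : 0 ≤ C / c * exp (-c * (X - x₀)) := by positivity
  linarith

lemma norm_integral_vertical_le (hC : 0 ≤ C) (hc : 0 < c)
    (hd : ∀ s : ℂ, x₀ ≤ s.re → DifferentiableAt ℂ h s)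
    (hb : ∀ s : ℂ, x₀ ≤ s.re → ‖h s‖ ≤ C * exp (-c * (s.re - x₀))) {x : ℝ} (hx : x₀ ≤ x)
    (A B : ℝ) : ‖∫ y in A..B, h (x + y * Complex.I)‖ ≤ 2 * (C / c) := by
  have hshift (X : ℝ) (hX : x ≤ X) : ‖∫ y in A..B, h (x + y * Complex.I)‖ ≤
      2 * (C / c) + C * exp (-c * (X - x₀)) * |B - A| := by
    have hrect := Complex.integral_boundary_rect_eq_zero_of_differentiableOn h
      (x + A * Complex.I) (X + B * Complex.I) fun z hz ↦ by
        have hz' : z.re ∈ uIcc x X := by simpa using hz.1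
        rw [uIcc_of_le hX] at hz'
        exact (hd z (hx.trans hz'.1)).differentiableWithinAt
    simp only [Complex.add_re, Complex.add_im, Complex.mul_re, Complex.mul_im, Complex.ofReal_re,
      Complex.ofReal_im, Complex.I_re, Complex.I_im, mul_zero, mul_one, sub_zero, add_zero,
      zero_add] at hrect
    have hfar : ‖∫ y in A..B, h (X + y * Complex.I)‖ ≤ C * exp (-c * (X - x₀)) * |B - A| :=
      intervalIntegral.norm_integral_le_of_norm_le_const fun y _ ↦ by
        simpa using hb (X + y * Complex.I) (by simp; linarith)
    have hsplit : Complex.I • ∫ y in A..B, h (x + y * Complex.I) =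
        (∫ t in x..X, h (t + A * Complex.I)) + -(∫ t in x..X, h (t + B * Complex.I)) +
          Complex.I • ∫ y in A..B, h (X + y * Complex.I) := by
      linear_combination -hrect
    calc ‖∫ y in A..B, h (x + y * Complex.I)‖
        = ‖Complex.I • ∫ y in A..B, h (x + y * Complex.I)‖ := by simp
      _ ≤ C / c + C / c + C * exp (-c * (X - x₀)) * |B - A| := by
        rw [hsplit]
        refine norm_add₃_le.trans (add_le_add (add_le_add ?_ ?_) ?_)
        · exact norm_integral_horizontal_le hC hc hb hx hX A
        · rw [norm_neg]
          exact norm_integral_horizontal_le hC hc hb hx hX B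
        · simpa using hfar
      _ = _ := by ring
  have hlim : Tendsto (fun X : ℝ ↦ 2 * (C / c) + C * exp (-c * (X - x₀)) * |B - A|) atTop
      (𝓝 (2 * (C / c) + C * 0 * |B - A|)) := by
    have hexponent := (tendsto_atTop_add_const_right atTop (-x₀)
      tendsto_id).const_mul_atTop_of_neg (neg_lt_zero.mpr hc)
    exact (((tendsto_exp_atBot.comp hexponent).const_mul C).mul_const _).const_add _
  simpa using ge_of_tendsto hlim (eventually_atTop.mpr ⟨x, hshift⟩)

end VerticalIntegral

lemma norm_log_one_add_le_mul {z : ℂ} {q : ℝ} (hz : ‖z‖ ≤ q) (hq : q < 1) :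
    ‖Complex.log (1 + z)‖ ≤ (1 + (1 - q)⁻¹) * ‖z‖ := by
  have hinv : 0 < (1 - ‖z‖)⁻¹ := inv_pos.mpr (by linarith)
  have hinv_le : (1 - ‖z‖)⁻¹ ≤ (1 - q)⁻¹ := inv_anti₀ (by linarith) (by linarith)
  have hsq : ‖z‖ ^ 2 ≤ ‖z‖ := by nlinarith [norm_nonneg z]
  nlinarith [Complex.norm_log_one_add_le (hz.trans_lt hq),
    mul_le_mul hsq hinv_le hinv.le (norm_nonneg z)]

lemma abs_log_norm_add_sub_log_norm_le {z w : ℂ} (hz : z ≠ 0) (hw : ‖w‖ ≤ ‖z‖ / 2) :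
    |log ‖z + w‖ - log ‖z‖| ≤ 3 * (‖w‖ / ‖z‖) := by
  have hz' : 0 < ‖z‖ := norm_pos_iff.mpr hz
  have hquot : ‖w / z‖ ≤ 1 / 2 := by
    rw [norm_div, div_le_iff₀ hz']
    linarith
  have hne : 1 + w / z ≠ 0 := fun h ↦ by
    have hneg : w / z = -1 := by linear_combination h
    rw [hneg] at hquot
    norm_num at hquot
  have hfactor : log ‖z + w‖ - log ‖z‖ = (Complex.log (1 + w / z)).re := by
    have hmul : z + w = z * (1 + w / z) := by field_simp
    rw [hmul, norm_mul, log_mul hz'.ne' (norm_ne_zero_iff.mpr hne), add_sub_cancel_left,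
      Complex.log_re]
  rw [hfactor, ← norm_div]
  refine (Complex.abs_re_le_norm _).trans ((norm_log_one_add_le_mul hquot (by norm_num)).trans ?_)
  norm_num

lemma one_half_rpow_le_exp {t : ℝ} (ht : 0 ≤ t) : (1 / 2 : ℝ) ^ t ≤ exp (-(1 / 2) * t) := by
  rw [rpow_def_of_pos (by norm_num)]
  gcongr
  linarith [log_le_sub_one_of_pos (show (0 : ℝ) < 1 / 2 by norm_num)]

theorem exists_abs_integral_log_norm_normalizedLerch_le (lam : ℝ) {α : ℝ} (hα : 0 < α)
    (hα' : α ≤ 1) : ∃ C, 0 ≤ C ∧ ∀ x : ℝ, 1 + α ≤ x → ∀ A B : ℝ,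
      |∫ y in A..B, log ‖normalizedLerch lam α (x + y * Complex.I)‖| ≤ C := by
  have htail : 0 < 1 - lerchTail α := sub_pos.mpr (lerchTail_lt_one hα)
  have htail₀ := lerchTail_nonneg hα
  set D : ℝ := (1 + (1 - lerchTail α)⁻¹) * lerchTail α with hD
  have hD₀ : 0 ≤ D := by positivity
  have hdiff (s : ℂ) (hs : 1 + α ≤ s.re) :
      DifferentiableAt ℂ (fun s ↦ Complex.log (normalizedLerch lam α s)) s :=
    (differentiableAt_normalizedLerch lam hα hα' (by linarith)).clog
      (normalizedLerch_mem_slitPlane hα hα' hs lam)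
  have hdecay (s : ℂ) (hs : 1 + α ≤ s.re) :
      ‖Complex.log (normalizedLerch lam α s)‖ ≤ D * exp (-(1 / 2) * (s.re - (1 + α))) := by
    have hlog := norm_log_one_add_le_mul
      (norm_normalizedLerch_sub_one_le_lerchTail hα hα' hs lam) (lerchTail_lt_one hα)
    rw [add_sub_cancel] at hlog
    rw [hD, mul_assoc]
    refine hlog.trans (mul_le_mul_of_nonneg_left ?_ (by positivity))
    refine (norm_normalizedLerch_sub_one_le hα hα' hs lam).trans ?_
    gcongr
    exact one_half_rpow_le_exp (by linarith)
  refine ⟨2 * (D / (1 / 2)), by positivity, fun x hx A B ↦ ?_⟩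
  have hcont : Continuous fun y : ℝ ↦ Complex.log (normalizedLerch lam α (x + y * Complex.I)) :=
    continuous_iff_continuousAt.mpr fun y ↦ ContinuousAt.comp
      (f := fun y : ℝ ↦ (x + y * Complex.I : ℂ))
      (hdiff (x + y * Complex.I) (by simpa using hx)).continuousAt (by fun_prop)
  have hre := Complex.reCLM.intervalIntegral_comp_comm (hcont.intervalIntegrable A B) (μ := volume)
  simp only [Complex.reCLM_apply, Complex.log_re] at hre
  rw [hre]
  exact (Complex.abs_re_le_norm _).trans
    (norm_integral_vertical_le hD₀ one_half_pos hdiff hdecay hx A B)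

/-! ### The Lerch zeta-function in the upper half-plane -/

lemma abs_re_sub_le_of_mem_closedBall {z c : ℂ} {r : ℝ} (hz : z ∈ closedBall c r) :
    |z.re - c.re| ≤ r := by
  simpa using (Complex.abs_re_le_norm (z - c)).trans (mem_closedBall_iff_norm.mp hz)

lemma abs_im_sub_le_of_mem_closedBall {z c : ℂ} {r : ℝ} (hz : z ∈ closedBall c r) :
    |z.im - c.im| ≤ r := by
  simpa using (Complex.abs_im_le_norm (z - c)).trans (mem_closedBall_iff_norm.mp hz)

lemma lerchFactor_ne_zero {s : ℂ} (hs : s.re < 1) : lerchFactor s ≠ 0 := by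
  have hΓ : Complex.Gamma (1 - s) ≠ 0 := Complex.Gamma_ne_zero_of_re_pos (by simpa using hs)
  exact mul_ne_zero (mul_ne_zero hΓ (by simp [Complex.cpow_eq_zero_iff])) (Complex.exp_ne_zero _)

lemma mul_exp_neg_le_half {C d y : ℝ} (hC : 0 ≤ C) (hd : 0 < d) (hy : 0 < y)
    (h : 2 * C / d ≤ y) : C * exp (-y) ≤ d / 2 := by
  have hexp : exp (-y) ≤ 1 / y := by
    rw [exp_neg, ← one_div]
    exact one_div_le_one_div_of_le hy (by linarith [add_one_le_exp y])
  calc C * exp (-y) ≤ C * (1 / y) := by gcongr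
    _ ≤ d / 2 := by
      rw [mul_one_div, div_le_iff₀ hy]
      linarith [(div_le_iff₀ hd).mp h]

end LerchZeta

namespace IsLerch

open LerchZeta MeasureTheory Metric Real
open scoped FourierTransform

variable {lam alp : ℝ} {F : ℂ → ℂ} (hF : IsLerch lam alp F)
include hF

lemma analyticAt {s : ℂ} (hs : 0 < s.im) : AnalyticAt ℂ F s := by
  have hopen : IsOpen {z : ℂ | 0 < z.im} := isOpen_lt continuous_const Complex.continuous_im
  have hdiff : DifferentiableOn ℂ F {z : ℂ | 0 < z.im} := fun z hz ↦
    (hF.1 z (by rintro rfl; simp at hz)).differentiableWithinAt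
  exact hdiff.analyticAt (hopen.mem_nhds hs)

lemma ne_zero (hα : 0 < alp) (hα' : alp ≤ 1) {s : ℂ} (hs : 1 + alp ≤ s.re) : F s ≠ 0 := by
  rw [hF.2 s (by linarith)]
  exact norm_pos_iff.mp ((sub_pos.mpr (lerchTail_lt_one hα)).trans_le
    (one_sub_lerchTail_le_norm_lerchSeries hα hα' hs lam))

lemma log_norm_eq (hα : 0 < alp) (hα' : alp ≤ 1) {s : ℂ} (hs : 1 + alp ≤ s.re) :
    log ‖F s‖ = -s.re * log alp + log ‖normalizedLerch lam alp s‖ := by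
  rw [hF.2 s (by linarith), log_norm_lerchSeries hα hα' hs]

lemma exists_abs_log_norm_sub_le (hlam : 0 < lam) (hlam' : lam ≤ 1) (hα : 0 < alp)
    (hα' : alp ≤ 1) :
    ∃ T₁ C : ℝ, 0 < T₁ ∧ 0 ≤ C ∧ ∀ s : ℂ, -2 < s.re → s.re ≤ -1 → T₁ ≤ s.im → F s ≠ 0 ∧
      |log ‖F s‖ - (log ‖lerchFactor s‖ - (1 - s.re) * log lam +
        log ‖normalizedLerch (-alp) lam (1 - s)‖)| ≤ C * exp (-s.im) := by
  obtain ⟨C, hC, hFE⟩ := exists_functional_equation hlam hlam' hα hα' hF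
  set d := 1 - lerchTail lam
  have hd : 0 < d := sub_pos.mpr (lerchTail_lt_one hlam)
  refine ⟨max 1 (2 * C / d), 3 * (C / d), by positivity, by positivity, fun s hs hs' hT ↦ ?_⟩
  have him : 1 ≤ s.im := (le_max_left _ _).trans hT
  obtain ⟨η, hη, hFη⟩ := hFE s hs hs' (by linarith)
  have hre : 1 + lam ≤ (1 - s).re := by
    rw [Complex.sub_re, Complex.one_re]
    linarith
  set D := lerchSeries (-alp) lam (1 - s)
  have hD : d ≤ ‖D‖ := one_sub_lerchTail_le_norm_lerchSeries hlam hlam' hre (-alp)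
  have hη_exp : ‖η‖ ≤ C * exp (-s.im) := by
    refine hη.trans ?_
    gcongr
    nlinarith [pi_gt_three]
  have hη_half : ‖η‖ ≤ ‖D‖ / 2 := hη_exp.trans
    ((mul_exp_neg_le_half hC hd (by linarith) ((le_max_right _ _).trans hT)).trans (by gcongr))
  have hD_ne : D ≠ 0 := norm_pos_iff.mp (hd.trans_le hD)
  have hχ : lerchFactor s ≠ 0 := lerchFactor_ne_zero (by linarith)
  have hDη : D + η ≠ 0 := fun h ↦ by
    have : ‖D‖ = ‖η‖ := by rw [eq_neg_of_add_eq_zero_left h, norm_neg]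
    linarith
  have hnorm : ‖F s‖ = ‖lerchFactor s‖ * ‖D + η‖ := by
    simpa [Circle.norm_coe] using congrArg norm hFη
  refine ⟨norm_ne_zero_iff.mp (hnorm ▸ by positivity), ?_⟩
  have hlog := log_norm_lerchSeries hlam hlam' hre (-alp)
  rw [Complex.sub_re, Complex.one_re, neg_mul] at hlog
  calc |log ‖F s‖ - _| = |log ‖D + η‖ - log ‖D‖| := by
        rw [hnorm, log_mul (by positivity) (by positivity), hlog]
        ring_nf
    _ ≤ 3 * (‖η‖ / ‖D‖) := abs_log_norm_add_sub_log_norm_le hD_ne hη_half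
    _ ≤ 3 * (C * exp (-s.im) / d) := by gcongr
    _ = 3 * (C / d) * exp (-s.im) := by ring

lemma exists_norm_le (hα : 0 < alp) (hα' : alp ≤ 1) {δ : ℝ} (hδ : 0 < δ) (B : ℝ) :
    ∃ C, 1 ≤ C ∧ ∀ s : ℂ, -2 + δ ≤ s.re → s.re ≤ B → 1 ≤ s.im → ‖F s‖ ≤ C * (‖s‖ + 2) ^ 4 := by
  obtain ⟨P, hP⟩ := exists_isTwisted (𝐞 lam : ℂ)
  obtain ⟨C, hC, hbound⟩ :=
    exists_norm_emSeries_le (P := P) (Circle.norm_coe (𝐞 lam)).le hα hα' hδ B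
  refine ⟨C + 1, by linarith, fun s hs hsB him ↦ ?_⟩
  have hs_sub : 1 ≤ ‖s - 1‖ := by
    have := Complex.abs_im_le_norm (s - 1)
    rw [Complex.sub_im, Complex.one_im, sub_zero] at this
    exact (him.trans (le_abs_self _)).trans this
  calc ‖F s‖ ≤ ‖s - 1‖ * ‖F s‖ := le_mul_of_one_le_left (norm_nonneg _) hs_sub
    _ = ‖emSeries P (𝐞 lam) alp s‖ := by
      rw [← norm_mul, sub_one_mul_eq_emSeries hα hα' hF hP (by linarith) (by linarith)]
    _ ≤ C * (‖s‖ + 2) ^ 4 := hbound s hs hsB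
    _ ≤ (C + 1) * (‖s‖ + 2) ^ 4 := by
      gcongr
      linarith

lemma exists_norm_le_on_closedBall (hα : 0 < alp) (hα' : alp ≤ 1) {R : ℝ} (hR : R < 5) :
    ∃ C, 1 ≤ C ∧ ∀ T : ℝ, 6 ≤ T → ∀ z ∈ closedBall (3 + T * Complex.I) R,
      ‖F z‖ ≤ C * (3 * T) ^ 4 := by
  obtain ⟨C, hC, hbound⟩ := hF.exists_norm_le hα hα' (sub_pos.mpr hR) 8
  refine ⟨C, hC, fun T hT z hz ↦ ?_⟩
  have hre := abs_re_sub_le_of_mem_closedBall hz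
  have him := abs_im_sub_le_of_mem_closedBall hz
  have hnorm : ‖z‖ ≤ R + ‖(3 + T * Complex.I : ℂ)‖ := by
    linarith [norm_le_norm_add_norm_sub' z (3 + T * Complex.I), mem_closedBall_iff_norm.mp hz]
  have hcenter : ‖(3 + T * Complex.I : ℂ)‖ ≤ 3 + T := by
    refine (norm_add_le _ _).trans (le_of_eq ?_)
    simp [abs_of_nonneg (show 0 ≤ T by linarith)]
  simp only [Complex.add_re, Complex.re_ofNat, Complex.re_ofReal_mul, Complex.I_re, mul_zero,
    add_zero, Complex.add_im, Complex.im_ofNat, Complex.im_ofReal_mul, Complex.I_im, mul_one,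
    zero_add, abs_le] at hre him
  refine (hbound z (by linarith) (by linarith) (by linarith)).trans ?_
  gcongr
  linarith

theorem exists_setIntegral_ball_abs_log_norm_le (hα : 0 < alp) (hα' : alp ≤ 1) {R : ℝ}
    (hR : 0 < R) (hR' : R < 5) :
    ∃ C, 0 ≤ C ∧ ∀ T : ℝ, 6 ≤ T →
      IntegrableOn (fun z ↦ log ‖F z‖) (ball (3 + T * Complex.I) R) ∧
      ∫ z in ball (3 + T * Complex.I) R, |log ‖F z‖| ≤ C * log T := by
  obtain ⟨C, hC, hbound⟩ := hF.exists_norm_le_on_closedBall hα hα' hR'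
  set d := 1 - lerchTail alp
  have hd : 0 < d := sub_pos.mpr (lerchTail_lt_one hα)
  set K := 2 * log (C * 3 ^ 4) + |log d|
  have hC3 : 1 ≤ C * 3 ^ 4 := by linarith
  have hK : 0 ≤ K := add_nonneg (mul_nonneg zero_le_two (log_nonneg hC3)) (abs_nonneg _)
  refine ⟨R ^ 2 * (2 * π * (K + 8)), by positivity, fun T hT ↦ ?_⟩
  set c : ℂ := 3 + T * Complex.I with hc
  have hc_re : 1 + alp ≤ c.re := by
    simp only [hc, Complex.add_re, Complex.re_ofNat, Complex.re_ofReal_mul, Complex.I_re]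
    linarith
  have han : AnalyticOnNhd ℂ F (closedBall c R) := fun z hz ↦ hF.analyticAt <| by
    have him := (abs_le.mp (abs_im_sub_le_of_mem_closedBall hz)).1
    simp only [hc, Complex.add_im, Complex.im_ofNat, Complex.im_ofReal_mul, Complex.I_im] at him
    linarith
  have hne : F c ≠ 0 := hF.ne_zero hα hα' hc_re
  have hM : 1 ≤ C * (3 * T) ^ 4 := one_le_mul_of_one_le_of_one_le hC (one_le_pow₀ (by linarith))
  have hlogM : log (C * (3 * T) ^ 4) = log (C * 3 ^ 4) + 4 * log T := by
    rw [mul_pow, ← mul_assoc, log_mul (by positivity) (by positivity), log_pow]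
    norm_num
  have hlogc : -log ‖F c‖ ≤ |log d| := by
    refine (neg_le_neg (log_le_log hd ?_)).trans (neg_le_abs _)
    rw [hF.2 c (by linarith)]
    exact one_sub_lerchTail_le_norm_lerchSeries hα hα' hc_re lam
  have hlogT : 1 ≤ log T := by
    rw [le_log_iff_exp_le (by linarith)]
    linarith [exp_one_lt_d9]
  refine ⟨integrableOn_ball_log_norm hR han hne hM (hbound T hT),
    (setIntegral_ball_abs_log_norm_le hR han hne hM (hbound T hT)).trans ?_⟩
  calc R ^ 2 * (2 * π * (2 * log (C * (3 * T) ^ 4) - log ‖F c‖))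
      ≤ R ^ 2 * (2 * π * ((K + 8) * log T)) := by
        gcongr
        rw [hlogM]
        nlinarith
    _ = R ^ 2 * (2 * π * (K + 8)) * log T := by ring

end IsLerch

namespace LerchZeta

open MeasureTheory Metric Set Filter Real
open scoped ComplexConjugate

/-! ### The averaging weight -/

section CircleDefect

variable {φ ψ : ℂ → ℝ} {C r : ℝ} {w : ℂ}

lemma circleDefect_congr (hr : 0 ≤ r) (h : EqOn φ ψ (closedBall w r)) :
    circleDefect φ r w = circleDefect ψ r w := by
  rw [circleDefect, circleDefect, h (mem_closedBall_self hr), circleAverage_congr_sphere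
    (h.mono (by simpa [abs_of_nonneg hr] using sphere_subset_closedBall))]

lemma circleDefect_re_sub (c r : ℝ) (w : ℂ) : circleDefect (fun z ↦ z.re - c) r w = 0 := by
  have hharm : InnerProductSpace.HarmonicOnNhd (fun z : ℂ ↦ z.re - c) (closedBall w |r|) :=
    fun z _ ↦ by
      simpa using AnalyticAt.harmonicAt_re (f := fun z ↦ z - (c : ℂ)) (x := z) (by fun_prop)
  rw [circleDefect, hharm.circleAverage_eq, sub_self]

lemma measurable_circleDefect (hφ : Measurable φ) (r : ℝ) : Measurable (circleDefect φ r) := by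
  refine Measurable.sub ?_ hφ
  simp only [funext fun w ↦ circleAverage_eq_setIntegral φ w r]
  have hcirc : Measurable fun p : ℂ × ℝ ↦ φ (circleMap p.1 r p.2) :=
    hφ.comp (by unfold circleMap; fun_prop)
  exact hcirc.stronglyMeasurable.integral_prod_right.measurable.const_mul _

lemma abs_circleDefect_le (hC : ∀ z, |φ z| ≤ C) (r : ℝ) (w : ℂ) : |circleDefect φ r w| ≤ 2 * C := by
  have hint := intervalIntegral.norm_integral_le_of_norm_le_const (a := 0) (b := 2 * π)
    (f := fun θ ↦ φ (circleMap w r θ)) fun θ _ ↦ hC _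
  have havg : |circleAverage φ w r| ≤ C := by
    rw [circleAverage_def, smul_eq_mul, abs_mul, abs_of_pos (inv_pos.mpr two_pi_pos),
      inv_mul_le_iff₀ two_pi_pos, mul_comm _ C]
    simpa [abs_of_pos pi_pos] using hint
  exact (abs_sub _ _).trans (by linarith [hC w])

lemma circleDefect_one_sub_conj (hφ : ∀ z, φ (1 - conj z) = -φ z) (r : ℝ) (w : ℂ) :
    circleDefect φ r (1 - conj w) = -circleDefect φ r w := by
  have hreflect (θ : ℝ) : φ (circleMap (1 - conj w) (-r) θ) =
      -φ (circleMap w r (2 * π - θ)) := by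
    rw [← hφ]
    congr 1
    have hper : circleMap w r (2 * π - θ) = circleMap w r (-θ) := by
      rw [← periodic_circleMap w r (-θ)]
      ring_nf
    rw [hper]
    simp [circleMap, ← Complex.exp_conj]
    ring
  have havg : circleAverage φ (1 - conj w) r = -circleAverage φ w r := by
    rw [← circleAverage_neg_radius, circleAverage_def, circleAverage_def]
    simp only [hreflect, intervalIntegral.integral_neg, smul_neg]
    rw [intervalIntegral.integral_comp_sub_left (fun θ ↦ φ (circleMap w r θ)), sub_self, sub_zero]
  rw [circleDefect, circleDefect, havg, hφ]
  ring

end CircleDefect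

/-- The function `x - 1/2`, cut off to `0` where it exceeds `B` in absolute value. -/
noncomputable def centeredCutoff (B x : ℝ) : ℝ := if |x - 1 / 2| ≤ B then x - 1 / 2 else 0

lemma centeredCutoff_of_abs_le {B x : ℝ} (h : |x - 1 / 2| ≤ B) :
    centeredCutoff B x = x - 1 / 2 := if_pos h

lemma centeredCutoff_of_lt_abs {B x : ℝ} (h : B < |x - 1 / 2|) : centeredCutoff B x = 0 :=
  if_neg h.not_ge

lemma measurable_centeredCutoff (B : ℝ) : Measurable (centeredCutoff B) := by
  unfold centeredCutoff
  exact Measurable.ite (measurableSet_le (by fun_prop) measurable_const) (by fun_prop)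
    measurable_const

lemma abs_centeredCutoff_le {B : ℝ} (hB : 0 ≤ B) (x : ℝ) : |centeredCutoff B x| ≤ B := by
  unfold centeredCutoff
  split_ifs with h
  · exact h
  · simpa using hB

lemma centeredCutoff_one_sub (B x : ℝ) : centeredCutoff B (1 - x) = -centeredCutoff B x := by
  have habs : |1 - x - 1 / 2| = |x - 1 / 2| := by
    rw [← abs_neg]
    ring_nf
  unfold centeredCutoff
  rw [habs]
  split_ifs <;> ring

/-- The weight `x - 1/2` on the box `|x - 1/2| ≤ B`, `T₀ < y ≤ T`. -/
noncomputable def boxWeight (B T₀ T : ℝ) (z : ℂ) : ℝ :=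
  if z.im ∈ Ioc T₀ T then centeredCutoff B z.re else 0

section BoxWeight

variable {B T₀ T r : ℝ} {z w ρ : ℂ}

lemma measurable_boxWeight (B T₀ T : ℝ) : Measurable (boxWeight B T₀ T) :=
  Measurable.ite (Complex.measurable_im measurableSet_Ioc)
    ((measurable_centeredCutoff B).comp Complex.measurable_re) measurable_const

lemma abs_boxWeight_le (hB : 0 ≤ B) (T₀ T : ℝ) (z : ℂ) : |boxWeight B T₀ T z| ≤ B := by
  unfold boxWeight
  split_ifs
  · exact abs_centeredCutoff_le hB _
  · simpa using hB

lemma boxWeight_one_sub_conj (B T₀ T : ℝ) (z : ℂ) :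
    boxWeight B T₀ T (1 - conj z) = -boxWeight B T₀ T z := by
  have him : (1 - conj z).im = z.im := by simp
  have hre : (1 - conj z).re = 1 - z.re := by simp
  rw [boxWeight, boxWeight, him, hre, centeredCutoff_one_sub]
  split_ifs <;> simp

lemma mem_of_boxWeight_ne_zero (h : boxWeight B T₀ T z ≠ 0) :
    |z.re - 1 / 2| ≤ B ∧ z.im ∈ Ioc T₀ T := by
  unfold boxWeight centeredCutoff at h
  split_ifs at h with him hre
  exacts [⟨hre, him⟩, absurd rfl h, absurd rfl h]

/-- The defect at `x` of the mean-value property of the weight `re z - 1/2` on the strip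
`|re z - 1/2| ≤ B`; it only depends on the abscissa of the point. -/
noncomputable def edgeProfile (B r x : ℝ) : ℝ :=
  circleDefect (fun z ↦ centeredCutoff B z.re) r x

lemma circleDefect_comp_re (g : ℝ → ℝ) (r : ℝ) (w : ℂ) :
    circleDefect (fun z ↦ g z.re) r w = circleDefect (fun z ↦ g z.re) r (w.re : ℂ) := by
  simp [circleDefect, circleAverage_def, circleMap]

lemma circleDefect_boxWeight_eq_edgeProfile (hr : 0 ≤ r) (h : T₀ + r < w.im)
    (h' : w.im ≤ T - r) : circleDefect (boxWeight B T₀ T) r w = edgeProfile B r w.re := by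
  rw [edgeProfile, ← circleDefect_comp_re]
  refine circleDefect_congr hr fun z hz ↦ if_pos ?_
  have him := abs_le.mp (abs_im_sub_le_of_mem_closedBall hz)
  exact ⟨by linarith, by linarith⟩

lemma edgeProfile_one_sub (B r x : ℝ) : edgeProfile B r (1 - x) = -edgeProfile B r x := by
  simpa [edgeProfile] using circleDefect_one_sub_conj (φ := fun z ↦ centeredCutoff B z.re)
    (fun z ↦ by simpa using centeredCutoff_one_sub B z.re) r (x : ℂ)

lemma measurable_edgeProfile (B r : ℝ) : Measurable (edgeProfile B r) :=
  (measurable_circleDefect ((measurable_centeredCutoff B).comp Complex.measurable_re) r).comp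
    Complex.measurable_ofReal

lemma abs_edgeProfile_le (hB : 0 ≤ B) (r x : ℝ) : |edgeProfile B r x| ≤ 2 * B :=
  abs_circleDefect_le (fun _ ↦ abs_centeredCutoff_le hB _) r _

lemma edgeProfile_eq_zero_of_abs_le {x : ℝ} (hr : 0 ≤ r) (h : |x - 1 / 2| ≤ B - r) :
    edgeProfile B r x = 0 := by
  refine (circleDefect_congr hr fun z hz ↦ ?_).trans (circleDefect_re_sub (1 / 2) r x)
  refine centeredCutoff_of_abs_le ?_
  have hre := abs_re_sub_le_of_mem_closedBall hz
  rw [Complex.ofReal_re] at hre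
  linarith [abs_sub_le z.re x (1 / 2)]

end BoxWeight

lemma intervalIntegrable_mul_of_abs_le {f g : ℝ → ℝ} {C : ℝ} (hf : Continuous f)
    (hg : Measurable g) (hC : ∀ x, |g x| ≤ C) (a b : ℝ) :
    IntervalIntegrable (fun x ↦ f x * g x) volume a b :=
  have hmul {s : Set ℝ} (h : IntegrableOn f s volume) :
      IntegrableOn (fun x ↦ f x * g x) s volume :=
    Integrable.mul_bdd (c := C) h hg.aestronglyMeasurable (Eventually.of_forall hC)
  ⟨hmul (hf.intervalIntegrable a b).1, hmul (hf.intervalIntegrable a b).2⟩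

lemma edgeProfile_eq_integral {B : ℝ} (hB : 0 ≤ B) (r x : ℝ) : edgeProfile B r x =
    (2 * π)⁻¹ * ∫ θ in 0..2 * π, (centeredCutoff B (x + r * cos θ) - centeredCutoff B x) := by
  have hint : IntervalIntegrable (fun θ ↦ centeredCutoff B (x + r * cos θ)) volume 0 (2 * π) := by
    simpa using intervalIntegrable_mul_of_abs_le (continuous_const (y := (1 : ℝ)))
      ((measurable_centeredCutoff B).comp (by fun_prop)) (fun θ ↦ abs_centeredCutoff_le hB _)
      0 (2 * π)
  rw [intervalIntegral.integral_sub hint intervalIntegrable_const, mul_sub,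
    intervalIntegral.integral_const, smul_eq_mul, sub_zero, inv_mul_cancel_left₀ two_pi_pos.ne']
  simp [edgeProfile, circleDefect, circleAverage_def, circleMap, Complex.exp_ofReal_mul_I_re]

section FirstMoment

variable {B r : ℝ} (hr : 0 ≤ r) (hrB : r ≤ B)
include hr hrB

lemma integral_mul_centeredCutoff_add {v : ℝ} (hv : |v| ≤ r) :
    ∫ x in (1 / 2 + B - r)..(1 / 2 + B + r), x * centeredCutoff B (x + v) =
      ((1 / 2 + B - v) ^ 3 - (1 / 2 + B - r) ^ 3) / 3 -
        (1 / 2 - v) * ((1 / 2 + B - v) ^ 2 - (1 / 2 + B - r) ^ 2) / 2 := by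
  obtain ⟨hv₁, hv₂⟩ := abs_le.mp hv
  have hii (a b : ℝ) : IntervalIntegrable (fun x ↦ x * centeredCutoff B (x + v)) volume a b :=
    intervalIntegrable_mul_of_abs_le continuous_id ((measurable_centeredCutoff B).comp
      (measurable_add_const v)) (fun x ↦ abs_centeredCutoff_le (hr.trans hrB) (x + v)) a b
  have hinside : ∫ x in (1 / 2 + B - r)..(1 / 2 + B - v), x * centeredCutoff B (x + v) =
      ∫ x in (1 / 2 + B - r)..(1 / 2 + B - v), (x ^ 2 - (1 / 2 - v) * x) := by
    refine intervalIntegral.integral_congr fun x hx ↦ ?_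
    rw [uIcc_of_le (by linarith)] at hx
    rw [centeredCutoff_of_abs_le (abs_le.mpr ⟨by linarith [hx.1], by linarith [hx.2]⟩)]
    ring
  have houtside : ∫ x in (1 / 2 + B - v)..(1 / 2 + B + r), x * centeredCutoff B (x + v) = 0 := by
    rw [intervalIntegral.integral_of_le (by linarith)]
    refine setIntegral_eq_zero_of_forall_eq_zero fun x hx ↦ ?_
    rw [centeredCutoff_of_lt_abs (lt_abs.mpr (Or.inl (by linarith [hx.1]))), mul_zero]
  rw [← intervalIntegral.integral_add_adjacent_intervals (hii _ (1 / 2 + B - v)) (hii _ _),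
    hinside, houtside, intervalIntegral.integral_sub (by simp)
      (Continuous.intervalIntegrable (by fun_prop) _ _), intervalIntegral.integral_const_mul,
    integral_pow, integral_id]
  ring

lemma integral_mul_edgeProfile_swap :
    ∫ x in (1 / 2 + B - r)..(1 / 2 + B + r), x * edgeProfile B r x =
      (2 * π)⁻¹ * ∫ θ in (0 : ℝ)..2 * π, ∫ x in (1 / 2 + B - r)..(1 / 2 + B + r),
        (x * centeredCutoff B (x + r * cos θ) - x * centeredCutoff B x) := by
  simp only [edgeProfile_eq_integral (hr.trans hrB), mul_left_comm _ (2 * π)⁻¹, ← mul_sub]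
  rw [intervalIntegral.integral_const_mul]
  congr 1
  simp only [← intervalIntegral.integral_const_mul]
  refine intervalIntegral_intervalIntegral_swap ?_
  have hfst : IntegrableOn (fun p : ℝ × ℝ ↦ p.1)
      (uIoc (1 / 2 + B - r) (1 / 2 + B + r) ×ˢ uIoc 0 (2 * π)) :=
    (continuous_fst.continuousOn.integrableOn_compact (isCompact_uIcc.prod isCompact_uIcc)).mono_set
      (prod_mono uIoc_subset_uIcc uIoc_subset_uIcc)
  have hmeas : Measurable fun p : ℝ × ℝ ↦
      centeredCutoff B (p.1 + r * cos p.2) - centeredCutoff B p.1 :=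
    ((measurable_centeredCutoff B).comp (by fun_prop)).sub
      ((measurable_centeredCutoff B).comp measurable_fst)
  exact Integrable.mul_bdd (c := B + B) hfst hmeas.aestronglyMeasurable (Eventually.of_forall
    fun p ↦ (abs_sub _ _).trans (add_le_add (abs_centeredCutoff_le (hr.trans hrB) _)
      (abs_centeredCutoff_le (hr.trans hrB) _)))

theorem integral_mul_edgeProfile_right :
    ∫ x in (1 / 2 + B - r)..(1 / 2 + B + r), x * edgeProfile B r x = -(r ^ 2 / 8) := by
  have hinner (θ : ℝ) : ∫ x in (1 / 2 + B - r)..(1 / 2 + B + r),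
      (x * centeredCutoff B (x + r * cos θ) - x * centeredCutoff B x) =
        -(r / 2 * (2 * B ^ 2 + B - (2 * B + 1) * r + r ^ 2)) * cos θ - r ^ 2 / 4 * cos θ ^ 2 +
          r ^ 3 / 6 * cos θ ^ 3 := by
    have hcos : |r * cos θ| ≤ r := by
      rw [abs_mul, abs_of_nonneg hr]
      exact mul_le_of_le_one_right hr (abs_cos_le_one θ)
    have hzero := integral_mul_centeredCutoff_add hr hrB (v := 0) (by simpa using hr)
    simp only [add_zero] at hzero
    have hii {v : ℝ} : IntervalIntegrable (fun x ↦ x * centeredCutoff B (x + v)) volume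
        (1 / 2 + B - r) (1 / 2 + B + r) :=
      intervalIntegrable_mul_of_abs_le continuous_id ((measurable_centeredCutoff B).comp
        (measurable_add_const v)) (fun x ↦ abs_centeredCutoff_le (hr.trans hrB) (x + v)) _ _
    rw [intervalIntegral.integral_sub hii (by simpa using hii (v := 0)),
      integral_mul_centeredCutoff_add hr hrB hcos, hzero]
    ring
  have hcos_cube : ∫ θ in 0..2 * π, cos θ ^ 3 = 0 := by
    rw [integral_cos_pow]
    simp
  rw [integral_mul_edgeProfile_swap hr hrB]
  simp only [hinner]
  rw [intervalIntegral.integral_add, intervalIntegral.integral_sub]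
  · simp only [intervalIntegral.integral_const_mul, hcos_cube, integral_cos_sq, integral_cos]
    simp only [mul_inv_rev, sin_two_pi, sin_zero, sub_self, mul_zero, cos_two_pi, cos_zero,
      zero_add, sub_zero, add_zero]
    field_simp
    ring
  all_goals exact Continuous.intervalIntegrable (by fun_prop) _ _

theorem integral_mul_edgeProfile_left :
    ∫ x in (1 / 2 - B - r)..(1 / 2 - B + r), (1 - x) * edgeProfile B r x = r ^ 2 / 8 := by
  have hreflect (x : ℝ) : (1 - x) * edgeProfile B r x =
      -((1 - x) * edgeProfile B r (1 - x)) := by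
    rw [edgeProfile_one_sub]
    ring
  simp only [hreflect]
  rw [intervalIntegral.integral_comp_sub_left (fun x ↦ -(x * edgeProfile B r x)),
    intervalIntegral.integral_neg, neg_eq_iff_eq_neg, ← integral_mul_edgeProfile_right hr hrB]
  congr 1 <;> ring

end FirstMoment

section Kernel

variable {φ : ℂ → ℝ} {r : ℝ}

lemma integrable_jensenKernel_sub (hr : 0 < r) (ρ : ℂ) :
    Integrable fun z ↦ jensenKernel r (z - ρ) :=
  (integrable_jensenKernel hr).comp_sub_right ρ

lemma integral_jensenKernel_sub (hr : 0 < r) (ρ : ℂ) :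
    ∫ z, jensenKernel r (z - ρ) = π * r ^ 2 / 2 := by
  rw [integral_sub_right_eq_self (jensenKernel r), integral_jensenKernel hr]

lemma abs_integral_mul_jensenKernel_le {C : ℝ} (hC : ∀ z, |φ z| ≤ C) (hr : 0 < r) (ρ : ℂ) :
    |∫ z, φ z * jensenKernel r (z - ρ)| ≤ C * (π * r ^ 2 / 2) := by
  rw [← integral_jensenKernel_sub hr ρ, ← integral_const_mul, ← norm_eq_abs]
  refine norm_integral_le_of_norm_le ((integrable_jensenKernel_sub hr ρ).const_mul C)
    (Eventually.of_forall fun z ↦ ?_)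
  rw [norm_mul, norm_eq_abs, norm_of_nonneg (jensenKernel_nonneg _ _)]
  exact mul_le_mul_of_nonneg_right (hC z) (jensenKernel_nonneg _ _)

lemma integrable_re_mul_jensenKernel (hr : 0 < r) :
    Integrable fun u : ℂ ↦ u.re * jensenKernel r u := by
  refine ((integrable_jensenKernel hr).const_mul r).mono'
    (Complex.measurable_re.aestronglyMeasurable.mul
      (integrable_jensenKernel hr).aestronglyMeasurable) (Eventually.of_forall fun u ↦ ?_)
  rw [norm_mul, norm_of_nonneg (jensenKernel_nonneg r u)]
  obtain h | h := le_or_gt r ‖u‖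
  · simp [jensenKernel_eq_zero hr h]
  · exact mul_le_mul_of_nonneg_right ((Complex.abs_re_le_norm u).trans h.le)
      (jensenKernel_nonneg r u)

lemma integral_re_mul_jensenKernel (r : ℝ) : ∫ u : ℂ, u.re * jensenKernel r u = 0 := by
  have hodd := integral_neg_eq_self (fun u : ℂ ↦ u.re * jensenKernel r u) volume
  simp only [jensenKernel, Complex.neg_re, norm_neg, neg_mul] at hodd ⊢
  rw [integral_neg] at hodd
  linarith

lemma integral_mul_jensenKernel_of_eqOn {c : ℝ} {ρ : ℂ} (hr : 0 < r)
    (h : EqOn φ (fun z ↦ z.re - c) (ball ρ r)) :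
    ∫ z, φ z * jensenKernel r (z - ρ) = π * r ^ 2 / 2 * (ρ.re - c) := by
  have hsplit (z : ℂ) : φ z * jensenKernel r (z - ρ) =
      (z - ρ).re * jensenKernel r (z - ρ) + (ρ.re - c) * jensenKernel r (z - ρ) := by
    obtain hz | hz := le_or_gt r ‖z - ρ‖
    · simp [jensenKernel_eq_zero hr hz]
    · rw [h (mem_ball_iff_norm.mpr hz), Complex.sub_re]
      ring
  simp only [hsplit]
  rw [integral_add ((integrable_re_mul_jensenKernel hr).comp_sub_right ρ)
      ((integrable_jensenKernel_sub hr ρ).const_mul _),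
    integral_sub_right_eq_self (fun u : ℂ ↦ u.re * jensenKernel r u),
    integral_re_mul_jensenKernel, integral_const_mul, integral_jensenKernel_sub hr]
  ring

lemma integral_boxWeight_mul_jensenKernel {B T₀ T : ℝ} {ρ : ℂ} (hr : 0 < r)
    (hre : |ρ.re - 1 / 2| ≤ B - r) (him : T₀ + r ≤ ρ.im) (him' : ρ.im ≤ T - r) :
    ∫ z, boxWeight B T₀ T z * jensenKernel r (z - ρ) = π * r ^ 2 / 2 * (ρ.re - 1 / 2) := by
  refine integral_mul_jensenKernel_of_eqOn hr fun z hz ↦ ?_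
  have hz := mem_ball_iff_norm.mp hz
  have hz_re := ((Complex.abs_re_le_norm _).trans_lt hz).le
  have hz_im := abs_lt.mp ((Complex.abs_im_le_norm _).trans_lt hz)
  rw [Complex.sub_re] at hz_re
  rw [Complex.sub_im] at hz_im
  rw [boxWeight, if_pos ⟨by linarith, by linarith⟩, centeredCutoff_of_abs_le]
  linarith [abs_sub_le z.re ρ.re (1 / 2)]

end Kernel

/-! ### Zeros of the Lerch zeta-function -/

lemma mem_ball_of_abs_le {z c : ℂ} {a b R : ℝ} (hre : |z.re - c.re| ≤ a) (him : |z.im - c.im| ≤ b)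
    (hR : 0 ≤ R) (hab : a ^ 2 + b ^ 2 < R ^ 2) : z ∈ ball c R := by
  rw [mem_ball_iff_norm, ← sq_lt_sq₀ (norm_nonneg _) hR, Complex.sq_norm, Complex.normSq_apply,
    Complex.sub_re, Complex.sub_im]
  nlinarith [sq_le_sq' (neg_le_of_abs_le hre) (le_of_abs_le hre),
    sq_le_sq' (neg_le_of_abs_le him) (le_of_abs_le him)]

lemma sum_zeroOrder_mul_le {f : ℂ → ℂ} {c : ℂ} {r R : ℝ} (hf : AnalyticOnNhd ℂ f (ball c R))
    (hInt : IntegrableOn (fun z ↦ log ‖f z‖) (ball c R))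
    (hfin : {z | z ∈ ball c R ∧ f z = 0}.Finite) (hr : 0 < r) {Z : Finset ℂ}
    (hZ : ∀ ρ ∈ Z, ρ ∈ ball c (R - 2 * r)) :
    (∑ ρ ∈ Z, (zeroOrder f ρ : ℝ)) * (π * r ^ 2 / 2) ≤ 2 * ∫ z in ball c R, |log ‖f z‖| := by
  set φ : ℂ → ℝ := (ball c (R - r)).indicator 1
  have hφ_nonneg (z : ℂ) : 0 ≤ φ z := indicator_nonneg (fun _ _ ↦ zero_le_one) z
  have hφ_abs (z : ℂ) : |φ z| ≤ 1 := by
    rw [abs_of_nonneg (hφ_nonneg z)]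
    exact indicator_le_self' (fun _ _ ↦ zero_le_one) z
  have hφ : Measurable φ := measurable_one.indicator measurableSet_ball
  have hsub (z : ℂ) (hz : φ z ≠ 0) : closedBall z r ⊆ ball c R :=
    closedBall_subset_ball' (by linarith [mem_ball.mp (mem_of_indicator_ne_zero hz)])
  have hkernel {ρ : ℂ} (hρ : ρ ∈ Z) : ∫ z, φ z * jensenKernel r (z - ρ) = π * r ^ 2 / 2 := by
    rw [← integral_jensenKernel_sub hr ρ]
    refine integral_congr_ae (Eventually.of_forall fun z ↦ ?_)
    obtain hz | hz := le_or_gt r ‖z - ρ‖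
    · simp [jensenKernel_eq_zero hr hz]
    · have hz_mem : z ∈ ball c (R - r) := by
        rw [mem_ball]
        linarith [dist_triangle z ρ c, mem_ball.mp (hZ ρ hρ), (dist_eq_norm z ρ).trans_lt hz]
      simp [φ, hz_mem]
  calc (∑ ρ ∈ Z, (zeroOrder f ρ : ℝ)) * (π * r ^ 2 / 2)
      = ∑ ρ ∈ Z, zeroOrder f ρ * ∫ z, φ z * jensenKernel r (z - ρ) := by
        rw [Finset.sum_mul]
        exact Finset.sum_congr rfl fun ρ hρ ↦ by rw [hkernel hρ]
    _ ≤ ∑ ρ ∈ hfin.toFinset ∪ Z, zeroOrder f ρ * ∫ z, φ z * jensenKernel r (z - ρ) :=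
        Finset.sum_le_sum_of_subset_of_nonneg Finset.subset_union_right fun ρ _ _ ↦
          mul_nonneg (Nat.cast_nonneg _)
            (integral_nonneg fun z ↦ mul_nonneg (hφ_nonneg z) (jensenKernel_nonneg _ _))
    _ = ∫ w in ball c R, log ‖f w‖ * circleDefect φ r w :=
        (setIntegral_log_norm_mul_circleDefect measurableSet_ball hf hInt hφ hφ_abs hr hsub _
          fun z hz hfz ↦ Finset.mem_union_left _ (hfin.mem_toFinset.mpr ⟨hz, hfz⟩)).symm
    _ ≤ ∫ w in ball c R, 2 * |log ‖f w‖| := by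
        refine setIntegral_mono_on
          (integrableOn_log_norm_mul_circleDefect measurableSet_ball hInt hφ hφ_abs r)
          (hInt.abs.const_mul 2) measurableSet_ball fun w _ ↦ ?_
        refine (le_abs_self _).trans ?_
        rw [abs_mul, mul_comm]
        exact mul_le_mul_of_nonneg_right (by simpa using abs_circleDefect_le hφ_abs r w)
          (abs_nonneg _)
    _ = 2 * ∫ z in ball c R, |log ‖f z‖| := integral_const_mul _ _

/-- The box outside of which the circle defect, at radius `1/4`, of `boxWeight (7/4) T₀ T`
vanishes. -/
def criticalBox (T₀ T : ℝ) : Set ℂ := Icc (-3 / 2) (5 / 2) ×ℂ Icc (T₀ - 1 / 4) (T + 1 / 4)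

lemma mem_criticalBox {T₀ T : ℝ} {z : ℂ} : z ∈ criticalBox T₀ T ↔
    z.re ∈ Icc (-3 / 2 : ℝ) (5 / 2) ∧ z.im ∈ Icc (T₀ - 1 / 4) (T + 1 / 4) :=
  Complex.mem_reProdIm

lemma isCompact_criticalBox (T₀ T : ℝ) : IsCompact (criticalBox T₀ T) :=
  isCompact_Icc.reProdIm isCompact_Icc

lemma closedBall_subset_criticalBox {T₀ T : ℝ} {z : ℂ} (hz : boxWeight (7 / 4) T₀ T z ≠ 0) :
    closedBall z (1 / 4) ⊆ criticalBox T₀ T := by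
  intro w hw
  obtain ⟨hre, him⟩ := mem_of_boxWeight_ne_zero hz
  have hre' := abs_le.mp (abs_re_sub_le_of_mem_closedBall hw)
  have him' := abs_le.mp (abs_im_sub_le_of_mem_closedBall hw)
  rw [abs_le] at hre
  exact mem_criticalBox.mpr ⟨⟨by linarith, by linarith⟩, by linarith [him.1], by linarith [him.2]⟩

lemma mem_ball_of_mem_strip {z : ℂ} {T : ℝ} (hre : z.re ∈ Icc (-3 / 2 : ℝ) (5 / 2))
    (him : |z.im - T| ≤ 1) : z ∈ ball (3 + T * Complex.I) (19 / 4) := by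
  refine mem_ball_of_abs_le (a := 9 / 2) (abs_le.mpr ?_) (by simpa using him) (by norm_num)
    (by norm_num)
  constructor <;> norm_num <;> linarith [hre.1, hre.2]

end LerchZeta

namespace IsLerch

open LerchZeta MeasureTheory Metric Set Topology Real
open scoped FourierTransform

variable {lam alp : ℝ} {F : ℂ → ℂ} (hF : IsLerch lam alp F) (hα : 0 < alp) (hα' : alp ≤ 1)
include hF hα hα'

theorem finite_zeros {a : ℝ} (ha : -2 < a) (T : ℝ) :
    {z : ℂ | F z = 0 ∧ a ≤ z.re ∧ 0 < z.im ∧ z.im ≤ T}.Finite := by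
  obtain ⟨P, hP⟩ := exists_isTwisted (𝐞 lam : ℂ)
  set U := {s : ℂ | -2 < s.re}
  have han : AnalyticOnNhd ℂ (emSeries P (𝐞 lam) alp) U :=
    (differentiableOn_emSeries (Circle.norm_coe _).le hα hα').analyticOnNhd
      (isOpen_lt continuous_const Complex.continuous_re)
  by_contra hinf
  obtain ⟨x, hxK, hx⟩ := Set.Infinite.exists_accPt_of_subset_isCompact hinf
    (isCompact_Icc.reProdIm isCompact_Icc : IsCompact (Icc a 2 ×ℂ Icc 0 T)) fun z hz ↦
      Complex.mem_reProdIm.mpr ⟨⟨hz.2.1, le_of_not_gt fun h ↦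
        hF.ne_zero hα hα' (by linarith) hz.1⟩, hz.2.2.1.le, hz.2.2.2⟩
  have hfreq : ∃ᶠ z in 𝓝[≠] x, emSeries P (𝐞 lam) alp z = 0 := by
    rw [frequently_nhdsWithin_iff]
    refine (accPt_iff_frequently.mp hx).mono fun z ⟨hzx, hz⟩ ↦ ⟨?_, hzx⟩
    rw [← sub_one_mul_eq_emSeries hα hα' hF hP (ha.trans_le hz.2.1) hz.2.2.1, hz.1, mul_zero]
  have hzero := han.eqOn_zero_of_preconnected_of_frequently_eq_zero
    (convex_halfSpace_re_gt (-2)).isPreconnected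
    (ha.trans_le (Complex.mem_reProdIm.mp hxK).1.1) hfreq
  have hF2 : F (2 + Complex.I) ≠ 0 := hF.ne_zero hα hα' (by simp; linarith)
  have hmul := sub_one_mul_eq_emSeries hα hα' hF hP (s := 2 + Complex.I) (by simp) (by simp)
  rw [hzero (show (2 + Complex.I) ∈ U by simp [U]), Pi.zero_apply, mul_eq_zero] at hmul
  exact hmul.elim (fun h ↦ by simpa using congrArg Complex.im h) hF2

lemma integrableOn_log_norm_criticalBox {T₀ : ℝ} (hT₀ : 7 ≤ T₀) (T : ℝ) :
    IntegrableOn (fun z ↦ log ‖F z‖) (criticalBox T₀ T) := by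
  obtain ⟨_, _, hdisc⟩ :=
    hF.exists_setIntegral_ball_abs_log_norm_le hα hα' (R := 19 / 4) (by norm_num) (by norm_num)
  refine LocallyIntegrableOn.integrableOn_isCompact (fun z hz ↦ ?_) (isCompact_criticalBox T₀ T)
  obtain ⟨hre, him⟩ := mem_criticalBox.mp hz
  exact ⟨_, mem_nhdsWithin_of_mem_nhds (isOpen_ball.mem_nhds
    (mem_ball_of_mem_strip hre (by simp))), (hdisc z.im (by linarith [him.1])).1⟩

theorem exists_sum_zeroOrder_le : ∃ C : ℝ, 0 ≤ C ∧ ∀ T : ℝ, 6 ≤ T → ∀ Z : Finset ℂ,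
    (∀ ρ ∈ Z, F ρ = 0 ∧ -1 ≤ ρ.re ∧ |ρ.im - T| ≤ 1) →
      ∑ ρ ∈ Z, (zeroOrder F ρ : ℝ) ≤ C * log T := by
  obtain ⟨C, hC, hdisc⟩ :=
    hF.exists_setIntegral_ball_abs_log_norm_le hα hα' (R := 19 / 4) (by norm_num) (by norm_num)
  refine ⟨2 * C / (π * (1 / 4) ^ 2 / 2), by positivity, fun T hT Z hZ ↦ ?_⟩
  obtain ⟨hInt, hle⟩ := hdisc T hT
  have hbounds {z : ℂ} (hz : z ∈ ball (3 + T * Complex.I) (19 / 4)) :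
      -7 / 4 ≤ z.re ∧ 0 < z.im ∧ z.im ≤ T + 5 := by
    have hre := abs_le.mp (abs_re_sub_le_of_mem_closedBall (ball_subset_closedBall hz))
    have him := abs_le.mp (abs_im_sub_le_of_mem_closedBall (ball_subset_closedBall hz))
    simp at hre him
    exact ⟨by linarith, by linarith, by linarith⟩
  have hfin : {z | z ∈ ball (3 + T * Complex.I) (19 / 4) ∧ F z = 0}.Finite :=
    (hF.finite_zeros hα hα' (a := -7 / 4) (by norm_num) (T + 5)).subset
      fun z hz ↦ ⟨hz.2, hbounds hz.1⟩
  have hZ_mem (ρ : ℂ) (hρ : ρ ∈ Z) : ρ ∈ ball (3 + T * Complex.I) (19 / 4 - 2 * (1 / 4)) := by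
    obtain ⟨hzero, hre, him⟩ := hZ ρ hρ
    have hre' : ρ.re < 2 := lt_of_not_ge fun h ↦ hF.ne_zero hα hα' (by linarith) hzero
    refine mem_ball_of_abs_le (a := 4) (b := 1) (abs_le.mpr ?_) (by simpa using him)
      (by norm_num) (by norm_num)
    constructor <;> simp <;> linarith
  have hsum := sum_zeroOrder_mul_le (fun z hz ↦ hF.analyticAt (hbounds hz).2.1) hInt hfin
    (by norm_num) hZ_mem
  rw [div_mul_eq_mul_div, le_div_iff₀ (by positivity)]
  linarith

end IsLerch

namespace LerchZeta

open MeasureTheory Set Filter Real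

/-! ### The two edge strips -/

lemma measurableSet_reProdIm {s t : Set ℝ} (hs : MeasurableSet s) (ht : MeasurableSet t) :
    MeasurableSet (s ×ℂ t) :=
  (hs.preimage Complex.measurable_re).inter (ht.preimage Complex.measurable_im)

lemma setIntegral_reProdIm_eq_prod (s t : Set ℝ) (f : ℂ → ℝ) :
    ∫ w in s ×ℂ t, f w = ∫ p in s ×ˢ t, f (p.1 + p.2 * Complex.I) := by
  rw [← Complex.volume_preserving_equiv_real_prod.setIntegral_preimage_emb
    Complex.measurableEquivRealProd.measurableEmbedding]
  simp only [Complex.measurableEquivRealProd_apply, Complex.re_add_im]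
  rfl

lemma integrableOn_reProdIm_iff (s t : Set ℝ) (f : ℂ → ℝ) :
    IntegrableOn f (s ×ℂ t) ↔
      IntegrableOn (fun p : ℝ × ℝ ↦ f (p.1 + p.2 * Complex.I)) (s ×ˢ t) := by
  rw [← Complex.volume_preserving_equiv_real_prod.integrableOn_comp_preimage
    Complex.measurableEquivRealProd.measurableEmbedding]
  simp only [Function.comp_def, Complex.measurableEquivRealProd_apply, Complex.re_add_im]
  rfl

section Strip

variable {a b c d M : ℝ} {f g : ℂ → ℝ} {m : ℝ → ℝ}

lemma setIntegral_comp_re (hab : a ≤ b) (hcd : c ≤ d) (m : ℝ → ℝ) :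
    ∫ w in Icc a b ×ℂ Ioo c d, m w.re = (d - c) * ∫ x in a..b, m x := by
  have hprod := setIntegral_prod_mul (μ := volume) (ν := volume) m (fun _ : ℝ ↦ (1 : ℝ))
    (Icc a b) (Ioo c d)
  rw [setIntegral_reProdIm_eq_prod, intervalIntegral.integral_of_le hab,
    ← integral_Icc_eq_integral_Ioc]
  simpa [Measure.volume_eq_prod, hcd, mul_comm] using hprod

lemma integrableOn_mul_comp_re (hf : ContinuousOn f (Icc a b ×ℂ Icc c d)) (hm : Measurable m)
    (hM : ∀ x, |m x| ≤ M) : IntegrableOn (fun w ↦ f w * m w.re) (Icc a b ×ℂ Ioo c d) :=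
  Integrable.mul_bdd (c := M)
    ((hf.integrableOn_compact (isCompact_Icc.reProdIm isCompact_Icc)).mono_set
      fun _ hz ↦ ⟨hz.1, Ioo_subset_Icc_self hz.2⟩)
    (hm.comp Complex.measurable_re).aestronglyMeasurable (Eventually.of_forall fun _ ↦ hM _)

lemma abs_setIntegral_mul_comp_re_le {C : ℝ} (hab : a ≤ b) (hcd : c ≤ d)
    (hf : ContinuousOn f (Icc a b ×ℂ Icc c d)) (hm : Measurable m) (hM : ∀ x, |m x| ≤ M)
    (hC : ∀ x ∈ Icc a b, |∫ y in c..d, f (x + y * Complex.I)| ≤ C) :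
    |∫ w in Icc a b ×ℂ Ioo c d, f w * m w.re| ≤ M * C * (b - a) := by
  have hint := (integrableOn_reProdIm_iff _ _ _).mp (integrableOn_mul_comp_re hf hm hM)
  have hfubini : ∫ w in Icc a b ×ℂ Ioo c d, f w * m w.re =
      ∫ x in a..b, m x * ∫ y in c..d, f (x + y * Complex.I) := by
    rw [Measure.volume_eq_prod] at hint
    rw [setIntegral_reProdIm_eq_prod, Measure.volume_eq_prod, setIntegral_prod _ hint,
      intervalIntegral.integral_of_le hab, integral_Icc_eq_integral_Ioc]
    refine integral_congr_ae (Eventually.of_forall fun x ↦ ?_)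
    simp [intervalIntegral.integral_of_le hcd, integral_Ioc_eq_integral_Ioo,
      mul_comm (m x), integral_mul_const]
  rw [hfubini, ← abs_of_nonneg (sub_nonneg.mpr hab), ← norm_eq_abs]
  refine intervalIntegral.norm_integral_le_of_norm_le_const fun x hx ↦ ?_
  rw [uIoc_of_le hab] at hx
  rw [norm_mul]
  exact mul_le_mul (hM x) (hC x (Ioc_subset_Icc_self hx)) (norm_nonneg _)
    ((abs_nonneg _).trans (hM x))

lemma abs_setIntegral_mul_comp_re_sub_le {C : ℝ} (hab : a ≤ b) (hcd : c ≤ d)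
    (hf : ContinuousOn f (Icc a b ×ℂ Icc c d)) (hg : ContinuousOn g (Icc a b ×ℂ Icc c d))
    (hm : Measurable m) (hM : ∀ x, |m x| ≤ M)
    (hC : ∀ x ∈ Icc a b,
      |∫ y in c..d, (f (x + y * Complex.I) - g (x + y * Complex.I))| ≤ C) :
    |(∫ w in Icc a b ×ℂ Ioo c d, f w * m w.re) - ∫ w in Icc a b ×ℂ Ioo c d, g w * m w.re| ≤
      M * C * (b - a) := by
  rw [← integral_sub (integrableOn_mul_comp_re hf hm hM) (integrableOn_mul_comp_re hg hm hM)]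
  simpa only [Pi.sub_apply, sub_mul] using
    abs_setIntegral_mul_comp_re_le hab hcd (hf.sub hg) hm hM hC

end Strip

lemma continuousAt_log_norm {f : ℂ → ℂ} {s : ℂ} (h : ContinuousAt f s) (hs : f s ≠ 0) :
    ContinuousAt (fun s ↦ log ‖f s‖) s :=
  h.norm.log (norm_ne_zero_iff.mpr hs)

lemma continuousAt_lerchFactor {s : ℂ} (hs : s.re < 1) : ContinuousAt lerchFactor s := by
  unfold lerchFactor
  have hΓ : ContinuousAt (fun s : ℂ ↦ Complex.Gamma (1 - s)) s := by
    refine (Complex.differentiableAt_Gamma _ fun m hm ↦ ?_).continuousAt.comp (by fun_prop)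
    have hre := congrArg Complex.re hm
    simp only [Complex.sub_re, Complex.one_re, Complex.neg_re, Complex.natCast_re] at hre
    linarith [m.cast_nonneg (α := ℝ)]
  have hpow : ContinuousAt (fun s : ℂ ↦ ((2 * π : ℝ) : ℂ) ^ (s - 1)) s :=
    ContinuousAt.const_cpow (by fun_prop) (Or.inl (mod_cast two_pi_pos.ne'))
  exact (hΓ.mul hpow).mul (by fun_prop)

lemma continuousAt_log_norm_lerchFactor {s : ℂ} (hs : s.re < 1) :
    ContinuousAt (fun s ↦ log ‖lerchFactor s‖) s :=
  continuousAt_log_norm (continuousAt_lerchFactor hs) (lerchFactor_ne_zero hs)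

lemma continuous_log_norm_normalizedLerch_vertical (lam : ℝ) {alp x : ℝ} (hα : 0 < alp)
    (hα' : alp ≤ 1) (hx : 1 + alp ≤ x) :
    Continuous fun y : ℝ ↦ log ‖normalizedLerch lam alp (x + y * Complex.I)‖ := by
  refine continuous_iff_continuousAt.mpr fun y ↦ ?_
  have hre : 1 + alp ≤ (x + y * Complex.I : ℂ).re := by simpa using hx
  have hline : ContinuousAt (fun y : ℝ ↦ (x + y * Complex.I : ℂ)) y := by fun_prop
  exact (continuousAt_log_norm (differentiableAt_normalizedLerch lam hα hα'
    (by linarith)).continuousAt (normalizedLerch_ne_zero hα hα' hre lam)).comp_of_eq hline rfl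

lemma abs_integral_le_of_abs_le_mul_exp_neg {g : ℝ → ℝ} {c d C : ℝ} (hc : 0 ≤ c) (hcd : c ≤ d)
    (hg : ∀ y ∈ Ioc c d, |g y| ≤ C * exp (-y)) (hC : 0 ≤ C) : |∫ y in c..d, g y| ≤ C := by
  have hcont : Continuous fun y : ℝ ↦ C * exp (-y) := by fun_prop
  have hexp : ∫ y in c..d, C * exp (-y) = C * (exp (-c) - exp (-d)) := by
    rw [intervalIntegral.integral_const_mul,
      intervalIntegral.integral_comp_neg (fun y ↦ exp y), integral_exp]
  calc |∫ y in c..d, g y| ≤ ∫ y in c..d, C * exp (-y) :=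
        intervalIntegral.norm_integral_le_of_norm_le (f := g) hcd (Eventually.of_forall hg)
          (hcont.intervalIntegrable _ _)
    _ ≤ C := hexp.le.trans (mul_le_of_le_one_right hC (by
        linarith [exp_le_one_iff.mpr (neg_nonpos.mpr hc), exp_pos (-d)]))

lemma integral_mul_edgeProfile_right_strip :
    ∫ x in (2 : ℝ)..(5 / 2), x * edgeProfile (7 / 4) (1 / 4) x = -(1 / 128) := by
  have := integral_mul_edgeProfile_right (B := 7 / 4) (r := 1 / 4) (by norm_num) (by norm_num)
  norm_num at this ⊢
  exact this

lemma integral_mul_edgeProfile_left_strip :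
    ∫ x in (-3 / 2 : ℝ)..(-1), (1 - x) * edgeProfile (7 / 4) (1 / 4) x = 1 / 128 := by
  have := integral_mul_edgeProfile_left (B := 7 / 4) (r := 1 / 4) (by norm_num) (by norm_num)
  norm_num at this ⊢
  exact this

end LerchZeta

namespace IsLerch

open LerchZeta MeasureTheory Set Real

variable {lam alp : ℝ} {F : ℂ → ℂ} (hF : IsLerch lam alp F)
include hF

lemma continuousAt_log_norm {s : ℂ} (hs : 0 < s.im) (hFs : F s ≠ 0) :
    ContinuousAt (fun s ↦ log ‖F s‖) s :=
  LerchZeta.continuousAt_log_norm (hF.analyticAt hs).continuousAt hFs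

theorem exists_abs_setIntegral_right_strip_sub_le (hα : 0 < alp) (hα' : alp ≤ 1) :
    ∃ C, ∀ c d : ℝ, 0 < c → c ≤ d →
      |(∫ w in Icc 2 (5 / 2) ×ℂ Ioo c d, log ‖F w‖ * edgeProfile (7 / 4) (1 / 4) w.re) -
        (d - c) / 128 * log alp| ≤ C := by
  obtain ⟨C, _, hbound⟩ := exists_abs_integral_log_norm_normalizedLerch_le lam hα hα'
  refine ⟨2 * (7 / 4) * C * (5 / 2 - 2), fun c d hc hcd ↦ ?_⟩
  have hab : (2 : ℝ) ≤ 5 / 2 := by norm_num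
  have hmain : ∫ w in Icc 2 (5 / 2) ×ℂ Ioo c d,
      -w.re * log alp * edgeProfile (7 / 4) (1 / 4) w.re = (d - c) / 128 * log alp := by
    rw [setIntegral_comp_re hab hcd fun x ↦ -x * log alp * edgeProfile (7 / 4) (1 / 4) x]
    simp only [mul_right_comm _ (log alp), neg_mul]
    rw [intervalIntegral.integral_neg, intervalIntegral.integral_mul_const,
      integral_mul_edgeProfile_right_strip]
    ring
  rw [← hmain]
  refine abs_setIntegral_mul_comp_re_sub_le hab hcd (fun s hs ↦ ?_) (by fun_prop)
    (measurable_edgeProfile _ _) (abs_edgeProfile_le (by norm_num) _) fun x hx ↦ ?_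
  · exact (hF.continuousAt_log_norm (hc.trans_le hs.2.1)
      (hF.ne_zero hα hα' (by linarith [hs.1.1]))).continuousWithinAt
  · have hlog (y : ℝ) : log ‖F (x + y * Complex.I)‖ - -(x + y * Complex.I).re * log alp =
        log ‖normalizedLerch lam alp (x + y * Complex.I)‖ := by
      rw [hF.log_norm_eq hα hα' (by simpa using by linarith [hx.1])]
      ring
    simpa only [hlog] using hbound x (by linarith [hx.1]) c d

lemma exists_ne_zero_of_re_le (hlam : 0 < lam) (hlam' : lam ≤ 1) (hα : 0 < alp)
    (hα' : alp ≤ 1) : ∃ T₁ : ℝ, ∀ s : ℂ, -2 < s.re → s.re ≤ -1 → T₁ ≤ s.im → F s ≠ 0 := by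
  obtain ⟨T₁, _, _, _, h⟩ := hF.exists_abs_log_norm_sub_le hlam hlam' hα hα'
  exact ⟨T₁, fun s hs hs' him ↦ (h s hs hs' him).1⟩

lemma exists_abs_integral_left_vertical_le (hlam : 0 < lam) (hlam' : lam ≤ 1) (hα : 0 < alp)
    (hα' : alp ≤ 1) :
    ∃ T₁ C : ℝ, 0 < T₁ ∧ ∀ x ∈ Icc (-3 / 2 : ℝ) (-1), ∀ c d : ℝ, T₁ ≤ c → c ≤ d →
      |∫ y in c..d, (log ‖F (x + y * Complex.I)‖ -
        (log ‖lerchFactor (x + y * Complex.I)‖ - (1 - x) * log lam))| ≤ C := by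
  obtain ⟨T₁, C₁, hT₁, hC₁, hleft⟩ := hF.exists_abs_log_norm_sub_le hlam hlam' hα hα'
  obtain ⟨C, _, hbound⟩ := exists_abs_integral_log_norm_normalizedLerch_le (-alp) hlam hlam'
  refine ⟨T₁, C + C₁, hT₁, fun x hx c d hc hcd ↦ ?_⟩
  set D : ℝ → ℝ := fun y ↦ log ‖normalizedLerch (-alp) lam ((1 - x : ℝ) + y * Complex.I)‖
  set E : ℝ → ℝ := fun y ↦ log ‖F (x + y * Complex.I)‖ -
    (log ‖lerchFactor (x + y * Complex.I)‖ - (1 - x) * log lam)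
  have hmem {y : ℝ} (hy : y ∈ Icc c d) : F (x + y * Complex.I) ≠ 0 ∧
      |E y - D (-y)| ≤ C₁ * exp (-y) := by
    obtain ⟨hne, hle⟩ := hleft (x + y * Complex.I) (by simp; linarith [hx.1])
      (by simpa using hx.2) (by simpa using hc.trans hy.1)
    exact ⟨hne, by simpa [E, D, sub_add_eq_sub_sub, ← sub_eq_add_neg] using hle⟩
  have hD_int : IntervalIntegrable (fun y ↦ D (-y)) volume c d :=
    ((continuous_log_norm_normalizedLerch_vertical (-alp) hlam hlam'
      (by linarith [hx.2])).comp continuous_neg).intervalIntegrable _ _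
  have hE_int : IntervalIntegrable E volume c d := by
    refine ContinuousOn.intervalIntegrable_of_Icc hcd fun y hy ↦ ?_
    have hcont := (hF.continuousAt_log_norm (by simp; linarith [hy.1]) (hmem hy).1).sub
      ((continuousAt_log_norm_lerchFactor (s := x + y * Complex.I)
        (by simp; linarith [hx.2])).sub (continuousAt_const (y := (1 - x) * log lam)))
    exact (hcont.comp (f := fun y : ℝ ↦ (x + y * Complex.I : ℂ))
      (by fun_prop)).continuousWithinAt
  have hD_le : |∫ y in c..d, D (-y)| ≤ C := by
    rw [intervalIntegral.integral_comp_neg D]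
    exact hbound (1 - x) (by linarith [hx.2]) _ _
  have hED_le : |∫ y in c..d, (E y - D (-y))| ≤ C₁ :=
    abs_integral_le_of_abs_le_mul_exp_neg (hT₁.le.trans hc) hcd
      (fun y hy ↦ (hmem (Ioc_subset_Icc_self hy)).2) hC₁
  calc |∫ y in c..d, E y| = |(∫ y in c..d, D (-y)) + ∫ y in c..d, (E y - D (-y))| := by
        rw [intervalIntegral.integral_sub hE_int hD_int, add_sub_cancel]
    _ ≤ C + C₁ := (abs_add_le _ _).trans (add_le_add hD_le hED_le)

theorem exists_abs_setIntegral_left_strip_sub_le (hlam : 0 < lam) (hlam' : lam ≤ 1)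
    (hα : 0 < alp) (hα' : alp ≤ 1) :
    ∃ T₁ C : ℝ, ∀ c d : ℝ, T₁ ≤ c → c ≤ d →
      |(∫ w in Icc (-3 / 2) (-1) ×ℂ Ioo c d, log ‖F w‖ * edgeProfile (7 / 4) (1 / 4) w.re) -
        ((∫ w in Icc (-3 / 2) (-1) ×ℂ Ioo c d,
          log ‖lerchFactor w‖ * edgeProfile (7 / 4) (1 / 4) w.re) -
            (d - c) / 128 * log lam)| ≤ C := by
  obtain ⟨T₁, C, hT₁, hbound⟩ := hF.exists_abs_integral_left_vertical_le hlam hlam' hα hα'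
  obtain ⟨T₂, hne⟩ := hF.exists_ne_zero_of_re_le hlam hlam' hα hα'
  refine ⟨max T₁ T₂, 2 * (7 / 4) * C * (-1 - -3 / 2), fun c d hc hcd ↦ ?_⟩
  obtain ⟨hc₁, hc₂⟩ := max_le_iff.mp hc
  have hab : (-3 / 2 : ℝ) ≤ -1 := by norm_num
  have hm := measurable_edgeProfile (7 / 4) (1 / 4)
  have hM := abs_edgeProfile_le (B := 7 / 4) (by norm_num) (1 / 4)
  have hfactor : ContinuousOn (fun s ↦ log ‖lerchFactor s‖) (Icc (-3 / 2) (-1) ×ℂ Icc c d) :=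
    fun s hs ↦ (continuousAt_log_norm_lerchFactor (by linarith [hs.1.2])).continuousWithinAt
  have hlin : ContinuousOn (fun s : ℂ ↦ (1 - s.re) * log lam) (Icc (-3 / 2) (-1) ×ℂ Icc c d) := by
    fun_prop
  have hmain : ∫ w in Icc (-3 / 2) (-1) ×ℂ Ioo c d,
      (1 - w.re) * log lam * edgeProfile (7 / 4) (1 / 4) w.re = (d - c) / 128 * log lam := by
    rw [setIntegral_comp_re hab hcd fun x ↦ (1 - x) * log lam * edgeProfile (7 / 4) (1 / 4) x]
    simp only [mul_right_comm _ (log lam)]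
    rw [intervalIntegral.integral_mul_const, integral_mul_edgeProfile_left_strip]
    ring
  rw [← hmain, ← integral_sub (integrableOn_mul_comp_re hfactor hm hM)
    (integrableOn_mul_comp_re hlin hm hM)]
  simp only [← sub_mul]
  refine abs_setIntegral_mul_comp_re_sub_le hab hcd (fun s hs ↦ ?_) (hfactor.sub hlin) hm hM
    fun x hx ↦ by simpa using hbound x hx c d hc₁ hcd
  exact (hF.continuousAt_log_norm (hT₁.trans_le (hc₁.trans hs.2.1)) (hne s (by linarith [hs.1.1])
    hs.1.2 (hc₂.trans hs.2.1))).continuousWithinAt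

end IsLerch

namespace LerchZeta

open MeasureTheory Set Filter Real

/-! ### Localization of the box integral -/

/-- The part of `criticalBox T₀ T` in which the circle defect of `boxWeight (7/4) T₀ T` does not
depend on the ordinate. -/
def innerBox (T₀ T : ℝ) : Set ℂ := Icc (-3 / 2) (5 / 2) ×ℂ Ioo (T₀ + 1 / 4) (T - 1 / 4)

/-- The left one of the two strips on which the circle defect of `boxWeight (7/4) T₀ T` is
supported inside `innerBox T₀ T`. -/
def leftStrip (T₀ T : ℝ) : Set ℂ := Icc (-3 / 2) (-1) ×ℂ Ioo (T₀ + 1 / 4) (T - 1 / 4)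

/-- The right one of the two strips on which the circle defect of `boxWeight (7/4) T₀ T` is
supported inside `innerBox T₀ T`. -/
def rightStrip (T₀ T : ℝ) : Set ℂ := Icc 2 (5 / 2) ×ℂ Ioo (T₀ + 1 / 4) (T - 1 / 4)

section Localization

variable {T₀ T : ℝ} {h : ℂ → ℝ}

lemma measurableSet_innerBox (T₀ T : ℝ) : MeasurableSet (innerBox T₀ T) :=
  measurableSet_reProdIm measurableSet_Icc measurableSet_Ioo

lemma measurableSet_rightStrip (T₀ T : ℝ) : MeasurableSet (rightStrip T₀ T) :=
  measurableSet_reProdIm measurableSet_Icc measurableSet_Ioo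

lemma measurableSet_criticalBox (T₀ T : ℝ) : MeasurableSet (criticalBox T₀ T) :=
  (isCompact_criticalBox T₀ T).measurableSet

lemma criticalBox_eq_union (hT : T₀ + 1 ≤ T) :
    criticalBox T₀ T = criticalBox T₀ T₀ ∪ criticalBox T T ∪ innerBox T₀ T := by
  ext z
  simp only [criticalBox, innerBox, mem_union, Complex.mem_reProdIm, mem_Icc, mem_Ioo]
  grind

lemma integrableOn_criticalBox_iff (hT : T₀ + 1 ≤ T) : IntegrableOn h (criticalBox T₀ T) ↔
    (IntegrableOn h (criticalBox T₀ T₀) ∧ IntegrableOn h (criticalBox T T)) ∧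
      IntegrableOn h (innerBox T₀ T) := by
  rw [criticalBox_eq_union hT, integrableOn_union, integrableOn_union]

lemma setIntegral_criticalBox (hT : T₀ + 1 ≤ T) (hh : IntegrableOn h (criticalBox T₀ T)) :
    ∫ w in criticalBox T₀ T, h w = (∫ w in criticalBox T₀ T₀, h w) +
      (∫ w in criticalBox T T, h w) + ∫ w in innerBox T₀ T, h w := by
  have hdisj : Disjoint (criticalBox T₀ T₀) (criticalBox T T) :=
    disjoint_left.mpr fun z hz hz' ↦ by
      linarith [(mem_criticalBox.mp hz).2.2, (mem_criticalBox.mp hz').2.1]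
  have hdisj' : Disjoint (criticalBox T₀ T₀ ∪ criticalBox T T) (innerBox T₀ T) :=
    disjoint_left.mpr fun z hz hz' ↦ by
      obtain hz | hz := hz
      · linarith [(mem_criticalBox.mp hz).2.2, hz'.2.1]
      · linarith [(mem_criticalBox.mp hz).2.1, hz'.2.2]
  obtain ⟨⟨hbottom, htop⟩, hinner⟩ := (integrableOn_criticalBox_iff hT).mp hh
  rw [criticalBox_eq_union hT, setIntegral_union hdisj' (measurableSet_innerBox T₀ T)
    (hbottom.union htop) hinner, setIntegral_union hdisj (measurableSet_criticalBox T T) hbottom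
    htop]

lemma setIntegral_innerBox_mul_edgeProfile (hh : IntegrableOn h (innerBox T₀ T)) :
    ∫ w in innerBox T₀ T, h w * edgeProfile (7 / 4) (1 / 4) w.re =
      (∫ w in leftStrip T₀ T, h w * edgeProfile (7 / 4) (1 / 4) w.re) +
        ∫ w in rightStrip T₀ T, h w * edgeProfile (7 / 4) (1 / 4) w.re := by
  have hint : IntegrableOn (fun w ↦ h w * edgeProfile (7 / 4) (1 / 4) w.re) (innerBox T₀ T) :=
    Integrable.mul_bdd (c := 2 * (7 / 4)) hh
      ((measurable_edgeProfile _ _).comp Complex.measurable_re).aestronglyMeasurable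
      (Eventually.of_forall fun _ ↦ abs_edgeProfile_le (by norm_num) _ _)
  have hleft : leftStrip T₀ T ⊆ innerBox T₀ T :=
    fun z hz ↦ ⟨⟨hz.1.1, by linarith [hz.1.2]⟩, hz.2⟩
  have hright : rightStrip T₀ T ⊆ innerBox T₀ T :=
    fun z hz ↦ ⟨⟨by linarith [hz.1.1], hz.1.2⟩, hz.2⟩
  have hdisj : Disjoint (leftStrip T₀ T) (rightStrip T₀ T) :=
    disjoint_left.mpr fun z hz hz' ↦ by linarith [hz.1.2, hz'.1.1]
  rw [← setIntegral_union hdisj (measurableSet_rightStrip T₀ T) (hint.mono_set hleft)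
    (hint.mono_set hright)]
  refine setIntegral_eq_of_subset_of_forall_sdiff_eq_zero (measurableSet_innerBox T₀ T)
    (union_subset hleft hright) fun z ⟨hz, hz'⟩ ↦ ?_
  rw [edgeProfile_eq_zero_of_abs_le (by norm_num), mul_zero]
  by_contra! hfar
  refine hz' ((lt_abs.mp hfar).symm.imp (fun hlt ↦ ⟨⟨hz.1.1, ?_⟩, hz.2⟩)
    fun hlt ↦ ⟨⟨?_, hz.1.2⟩, hz.2⟩) <;> linarith

lemma abs_setIntegral_mul_le {S : Set ℂ} {g : ℂ → ℝ} {C : ℝ} (hh : IntegrableOn h S)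
    (hC : ∀ z, |g z| ≤ C) : |∫ w in S, h w * g w| ≤ C * ∫ w in S, |h w| := by
  rw [← integral_const_mul, ← norm_eq_abs]
  refine norm_integral_le_of_norm_le (hh.abs.const_mul C) (Eventually.of_forall fun w ↦ ?_)
  rw [norm_mul, mul_comm]
  exact mul_le_mul_of_nonneg_right (hC w) (norm_nonneg _)

lemma abs_circleDefect_boxWeight_le (w : ℂ) :
    |circleDefect (boxWeight (7 / 4) T₀ T) (1 / 4) w| ≤ 7 / 2 :=
  (abs_circleDefect_le (abs_boxWeight_le (by norm_num) T₀ T) _ w).trans_eq (by norm_num)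

theorem abs_setIntegral_mul_circleDefect_sub_le (hT : T₀ + 1 ≤ T)
    (hh : IntegrableOn h (criticalBox T₀ T)) :
    |(∫ w in criticalBox T₀ T, h w * circleDefect (boxWeight (7 / 4) T₀ T) (1 / 4) w) -
      ((∫ w in leftStrip T₀ T, h w * edgeProfile (7 / 4) (1 / 4) w.re) +
        ∫ w in rightStrip T₀ T, h w * edgeProfile (7 / 4) (1 / 4) w.re)| ≤
      7 / 2 * ((∫ w in criticalBox T₀ T₀, |h w|) + ∫ w in criticalBox T T, |h w|) := by
  obtain ⟨⟨hbottom, htop⟩, hinner⟩ := (integrableOn_criticalBox_iff hT).mp hh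
  have hprofile : ∫ w in innerBox T₀ T,
      h w * circleDefect (boxWeight (7 / 4) T₀ T) (1 / 4) w =
        ∫ w in innerBox T₀ T, h w * edgeProfile (7 / 4) (1 / 4) w.re :=
    setIntegral_congr_fun (measurableSet_innerBox T₀ T) fun w hw ↦ by
      rw [circleDefect_boxWeight_eq_edgeProfile (by norm_num) hw.2.1 hw.2.2.le]
  have hint := Integrable.mul_bdd (c := 7 / 2) hh
    (measurable_circleDefect (measurable_boxWeight (7 / 4) T₀ T) (1 / 4)).aestronglyMeasurable
    (Eventually.of_forall abs_circleDefect_boxWeight_le)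
  rw [setIntegral_criticalBox hT hint, hprofile, setIntegral_innerBox_mul_edgeProfile hinner,
    add_sub_cancel_right, mul_add]
  exact (abs_add_le _ _).trans (add_le_add
    (abs_setIntegral_mul_le hbottom abs_circleDefect_boxWeight_le)
    (abs_setIntegral_mul_le htop abs_circleDefect_boxWeight_le))

end Localization

/-- The area integral which, by Jensen's formula, is a weighted sum over the zeros of `F` in
`criticalBox T₀ T`. -/
noncomputable def boxDefectIntegral (F : ℂ → ℂ) (T₀ T : ℝ) : ℝ :=
  ∫ w in criticalBox T₀ T, log ‖F w‖ * circleDefect (boxWeight (7 / 4) T₀ T) (1 / 4) w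

/-- The contribution of the gamma factor of the functional equation to the integral over the left
strip; it does not depend on the parameters of the Lerch zeta-function. -/
noncomputable def archimedeanTerm (T₀ T : ℝ) : ℝ :=
  ∫ w in leftStrip T₀ T, log ‖lerchFactor w‖ * edgeProfile (7 / 4) (1 / 4) w.re

lemma isBigO_const_log (C : ℝ) : (fun _ : ℝ ↦ C) =O[atTop] log :=
  isLittleO_const_log_atTop.isBigO

end LerchZeta

namespace IsLerch

open LerchZeta MeasureTheory Filter Real Asymptotics

variable {lam alp : ℝ} {F : ℂ → ℂ} (hF : IsLerch lam alp F)
include hF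

lemma exists_setIntegral_criticalBox_abs_log_norm_le (hα : 0 < alp) (hα' : alp ≤ 1) :
    ∃ C : ℝ, ∀ T, 6 ≤ T → ∫ w in criticalBox T T, |log ‖F w‖| ≤ C * log T := by
  obtain ⟨C, _, hdisc⟩ :=
    hF.exists_setIntegral_ball_abs_log_norm_le hα hα' (R := 19 / 4) (by norm_num) (by norm_num)
  refine ⟨C, fun T hT ↦ ?_⟩
  obtain ⟨hInt, hle⟩ := hdisc T hT
  refine (setIntegral_mono_set hInt.abs (Eventually.of_forall fun _ ↦ abs_nonneg _)
    (LE.le.eventuallyLE fun z hz ↦ ?_)).trans hle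
  obtain ⟨hre, him⟩ := mem_criticalBox.mp hz
  exact mem_ball_of_mem_strip hre (abs_le.mpr ⟨by linarith [him.1], by linarith [him.2]⟩)

theorem eventually_isBigO_boxDefectIntegral (hlam : 0 < lam) (hlam' : lam ≤ 1) (hα : 0 < alp)
    (hα' : alp ≤ 1) : ∀ᶠ T₀ in atTop, (fun T ↦ boxDefectIntegral F T₀ T -
      (T - T₀ - 1 / 2) / 128 * log (alp / lam) - archimedeanTerm T₀ T) =O[atTop] log := by
  obtain ⟨C, hband⟩ := hF.exists_setIntegral_criticalBox_abs_log_norm_le hα hα'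
  obtain ⟨CR, hright⟩ := hF.exists_abs_setIntegral_right_strip_sub_le hα hα'
  obtain ⟨T₁, CL, hleft⟩ := hF.exists_abs_setIntegral_left_strip_sub_le hlam hlam' hα hα'
  filter_upwards [eventually_ge_atTop 7, eventually_ge_atTop T₁] with T₀ hT₀ hT₁
  refine IsBigO.trans (IsBigO.of_bound 1 ?_) ((isBigO_const_log
    (7 / 2 * (∫ w in criticalBox T₀ T₀, |log ‖F w‖|) + CL + CR)).add
      ((isBigO_refl log atTop).const_mul_left (7 / 2 * C)))
  filter_upwards [eventually_ge_atTop (T₀ + 1)] with T hT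
  have hlocal := abs_setIntegral_mul_circleDefect_sub_le hT
    (hF.integrableOn_log_norm_criticalBox hα hα' hT₀ T)
  rw [one_mul]
  refine le_trans ?_ (le_abs_self _)
  have hL := hleft (T₀ + 1 / 4) (T - 1 / 4) (by linarith) (by linarith)
  have hR := hright (T₀ + 1 / 4) (T - 1 / 4) (by linarith) (by linarith)
  have htop := hband T (by linarith)
  rw [log_div hα.ne' hlam.ne', norm_eq_abs]
  unfold boxDefectIntegral archimedeanTerm leftStrip rightStrip at *
  rw [abs_le] at hL hR hlocal ⊢
  constructor <;> linarith

end IsLerch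

namespace LerchZeta

open MeasureTheory Set Filter Real
open scoped ComplexConjugate

/-! ### Riemann's zeta-function and the archimedean term -/

lemma isLerch_riemannZeta : IsLerch 1 1 riemannZeta := by
  simpa [← HurwitzZeta.hurwitzZeta_zero, AddCircle.coe_period] using
    isLerch_hurwitzZeta zero_le_one le_rfl

lemma norm_Gammaℝ_conj (w : ℂ) : ‖Complex.Gammaℝ (conj w)‖ = ‖Complex.Gammaℝ w‖ := by
  have hhalf : conj w / 2 = conj (w / 2) := by rw [map_div₀, map_ofNat]
  rw [Complex.Gammaℝ_def, Complex.Gammaℝ_def, norm_mul, norm_mul, hhalf, Complex.Gamma_conj,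
    Complex.norm_conj, Complex.norm_cpow_eq_rpow_re_of_pos pi_pos,
    Complex.norm_cpow_eq_rpow_re_of_pos pi_pos]
  simp

section NonReal

variable {w : ℂ} (hw : w.im ≠ 0)
include hw

lemma Gammaℝ_ne_zero_of_im_ne_zero : Complex.Gammaℝ w ≠ 0 := by
  rw [Ne, Complex.Gammaℝ_eq_zero_iff]
  rintro ⟨n, rfl⟩
  simp at hw

lemma completedRiemannZeta_eq_mul : completedRiemannZeta w = riemannZeta w * Complex.Gammaℝ w := by
  rw [riemannZeta_def_of_ne_zero (by rintro rfl; simp at hw),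
    div_mul_cancel₀ _ (Gammaℝ_ne_zero_of_im_ne_zero hw)]

lemma norm_completedRiemannZeta_one_sub_conj :
    ‖completedRiemannZeta (1 - conj w)‖ = ‖completedRiemannZeta w‖ := by
  rw [completedRiemannZeta_one_sub, completedRiemannZeta_eq_mul (by simpa using hw),
    completedRiemannZeta_eq_mul hw, norm_mul, norm_mul, riemannZeta_conj, Complex.norm_conj,
    norm_Gammaℝ_conj]

end NonReal

lemma setIntegral_comp_one_sub_conj (f : ℂ → ℝ) (T₀ T : ℝ) :
    ∫ w in criticalBox T₀ T, f (1 - conj w) = ∫ w in criticalBox T₀ T, f w := by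
  have hmp : MeasurePreserving (fun w : ℂ ↦ 1 - conj w) :=
    (Measure.measurePreserving_sub_left volume 1).comp Complex.conjLIE.measurePreserving
  have hinv : Function.Involutive fun w : ℂ ↦ 1 - conj w := fun w ↦ by simp
  have hemb : MeasurableEmbedding fun w : ℂ ↦ 1 - conj w :=
    (MeasurableEquiv.ofInvolutive _ hinv hmp.measurable).measurableEmbedding
  have hpre : (fun w : ℂ ↦ 1 - conj w) ⁻¹' criticalBox T₀ T = criticalBox T₀ T := by
    ext w
    simp only [mem_preimage, mem_criticalBox, mem_Icc, Complex.sub_re, Complex.sub_im,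
      Complex.one_re, Complex.one_im, Complex.conj_re, Complex.conj_im]
    grind
  simpa only [hpre] using hmp.setIntegral_preimage_emb hemb f (criticalBox T₀ T)

section ZetaDefect

variable {T₀ : ℝ} (hT₀ : 7 ≤ T₀) (T : ℝ)
include hT₀

lemma im_ne_zero_of_mem_criticalBox {w : ℂ} (hw : w ∈ criticalBox T₀ T) : w.im ≠ 0 :=
  ne_of_gt (by linarith [(mem_criticalBox.mp hw).2.1])

lemma setIntegral_log_norm_completedRiemannZeta_mul_circleDefect :
    ∫ w in criticalBox T₀ T, log ‖completedRiemannZeta w‖ *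
      circleDefect (boxWeight (7 / 4) T₀ T) (1 / 4) w = 0 := by
  rw [← self_eq_neg, ← integral_neg, ← setIntegral_comp_one_sub_conj]
  refine setIntegral_congr_fun (measurableSet_criticalBox T₀ T) fun w hw ↦ ?_
  simp only [norm_completedRiemannZeta_one_sub_conj (im_ne_zero_of_mem_criticalBox hT₀ T hw),
    circleDefect_one_sub_conj (boxWeight_one_sub_conj _ T₀ T), mul_neg]

lemma integrableOn_log_norm_Gammaℝ_inv :
    IntegrableOn (fun w ↦ log ‖(Complex.Gammaℝ w)⁻¹‖) (criticalBox T₀ T) := by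
  refine ContinuousOn.integrableOn_compact (isCompact_criticalBox T₀ T) fun w hw ↦
    ContinuousAt.continuousWithinAt (continuousAt_log_norm
      Complex.differentiable_Gammaℝ_inv.continuous.continuousAt (inv_ne_zero ?_))
  exact Gammaℝ_ne_zero_of_im_ne_zero (im_ne_zero_of_mem_criticalBox hT₀ T hw)

lemma boxDefectIntegral_Gammaℝ_inv : boxDefectIntegral (fun w ↦ (Complex.Gammaℝ w)⁻¹) T₀ T = 0 :=
  setIntegral_log_norm_mul_circleDefect (measurableSet_criticalBox T₀ T)
    (fun z _ ↦ Complex.differentiable_Gammaℝ_inv.analyticAt z)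
    (integrableOn_log_norm_Gammaℝ_inv hT₀ T) (measurable_boxWeight _ T₀ T)
    (abs_boxWeight_le (by norm_num) T₀ T) (by norm_num) (fun _ ↦ closedBall_subset_criticalBox) ∅
    fun z hz h ↦ absurd h (inv_ne_zero
      (Gammaℝ_ne_zero_of_im_ne_zero (im_ne_zero_of_mem_criticalBox hT₀ T hz)))

theorem boxDefectIntegral_riemannZeta : boxDefectIntegral riemannZeta T₀ T = 0 := by
  set δ := circleDefect (boxWeight (7 / 4) T₀ T) (1 / 4)
  have hint {f : ℂ → ℂ} (hf : IntegrableOn (fun w ↦ log ‖f w‖) (criticalBox T₀ T)) :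
      IntegrableOn (fun w ↦ log ‖f w‖ * δ w) (criticalBox T₀ T) :=
    integrableOn_log_norm_mul_circleDefect (measurableSet_criticalBox T₀ T) hf
      (measurable_boxWeight _ T₀ T) (abs_boxWeight_le (by norm_num) T₀ T) _
  have hfin := isLerch_riemannZeta.finite_zeros one_pos le_rfl (a := -3 / 2) (by norm_num)
    (T + 1 / 4)
  have hsplit : ∫ w in criticalBox T₀ T, log ‖completedRiemannZeta w‖ * δ w =
      ∫ w in criticalBox T₀ T, (log ‖riemannZeta w‖ * δ w - log ‖(Complex.Gammaℝ w)⁻¹‖ * δ w) := by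
    refine setIntegral_congr_ae (measurableSet_criticalBox T₀ T) ?_
    filter_upwards [measure_eq_zero_iff_ae_notMem.mp (hfin.measure_zero volume)] with w hw hwS
    have him := im_ne_zero_of_mem_criticalBox hT₀ T hwS
    obtain ⟨hre, him'⟩ := mem_criticalBox.mp hwS
    have hζ : riemannZeta w ≠ 0 := fun h ↦ hw ⟨h, hre.1, by linarith [him'.1], him'.2⟩
    rw [completedRiemannZeta_eq_mul him, norm_mul, norm_inv, log_inv, log_mul
      (norm_ne_zero_iff.mpr hζ) (norm_ne_zero_iff.mpr (Gammaℝ_ne_zero_of_im_ne_zero him))]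
    ring
  rw [integral_sub (hint (isLerch_riemannZeta.integrableOn_log_norm_criticalBox one_pos le_rfl
      hT₀ T)) (hint (integrableOn_log_norm_Gammaℝ_inv hT₀ T)),
    setIntegral_log_norm_completedRiemannZeta_mul_circleDefect hT₀ T] at hsplit
  exact (sub_eq_zero.mp hsplit.symm).trans (boxDefectIntegral_Gammaℝ_inv hT₀ T)

end ZetaDefect

theorem eventually_isBigO_archimedeanTerm :
    ∀ᶠ T₀ in atTop, (fun T ↦ archimedeanTerm T₀ T) =O[atTop] log := by
  filter_upwards [eventually_ge_atTop 7,
    isLerch_riemannZeta.eventually_isBigO_boxDefectIntegral one_pos le_rfl one_pos le_rfl]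
    with T₀ hT₀ h
  simpa [boxDefectIntegral_riemannZeta hT₀] using h

/-! ### The sum over the nontrivial zeros -/

section KernelIntegral

variable {B r T₀ T : ℝ} {ρ : ℂ}

lemma boxWeight_of_mem (hre : |ρ.re - 1 / 2| ≤ B) (him : ρ.im ∈ Ioc T₀ T) :
    boxWeight B T₀ T ρ = ρ.re - 1 / 2 := by
  rw [boxWeight, if_pos him, centeredCutoff_of_abs_le hre]

lemma abs_integral_boxWeight_mul_jensenKernel_sub_le (hB : 0 ≤ B) (hr : 0 < r) (T₀ T : ℝ)
    (ρ : ℂ) : |(∫ z, boxWeight B T₀ T z * jensenKernel r (z - ρ)) -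
      π * r ^ 2 / 2 * boxWeight B T₀ T ρ| ≤ 2 * B * (π * r ^ 2 / 2) := by
  have hint := abs_integral_mul_jensenKernel_le (abs_boxWeight_le hB T₀ T) hr ρ
  have hval : |π * r ^ 2 / 2 * boxWeight B T₀ T ρ| ≤ π * r ^ 2 / 2 * B := by
    rw [abs_mul, abs_of_pos (by positivity)]
    gcongr
    exact abs_boxWeight_le hB T₀ T ρ
  linarith [abs_sub (∫ z, boxWeight B T₀ T z * jensenKernel r (z - ρ))
    (π * r ^ 2 / 2 * boxWeight B T₀ T ρ)]

lemma integral_boxWeight_mul_jensenKernel_of_far (hr : 0 < r) (hr' : r ≤ 1)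
    (hre : |ρ.re - 1 / 2| ≤ B - r) (him : ρ.im ∈ Icc (T₀ - r) (T + r)) (hT₀ : 1 < |ρ.im - T₀|)
    (hT : 1 < |ρ.im - T|) : ∫ z, boxWeight B T₀ T z * jensenKernel r (z - ρ) =
      π * r ^ 2 / 2 * boxWeight B T₀ T ρ := by
  have hlower : T₀ + r ≤ ρ.im := by
    obtain h | h := lt_abs.mp hT₀ <;> linarith [him.1]
  have hupper : ρ.im ≤ T - r := by
    obtain h | h := lt_abs.mp hT <;> linarith [him.2]
  rw [integral_boxWeight_mul_jensenKernel hr hre hlower hupper,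
    boxWeight_of_mem (by linarith) ⟨by linarith, by linarith⟩]

lemma abs_sum_mul_integral_boxWeight_sub_le {Z : Finset ℂ} {m : ℂ → ℝ} (hB : 0 ≤ B) (hr : 0 < r)
    (hr' : r ≤ 1) (hm : ∀ ρ ∈ Z, 0 ≤ m ρ) (hre : ∀ ρ ∈ Z, |ρ.re - 1 / 2| ≤ B - r)
    (him : ∀ ρ ∈ Z, ρ.im ∈ Icc (T₀ - r) (T + r)) :
    |(∑ ρ ∈ Z, m ρ * ∫ z, boxWeight B T₀ T z * jensenKernel r (z - ρ)) -
      π * r ^ 2 / 2 * ∑ ρ ∈ Z, m ρ * boxWeight B T₀ T ρ| ≤ 2 * B * (π * r ^ 2 / 2) *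
        (∑ ρ ∈ Z with |ρ.im - T₀| ≤ 1, m ρ + ∑ ρ ∈ Z with |ρ.im - T| ≤ 1, m ρ) := by
  rw [Finset.mul_sum, ← Finset.sum_sub_distrib, Finset.sum_filter, Finset.sum_filter,
    ← Finset.sum_add_distrib, Finset.mul_sum]
  refine (Finset.abs_sum_le_sum_abs _ _).trans (Finset.sum_le_sum fun ρ hρ ↦ ?_)
  have hmρ := hm ρ hρ
  rw [mul_left_comm (π * r ^ 2 / 2), ← mul_sub, abs_mul, abs_of_nonneg hmρ]
  by_cases hfar : 1 < |ρ.im - T₀| ∧ 1 < |ρ.im - T|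
  · rw [integral_boxWeight_mul_jensenKernel_of_far hr hr' (hre ρ hρ) (him ρ hρ) hfar.1 hfar.2,
      sub_self, abs_zero, mul_zero]
    positivity
  · rw [mul_comm]
    refine mul_le_mul (abs_integral_boxWeight_mul_jensenKernel_sub_le hB hr T₀ T ρ) ?_ hmρ
      (by positivity)
    grind

end KernelIntegral

/-- The zeros `ρ` of `F` with `-1 ≤ re ρ < 1 + alp` and `T₀ < im ρ ≤ T`. -/
def nontrivialZeros (F : ℂ → ℂ) (alp T₀ T : ℝ) : Set ℂ :=
  {ρ | F ρ = 0 ∧ -1 ≤ ρ.re ∧ ρ.re < 1 + alp ∧ T₀ < ρ.im ∧ ρ.im ≤ T}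

/-- The sum of `re ρ - 1/2` over the nontrivial zeros `ρ` of `F` with `T₀ < im ρ ≤ T`, counted with
multiplicity. -/
noncomputable def centeredZeroSum (F : ℂ → ℂ) (alp T₀ T : ℝ) : ℝ :=
  ∑ᶠ ρ ∈ nontrivialZeros F alp T₀ T, (zeroOrder F ρ : ℝ) * (ρ.re - 1 / 2)

end LerchZeta

namespace IsLerch

open LerchZeta Set Filter Real Asymptotics

variable {lam alp : ℝ} {F : ℂ → ℂ} (hF : IsLerch lam alp F)
include hF

section Zeros

variable (hα : 0 < alp) (hα' : alp ≤ 1)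
include hα hα'

lemma re_lt_of_eq_zero {ρ : ℂ} (h : F ρ = 0) : ρ.re < 1 + alp :=
  lt_of_not_ge fun hre ↦ hF.ne_zero hα hα' hre h

lemma centeredZeroSum_add {T₀ T : ℝ} (hT₀ : 0 ≤ T₀) (hT : T₀ ≤ T) :
    centeredZeroSum F alp 0 T₀ + centeredZeroSum F alp T₀ T = centeredZeroSum F alp 0 T := by
  have hfin {a b : ℝ} (ha : 0 ≤ a) : (nontrivialZeros F alp a b).Finite :=
    (hF.finite_zeros hα hα' (a := -1) (by norm_num) b).subset
      fun ρ ⟨hρ, hre, _, him, him'⟩ ↦ ⟨hρ, hre, ha.trans_lt him, him'⟩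
  have hdisj : Disjoint (nontrivialZeros F alp 0 T₀) (nontrivialZeros F alp T₀ T) :=
    disjoint_left.mpr fun ρ ⟨_, _, _, _, hle⟩ ⟨_, _, _, hlt, _⟩ ↦ hlt.not_ge hle
  have hunion : nontrivialZeros F alp 0 T₀ ∪ nontrivialZeros F alp T₀ T =
      nontrivialZeros F alp 0 T := by
    ext ρ
    simp only [nontrivialZeros, mem_union, mem_ofPred_eq]
    grind
  rw [centeredZeroSum, centeredZeroSum, ← finsum_mem_union hdisj (hfin le_rfl) (hfin hT₀), hunion,
    centeredZeroSum]

section CriticalBox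

variable {T₀ T : ℝ} {Z : Finset ℂ}

lemma finite_zeros_criticalBox (hT₀ : 7 ≤ T₀) (T : ℝ) :
    {ρ | ρ ∈ criticalBox T₀ T ∧ F ρ = 0}.Finite := by
  refine (hF.finite_zeros hα hα' (a := -3 / 2) (by norm_num) (T + 1 / 4)).subset fun ρ hρ ↦ ?_
  obtain ⟨hre, him⟩ := mem_criticalBox.mp hρ.1
  exact ⟨hρ.2, hre.1, by linarith [him.1], him.2⟩

lemma boxDefectIntegral_eq_sum (hT₀ : 7 ≤ T₀) (hZ : ∀ ρ ∈ criticalBox T₀ T, F ρ = 0 → ρ ∈ Z) :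
    boxDefectIntegral F T₀ T = ∑ ρ ∈ Z, zeroOrder F ρ *
      ∫ z, boxWeight (7 / 4) T₀ T z * jensenKernel (1 / 4) (z - ρ) :=
  setIntegral_log_norm_mul_circleDefect (measurableSet_criticalBox T₀ T)
    (fun _ hz ↦ hF.analyticAt (by linarith [(mem_criticalBox.mp hz).2.1]))
    (hF.integrableOn_log_norm_criticalBox hα hα' hT₀ T) (measurable_boxWeight _ T₀ T)
    (abs_boxWeight_le (by norm_num) T₀ T) (by norm_num) (fun _ ↦ closedBall_subset_criticalBox) Z hZ

lemma centeredZeroSum_eq_sum (hZ : ∀ ρ, ρ ∈ Z ↔ ρ ∈ criticalBox T₀ T ∧ F ρ = 0)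
    (hleft : ∀ ρ ∈ Z, -1 ≤ ρ.re) :
    centeredZeroSum F alp T₀ T = ∑ ρ ∈ Z, zeroOrder F ρ * boxWeight (7 / 4) T₀ T ρ := by
  have hzeros : nontrivialZeros F alp T₀ T = ↑(Z.filter fun ρ ↦ ρ.im ∈ Ioc T₀ T) := by
    ext ρ
    rw [Finset.mem_coe, Finset.mem_filter]
    refine ⟨fun ⟨hρ, hre, hre', him⟩ ↦ ⟨(hZ ρ).mpr ⟨mem_criticalBox.mpr ?_, hρ⟩, him⟩,
      fun ⟨hρ, him⟩ ↦ ⟨((hZ ρ).mp hρ).2, hleft ρ hρ,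
        hF.re_lt_of_eq_zero hα hα' ((hZ ρ).mp hρ).2, him⟩⟩
    exact ⟨⟨by linarith, by linarith⟩, by linarith [him.1], by linarith [him.2]⟩
  rw [centeredZeroSum, hzeros, finsum_mem_coe_finset, Finset.sum_filter]
  refine Finset.sum_congr rfl fun ρ hρ ↦ ?_
  have hre : |ρ.re - 1 / 2| ≤ 7 / 4 :=
    abs_le.mpr ⟨by linarith [hleft ρ hρ], by
      linarith [hF.re_lt_of_eq_zero hα hα' ((hZ ρ).mp hρ).2]⟩
  split_ifs with him
  · rw [boxWeight_of_mem hre him]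
  · rw [boxWeight, if_neg him, mul_zero]

end CriticalBox

end Zeros

variable (hlam : 0 < lam) (hlam' : lam ≤ 1) (hα : 0 < alp) (hα' : alp ≤ 1)
include hlam hlam' hα hα'

theorem eventually_isBigO_boxDefectIntegral_sub_centeredZeroSum : ∀ᶠ T₀ in atTop, (fun T ↦
    boxDefectIntegral F T₀ T - π / 32 * centeredZeroSum F alp T₀ T) =O[atTop] log := by
  obtain ⟨T₁, hleft⟩ := hF.exists_ne_zero_of_re_le hlam hlam' hα hα'
  obtain ⟨C, _, hcount⟩ := hF.exists_sum_zeroOrder_le hα hα'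
  filter_upwards [eventually_ge_atTop 7, eventually_ge_atTop (T₁ + 1)] with T₀ hT₀ hT₁
  refine IsBigO.trans (IsBigO.of_bound (2 * (7 / 4) * (π * (1 / 4) ^ 2 / 2)) ?_)
    ((isBigO_const_log (C * log T₀)).add ((isBigO_refl log atTop).const_mul_left C))
  filter_upwards [eventually_ge_atTop T₀] with T hT
  set Z := (hF.finite_zeros_criticalBox hα hα' hT₀ T).toFinset
  have hZ (ρ : ℂ) : ρ ∈ Z ↔ ρ ∈ criticalBox T₀ T ∧ F ρ = 0 := Set.Finite.mem_toFinset _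
  have hre (ρ : ℂ) (hρ : ρ ∈ Z) : -1 ≤ ρ.re := by
    obtain ⟨hbox, hzero⟩ := (hZ ρ).mp hρ
    obtain ⟨hre, him⟩ := mem_criticalBox.mp hbox
    exact le_of_not_ge fun h ↦ hleft ρ (by linarith [hre.1]) h (by linarith [him.1]) hzero
  have hnear {T' : ℝ} (hT' : 6 ≤ T') :
      ∑ ρ ∈ Z with |ρ.im - T'| ≤ 1, (zeroOrder F ρ : ℝ) ≤ C * log T' :=
    hcount T' hT' _ fun ρ hρ ↦ by
      obtain ⟨hρ, him⟩ := Finset.mem_filter.mp hρ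
      exact ⟨((hZ ρ).mp hρ).2, hre ρ hρ, him⟩
  have hkernel := abs_sum_mul_integral_boxWeight_sub_le (Z := Z) (m := fun ρ ↦ zeroOrder F ρ)
    (B := 7 / 4) (r := 1 / 4) (T₀ := T₀) (T := T) (by norm_num) (by norm_num) (by norm_num)
    (fun _ _ ↦ Nat.cast_nonneg _) (fun ρ hρ ↦ abs_le.mpr ⟨by linarith [hre ρ hρ], by
      linarith [hF.re_lt_of_eq_zero hα hα' ((hZ ρ).mp hρ).2]⟩)
    fun ρ hρ ↦ (mem_criticalBox.mp ((hZ ρ).mp hρ).1).2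
  rw [← hF.boxDefectIntegral_eq_sum hα hα' hT₀ fun ρ hρ h ↦ (hZ ρ).mpr ⟨hρ, h⟩,
    ← hF.centeredZeroSum_eq_sum hα hα' hZ hre] at hkernel
  rw [norm_eq_abs]
  refine (le_of_eq (by ring_nf)).trans (hkernel.trans ?_)
  gcongr
  exact (add_le_add (hnear (by linarith)) (hnear (by linarith))).trans (le_abs_self _)

theorem eventually_isBigO_centeredZeroSum : ∀ᶠ T₀ in atTop, (fun T ↦ centeredZeroSum F alp T₀ T -
    (T - T₀ - 1 / 2) / (4 * π) * log (alp / lam)) =O[atTop] log := by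
  filter_upwards [hF.eventually_isBigO_boxDefectIntegral hlam hlam' hα hα',
    hF.eventually_isBigO_boxDefectIntegral_sub_centeredZeroSum hlam hlam' hα hα',
    eventually_isBigO_archimedeanTerm] with T₀ hbox hzeros harch
  refine (((hbox.add harch).sub hzeros).const_mul_left (32 / π)).congr_left fun T ↦ ?_
  field_simp
  ring

end IsLerch

/-- average symmetry of nontrivial zeros of the Lerch zeta-function. -/
theorem lerch_sum_of_zeros_symmetry (lam alp : ℝ) (hlam0 : 0 < lam) (hlam1 : lam ≤ 1)
    (halp0 : 0 < alp) (halp1 : alp ≤ 1) (F : ℂ → ℂ) (hF : IsLerch lam alp F) :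
    (fun T : ℝ =>
        (∑ᶠ ρ ∈ {ρ : ℂ | F ρ = 0 ∧ -1 ≤ ρ.re ∧ ρ.re < 1 + alp ∧ 0 < ρ.im ∧ ρ.im ≤ T},
          (zeroOrder F ρ : ℝ) * (ρ.re - 1 / 2))
        - T / (4 * Real.pi) * Real.log (alp / lam))
      =O[Filter.atTop] Real.log := by
  obtain ⟨T₀, hupper, hT₀⟩ := ((hF.eventually_isBigO_centeredZeroSum hlam0 hlam1 halp0 halp1).and
    (Filter.eventually_ge_atTop 0)).exists
  have hlower := LerchZeta.isBigO_const_log (LerchZeta.centeredZeroSum F alp 0 T₀ -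
    (T₀ + 1 / 2) / (4 * Real.pi) * Real.log (alp / lam))
  refine (hlower.add hupper).congr' ?_ .rfl
  filter_upwards [Filter.eventually_ge_atTop T₀] with T hT
  change _ = LerchZeta.centeredZeroSum F alp 0 T - _
  rw [← hF.centeredZeroSum_add halp0 halp1 hT₀ hT]
  ring
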